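/- For every element σ of order 2 in G = PSU(3,q), q = 2^(2^n), the cyclic subgroup ⟨σ⟩ satisfies μ(⟨σ⟩, G) = -q³(q+1)/2. -/

import Mathlib

/-!
The centre of `SU(3,q)` is trivial because `q + 1` is prime to `3`, so `PSU(3,q)` is the group `UG F`
of isometries of determinant one of the Hermitian space `F³`, `F = F_{q²}`. Its involutions are the
unitary transvections `tv p` with `p` isotropic (`inv_is_tv`), so that the Möbius function is needed
only at `Z = ⟨tv p⟩`.

**Subgroups containing a transvection** (`classify`). Such a subgroup `K` is the whole group, or it
stabilises an isotropic line, an anisotropic line or the set of lines of an orthonormal basis. If all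
centres of transvections in `K` are orthogonal to one of them, they coincide and this isotropic line
is stable; if they all lie in a hyperbolic plane, then its orthogonal complement is a stable
anisotropic line. In the remaining case the scalars `c ∈ F_q` for which `tv p ∈ K` implies
`tv (c • p) ∈ K` form a subfield `CK K`.

* If `CK K` has more than two elements, counting products of involutions in the stabiliser of a
  hyperbolic plane (`countA`) shows that the products of vectors of transvections in `K` have norm in
  `CK K` (`line_norm`). Three vectors outside a plane then give an element of `F_{q²}` outside `F_q`
  with norm and trace in `CK K`. Since `q = 2^(2^n)`, the subfields of `F_{q²}` form a chain
  `F_2 < F_4 < F_16 < …` in which every member is quadratic over the previous one, so `CK K = F_q`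
  (`full_CK`), and `K` is the whole group (`eq_top_of_big`).
* If `CK K = F_2`, a second count of involutions (`countB`) yields an element of `K` which acts on some
  centre by a nontrivial scalar (`exists_scalar`); its square is a homology (`hom_of_scalar`). The
  centres of these homologies are equal or orthogonal, so they form a stable line or a stable frame
  (`classify_small`).

**The subgroups above `Z`.** By the classification, a proper subgroup above `Z` lies in the stabiliser
`B` of `⟨p⟩`, in the stabiliser `N a` of one of the anisotropic lines `⟨z + a p⟩` orthogonal to `p`,
or in the stabiliser `T s` of one of the frames `⟨s⟩, ⟨s + p⟩, ⟨z + α p⟩` with `hf s s = hf s p = 1`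
and `α = hf z s`. The intersections of these subgroups are simple enough to write down the function `2 μ`
above `Z` explicitly (`mobius_abstract`). Its value at `Z` is minus the number of pairs `(s, a)`, `a ≠ α`,
for which `T s ⊓ N a` is larger than `Z`. There are `q² · q` vectors `s` (`card_om`), and for each of
them `a` runs over the `q + 1` elements such that `a + α` has norm one (`mem_hk`). This gives
`2 μ(Z) = -q³ (q + 1)`.
-/

open scoped Classical Pointwise

namespace PSUPaper

/-- `q = 2^(2^n)`. -/
abbrev qval (n : ℕ) : ℕ := 2 ^ 2 ^ n

/-- The field with `q² = 2^(2^(n+1))` elements. -/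
abbrev Fq2 (n : ℕ) : Type := GaloisField 2 (2 ^ (n + 1))

/-- The involutory automorphism `x ↦ x^q` of `F_{q²}`, as a star-ring structure. -/
noncomputable instance starRingFq2 (n : ℕ) : StarRing (Fq2 n) where
  star x := x ^ qval n
  star_involutive x := by
    letI : Fintype (Fq2 n) := Fintype.ofFinite _
    show (x ^ qval n) ^ qval n = x
    rw [← pow_mul]
    have h : qval n * qval n = 2 ^ 2 ^ (n + 1) := by
      rw [← pow_add, ← two_mul, pow_succ, mul_comm]
    have hcard : Fintype.card (Fq2 n) = 2 ^ 2 ^ (n + 1) := by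
      rw [← Nat.card_eq_fintype_card, GaloisField.card 2 (2 ^ (n + 1)) (by positivity)]
    rw [h, ← hcard]
    exact FiniteField.pow_card x
  star_mul x y := by
    show (x * y) ^ qval n = y ^ qval n * x ^ qval n
    rw [mul_pow, mul_comm]
  star_add x y := by
    show (x + y) ^ qval n = x ^ qval n + y ^ qval n
    exact add_pow_char_pow x y 2 (2 ^ n)

/-- `SU(3,q)`: the subgroup of the unitary group `{M | M * (M^σ)ᵀ = 1}` (with respect to the
star structure `σ : x ↦ x^q` on `F_{q²}`) consisting of the matrices of determinant 1. -/
noncomputable def SU3 (n : ℕ) : Subgroup (Matrix.unitaryGroup (Fin 3) (Fq2 n)) where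
  carrier := {M | (M : Matrix (Fin 3) (Fin 3) (Fq2 n)).det = 1}
  one_mem' := by simp
  mul_mem' := by
    intro a b ha hb
    simp only [Set.mem_setOf_eq, Matrix.UnitaryGroup.mul_val, Matrix.det_mul] at *
    rw [ha, hb, mul_one]
  inv_mem' := by
    intro a ha
    simp only [Set.mem_setOf_eq, Matrix.UnitaryGroup.inv_val] at *
    rw [Matrix.star_eq_conjTranspose, Matrix.det_conjTranspose, ha, star_one]

/-- `PSU(3,q)`: the quotient of `SU(3,q)` by its center. -/
noncomputable abbrev PSU3 (n : ℕ) : Type := SU3 n ⧸ Subgroup.center (SU3 n)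

/-- `mu` is the Möbius function `H ↦ μ(H, G)` of the subgroup lattice of `G`:
`μ(G,G) = 1` and `∑_{J : H ≤ J ≤ G} μ(J,G) = 0` for `H < G`. -/
def IsSubgroupMobius {G : Type*} [Group G] (mu : Subgroup G → ℤ) : Prop :=
  ∀ H : Subgroup G, (∑ᶠ K ∈ {K : Subgroup G | H ≤ K}, mu K) = if H = ⊤ then 1 else 0

/-- `H` and `K` are conjugate subgroups. -/
def IsConjSub {G : Type*} [Group G] (H K : Subgroup G) : Prop :=
  ∃ g : G, Subgroup.map (MulAut.conj g).toMonoidHom H = K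

/-- The conjugacy classes of subgroups of `G`. -/
abbrev SubClasses (G : Type*) [Group G] : Type _ :=
  Quotient (MulAction.orbitRel (ConjAct G) (Subgroup G))

/-- The conjugacy class of a subgroup. -/
def clsOf {G : Type*} [Group G] (H : Subgroup G) : SubClasses G :=
  Quotient.mk (MulAction.orbitRel (ConjAct G) (Subgroup G)) H

/-- The order on conjugacy classes of subgroups: `[H] ≤ [K]` iff `H` is contained in some
conjugate of `K`. -/
def clsLe {G : Type*} [Group G] (x y : SubClasses G) : Prop :=
  ∃ H K : Subgroup G, clsOf H = x ∧ clsOf K = y ∧ ∃ g : ConjAct G, H ≤ g • K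

/-- `lam` is the Möbius function `[H] ↦ μ([H], [G])` of the poset of conjugacy classes of
subgroups of `G`: `μ([G],[G]) = 1` and `∑_{[J] : [H] ≤ [J] ≤ [G]} μ([J],[G]) = 0` for
`[H] < [G]`. -/
def IsClassMobius {G : Type*} [Group G] (lam : SubClasses G → ℤ) : Prop :=
  ∀ x : SubClasses G, (∑ᶠ y ∈ {y : SubClasses G | clsLe x y}, lam y) =
    if x = clsOf (⊤ : Subgroup G) then 1 else 0

/-- `m` is the Möbius function `H ↦ μ_{L_p}({1}, H)` of the poset `L_p` of `p`-subgroups of `G`: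
`μ_{L_p}({1},{1}) = 1` and `∑_{J ∈ L_p : J ≤ K} μ_{L_p}({1},J) = 0` for `{1} < K ∈ L_p`. -/
def IsPMobiusBot {G : Type*} [Group G] (p : ℕ) (m : Subgroup G → ℤ) : Prop :=
  m ⊥ = 1 ∧ ∀ K : Subgroup G, IsPGroup p K → ⊥ < K →
    (∑ᶠ J ∈ {J : Subgroup G | IsPGroup p J ∧ J ≤ K}, m J) = 0

set_option linter.unusedSectionVars false
set_option linter.unusedSimpArgs false

/-! ### Hermitian space of dimension three in characteristic two -/

/-- The properties of the extension `F_{q²} / F_q` (with `q` a power of `4`) which the geometric part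
of the proof uses. Elements with `star c = c` form the field `F_q`, and `a * star a` is the norm. -/
class UFld (F : Type*) [Field F] [StarRing F] : Prop where
  sqrt : ∀ c : F, star c = c → ∃ d, star d = d ∧ d * d = c
  no3 : ∀ a : F, a * star a = 1 → a ^ 3 = 1 → a = 1
  trace : ∀ c : F, star c = c → ∃ a, a + star a = c
  big : ∃ c : F, star c = c ∧ c ≠ 0 ∧ c ≠ 1
  unitne : ∃ b : F, b * star b = 1 ∧ b ≠ 1
  chain : ∀ C : Subfield F, (∀ c ∈ C, star c = c) →
    (∀ c, star c = c → c ∈ C) ∨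
      ∀ θ : F, θ + star θ ∈ C → θ * star θ ∈ C → star θ = θ

/-- The space `F³`. -/
def V (F : Type*) : Type _ := Fin 3 → F

section basics

variable {F : Type*} [Field F]

noncomputable instance : AddCommGroup (V F) := inferInstanceAs (AddCommGroup (Fin 3 → F))
noncomputable instance : Module F (V F) := inferInstanceAs (Module F (Fin 3 → F))
instance [Finite F] : Finite (V F) := inferInstanceAs (Finite (Fin 3 → F))
instance : Module.Finite F (V F) := inferInstanceAs (Module.Finite F (Fin 3 → F))

theorem V.ext {x y : V F} (h : ∀ i, x i = y i) : x = y := funext h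

@[simp] theorem V.add_apply (x y : V F) (i : Fin 3) : (x + y) i = x i + y i := rfl
@[simp] theorem V.smul_apply (c : F) (x : V F) (i : Fin 3) : (c • x) i = c * x i := rfl
@[simp] theorem V.zero_apply (i : Fin 3) : (0 : V F) i = 0 := rfl

/-- The determinant of three vectors, written without signs because the characteristic is two. -/
def vol (x y z : V F) : F :=
  x 0 * (y 1 * z 2 + y 2 * z 1) + x 1 * (y 0 * z 2 + y 2 * z 0) + x 2 * (y 0 * z 1 + y 1 * z 0)

end basics

section herm

variable {F : Type*} [Field F] [StarRing F]

/-- The standard Hermitian form. -/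
def hf (x y : V F) : F := x 0 * star (y 0) + x 1 * star (y 1) + x 2 * star (y 2)

/-- The vector orthogonal to `x` and `y` given by the conjugate of their cross product. -/
def pole (x y : V F) : V F :=
  ![star (x 1 * y 2 + x 2 * y 1), star (x 0 * y 2 + x 2 * y 0), star (x 0 * y 1 + x 1 * y 0)]

theorem pole_zero (x y : V F) : pole x y 0 = star (x 1 * y 2 + x 2 * y 1) := rfl
theorem pole_one (x y : V F) : pole x y 1 = star (x 0 * y 2 + x 2 * y 0) := rfl
theorem pole_two (x y : V F) : pole x y 2 = star (x 0 * y 1 + x 1 * y 0) := rfl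

theorem hf_add_left (x y z : V F) : hf (x + y) z = hf x z + hf y z := by
  simp only [hf, V.add_apply]; ring
theorem hf_add_right (x y z : V F) : hf x (y + z) = hf x y + hf x z := by
  simp only [hf, V.add_apply, star_add]; ring
theorem hf_smul_left (c : F) (x y : V F) : hf (c • x) y = c * hf x y := by
  simp only [hf, V.smul_apply]; ring
theorem hf_smul_right (c : F) (x y : V F) : hf x (c • y) = star c * hf x y := by
  simp only [hf, V.smul_apply, star_mul']; ring
theorem hf_zero_left (x : V F) : hf 0 x = 0 := by simp [hf]
theorem hf_zero_right (x : V F) : hf x 0 = 0 := by simp [hf]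
theorem hf_star (x y : V F) : star (hf x y) = hf y x := by
  simp only [hf, star_add, star_mul', star_star]; ring
theorem hf_self (x : V F) : star (hf x x) = hf x x := hf_star x x
theorem hf_symm_zero {x y : V F} (h : hf x y = 0) : hf y x = 0 := by
  rw [← hf_star, h, star_zero]

theorem hf_pole (v x y : V F) : hf v (pole x y) = vol v x y := by
  simp only [hf, pole_zero, pole_one, pole_two, vol, star_star]

theorem hf_nondeg {x : V F} (h : ∀ y, hf x y = 0) : x = 0 := by
  apply V.ext
  intro i
  have := h (Pi.single i (1 : F) : Fin 3 → F)
  fin_cases i <;> simpa [hf] using this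

theorem hf_nondeg' {x : V F} (h : x ≠ 0) : ∃ y, hf x y = 1 := by
  by_contra! hc
  apply h
  apply hf_nondeg
  intro y
  by_contra hy
  apply hc ((star (hf x y))⁻¹ • y)
  rw [hf_smul_right, star_inv₀, star_star, inv_mul_cancel₀ hy]

theorem hf_ext {x y : V F} (h : ∀ z, hf z x = hf z y) : x = y := by
  rw [← sub_eq_zero]
  apply hf_nondeg
  intro z
  have : x - y = x + (-1 : F) • y := by module
  rw [this, hf_add_left, hf_smul_left, ← hf_star z x, ← hf_star z y, h]; ring

variable [CharP F 2]

theorem add_selfF (a : F) : a + a = 0 := CharTwo.add_self_eq_zero a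

theorem add_selfV (x : V F) : x + x = 0 := by
  apply V.ext; intro i; simp only [V.add_apply, V.zero_apply]; grind

theorem V.add_eq_zero {x y : V F} (h : x + y = 0) : x = y := by
  apply V.ext; intro i
  have := congrFun h i
  change x i + y i = 0 at this
  grind

theorem V.eq_add_of {x y z : V F} (h : x + y = z) : x = z + y := by
  rw [← h, add_assoc, add_selfV, add_zero]

theorem vol_cramer (x y z p w : V F) :
    hf x w * vol p y z + hf y w * vol x p z + hf z w * vol x y p = hf p w * vol x y z := by
  simp only [hf, vol]; grind

theorem hf_pole_pole (x y : V F) :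
    hf (pole x y) (pole x y) = hf x x * hf y y + hf x y * hf y x := by
  simp only [hf, pole_zero, pole_one, pole_two, star_add, star_mul', star_star]; grind

theorem hf_pole_left (x y : V F) : hf x (pole x y) = 0 := by
  rw [hf_pole]; simp only [vol]; grind
theorem hf_pole_right (x y : V F) : hf y (pole x y) = 0 := by
  rw [hf_pole]; simp only [vol]; grind

/-- Expansion of a vector with respect to a pair of dual bases. -/
theorem expand {e₀ e₁ e₂ f₀ f₁ f₂ : V F}
    (h00 : hf e₀ f₀ = 1) (h01 : hf e₀ f₁ = 0) (h02 : hf e₀ f₂ = 0)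
    (h10 : hf e₁ f₀ = 0) (h11 : hf e₁ f₁ = 1) (h12 : hf e₁ f₂ = 0)
    (h20 : hf e₂ f₀ = 0) (h21 : hf e₂ f₁ = 0) (h22 : hf e₂ f₂ = 1) (v : V F) :
    v = hf v f₀ • e₀ + hf v f₁ • e₁ + hf v f₂ • e₂ := by
  let E : Matrix (Fin 3) (Fin 3) F := Matrix.of fun i j => (![e₀, e₁, e₂] : Fin 3 → V F) i j
  let D : Matrix (Fin 3) (Fin 3) F := Matrix.of fun i j => star ((![f₀, f₁, f₂] : Fin 3 → V F) j i)
  have h1 : E * D = 1 := by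
    ext i j
    have hij : (E * D) i j = hf ((![e₀, e₁, e₂] : Fin 3 → V F) i) ((![f₀, f₁, f₂] : Fin 3 → V F) j) := by
      rw [Matrix.mul_apply, Fin.sum_univ_three]; rfl
    rw [hij]
    fin_cases i <;> fin_cases j <;>
      first | exact h00 | exact h01 | exact h02 | exact h10 | exact h11 | exact h12 | exact h20 | exact h21 | exact h22
  have h2 : D * E = 1 := mul_eq_one_comm.mp h1
  have key : ∀ i j, D i 0 * e₀ j + D i 1 * e₁ j + D i 2 * e₂ j = if i = j then 1 else 0 := by
    intro i j
    have := congrFun (congrFun h2 i) j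
    rw [Matrix.mul_apply, Fin.sum_univ_three, Matrix.one_apply] at this
    exact this
  apply V.ext
  intro j
  have k0 := key 0 j
  have k1 := key 1 j
  have k2 := key 2 j
  change star (f₀ 0) * e₀ j + star (f₁ 0) * e₁ j + star (f₂ 0) * e₂ j = _ at k0
  change star (f₀ 1) * e₀ j + star (f₁ 1) * e₁ j + star (f₂ 1) * e₂ j = _ at k1
  change star (f₀ 2) * e₀ j + star (f₁ 2) * e₁ j + star (f₂ 2) * e₂ j = _ at k2
  simp only [hf, V.add_apply, V.smul_apply]
  have : v j = v 0 * (if (0 : Fin 3) = j then 1 else 0) + v 1 * (if (1 : Fin 3) = j then 1 else 0)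
      + v 2 * (if (2 : Fin 3) = j then 1 else 0) := by fin_cases j <;> simp
  rw [this, ← k0, ← k1, ← k2]
  ring

/-- The pattern of a hyperbolic pair `p, r` together with a unit vector `z` orthogonal to it. -/
structure HB (p z r : V F) : Prop where
  pp : hf p p = 0
  rr : hf r r = 0
  zz : hf z z = 1
  pr : hf p r = 1
  pz : hf p z = 0
  rz : hf r z = 0

/-- Orthonormal bases. -/
structure ON (a b c : V F) : Prop where
  aa : hf a a = 1
  bb : hf b b = 1
  cc : hf c c = 1
  ab : hf a b = 0
  ac : hf a c = 0
  bc : hf b c = 0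

namespace HB
variable {p z r : V F} (h : HB p z r)
include h
theorem rp : hf r p = 1 := by rw [← hf_star, h.pr, star_one]
theorem zp : hf z p = 0 := hf_symm_zero h.pz
theorem zr : hf z r = 0 := hf_symm_zero h.rz
theorem exp (v : V F) : v = hf v r • p + hf v z • z + hf v p • r :=
  expand h.pr h.pz h.pp h.zr h.zz h.zp h.rr h.rz h.rp v
theorem swap : HB r z p := ⟨h.rr, h.pp, h.zz, h.rp, h.rz, h.pz⟩
theorem pne : p ≠ 0 := by rintro rfl; have := h.pr; simp [hf_zero_left] at this
theorem rne : r ≠ 0 := h.swap.pne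
theorem zne : z ≠ 0 := by rintro rfl; have := h.zz; simp [hf_zero_left] at this
end HB

namespace ON
variable {a b c : V F} (h : ON a b c)
include h
theorem ba : hf b a = 0 := hf_symm_zero h.ab
theorem ca : hf c a = 0 := hf_symm_zero h.ac
theorem cb : hf c b = 0 := hf_symm_zero h.bc
theorem exp (v : V F) : v = hf v a • a + hf v b • b + hf v c • c :=
  expand h.aa h.ab h.ac h.ba h.bb h.bc h.ca h.cb h.cc v
theorem rot : ON b c a := ⟨h.bb, h.cc, h.aa, h.bc, h.ba, h.ca⟩
theorem swap : ON b a c := ⟨h.bb, h.aa, h.cc, h.ba, h.bc, h.ac⟩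
end ON

/-- Two vectors with the same products against a hyperbolic basis agree. -/
theorem HB.ext {p z r : V F} (h : HB p z r) {x y : V F} (h1 : hf x p = hf y p) (h2 : hf x z = hf y z)
    (h3 : hf x r = hf y r) : x = y := by
  rw [h.exp x, h.exp y, h1, h2, h3]

theorem ON.ext {p z r : V F} (h : ON p z r) {x y : V F} (h1 : hf x p = hf y p) (h2 : hf x z = hf y z)
    (h3 : hf x r = hf y r) : x = y := by
  rw [h.exp x, h.exp y, h1, h2, h3]

end herm

/-! ### The special unitary group as a group of linear maps; transvections -/

section unitary

variable (F : Type*) [Field F] [StarRing F]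

/-- The special unitary group: linear automorphisms of `F³` which preserve the Hermitian form and
the determinant. -/
def UG : Subgroup (V F ≃ₗ[F] V F) where
  carrier := {g | (∀ x y, hf (g x) (g y) = hf x y) ∧ ∀ x y z, vol (g x) (g y) (g z) = vol x y z}
  one_mem' := ⟨fun _ _ => rfl, fun _ _ _ => rfl⟩
  mul_mem' := by
    rintro a b ⟨ha, ha'⟩ ⟨hb, hb'⟩
    exact ⟨fun x y => (ha _ _).trans (hb _ _), fun x y z => (ha' _ _ _).trans (hb' _ _ _)⟩
  inv_mem' := by
    rintro a ⟨ha, ha'⟩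
    refine ⟨fun x y => ?_, fun x y z => ?_⟩
    · rw [← ha]; exact congrArg₂ hf (a.apply_symm_apply x) (a.apply_symm_apply y)
    · rw [← ha', show ∀ x, a (a⁻¹ x) = x from a.apply_symm_apply]
      rw [show ∀ x, a (a⁻¹ x) = x from a.apply_symm_apply,
        show ∀ x, a (a⁻¹ x) = x from a.apply_symm_apply]

noncomputable instance : DistribMulAction (UG F) (V F) := inferInstance
noncomputable instance : MulAction (UG F) (V F) := inferInstance
noncomputable instance : SMul (UG F) (V F) := inferInstance

instance [Finite F] : Finite (UG F) := by
  have : Finite (V F ≃ₗ[F] V F) := Finite.of_injective (fun g => (g : V F → V F)) DFunLike.coe_injective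
  infer_instance

variable {F}

theorem ug_hf (g : UG F) (x y : V F) : hf (g • x) (g • y) = hf x y := g.2.1 x y
theorem ug_vol (g : UG F) (x y z : V F) : vol (g • x) (g • y) (g • z) = vol x y z := g.2.2 x y z
theorem ug_smul (g : UG F) (c : F) (x : V F) : g • (c • x) = c • (g • x) :=
  LinearEquiv.map_smul g.1 c x
theorem ug_add (g : UG F) (x y : V F) : g • (x + y) = g • x + g • y := smul_add g x y
theorem ug_zero (g : UG F) : g • (0 : V F) = 0 := smul_zero g
theorem ug_ext {g h : UG F} (H : ∀ v : V F, g • v = h • v) : g = h :=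
  Subtype.ext (LinearEquiv.ext H)
theorem ug_ne {g : UG F} {x : V F} (h : x ≠ 0) : g • x ≠ 0 := (smul_ne_zero_iff_ne g).mpr h
theorem ug_hf_left (g : UG F) (x y : V F) : hf (g • x) y = hf x (g⁻¹ • y) := by
  rw [← ug_hf g x, smul_inv_smul]
theorem ug_pole (g : UG F) (x y : V F) : g • pole x y = pole (g • x) (g • y) := by
  apply hf_ext
  intro w
  obtain ⟨w, rfl⟩ : ∃ w', w = g • w' := ⟨g⁻¹ • w, (smul_inv_smul g w).symm⟩
  rw [ug_hf, hf_pole, hf_pole, ug_vol]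
theorem ug_inv_eq {g : UG F} {x y : V F} (h : g • x = y) : g⁻¹ • y = x := by
  rw [← h, inv_smul_smul]

theorem pole_smul (a b : F) (x y : V F) : pole (a • x) (b • y) = star (a * b) • pole x y := by
  apply hf_ext
  intro w
  rw [hf_smul_right, star_star, hf_pole, hf_pole]
  simp only [vol, V.smul_apply]; ring

theorem norm_zero {a : F} (h : a * star a = 0) : a = 0 := by
  rcases mul_eq_zero.mp h with h | h
  · exact h
  · exact star_eq_zero.mp h

theorem unit_ne {a : F} (h : a * star a = 1) : a ≠ 0 := by rintro rfl; simp at h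
theorem unit_inv {a : F} (h : a * star a = 1) : a⁻¹ = star a := inv_eq_of_mul_eq_one_right h
theorem unit_star {a : F} (h : a * star a = 1) : star a * star (star a) = 1 := by
  rw [star_star, mul_comm, h]
theorem unit_mul {a b : F} (h : a * star a = 1) (h' : b * star b = 1) :
    (a * b) * star (a * b) = 1 := by rw [star_mul']; linear_combination b * star b * h + h'
theorem fix_add {a b : F} (h : star a = a) (h' : star b = b) : star (a + b) = a + b := by
  rw [star_add, h, h']
theorem fix_mul {a b : F} (h : star a = a) (h' : star b = b) : star (a * b) = a * b := by
  rw [star_mul', h, h']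
theorem fix_norm (a : F) : star (a * star a) = a * star a := by
  rw [star_mul', star_star, mul_comm]
theorem fix_tr (a : F) : star (a + star a) = a + star a := by
  rw [star_add, star_star, add_comm]

variable [CharP F 2]

theorem fix_sq {d : F} (h : star (d * d) = d * d) : star d = d := by
  rw [star_mul'] at h
  have : (star d + d) * (star d + d) = 0 := by grind
  have := mul_self_eq_zero.mp this
  grind

/-- The only element of norm one in the fixed field is `1`, as its square is `1`. -/
theorem fix_unit {c : F} (h : star c = c) (h' : c * star c = 1) : c = 1 := by
  rw [h] at h'
  have : (c + 1) * (c + 1) = 0 := by grind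
  have := mul_self_eq_zero.mp this
  grind

/-- The unitary transvection `v ↦ v + ⟨v, p⟩ p` of an isotropic vector `p` (and `1` for
other vectors). -/
noncomputable def tv (p : V F) : UG F :=
  if h : hf p p = 0 then
    ⟨LinearEquiv.ofInvolutive
      { toFun := fun v => v + hf v p • p
        map_add' := fun x y => by rw [hf_add_left]; module
        map_smul' := fun c x => by rw [hf_smul_left]; simp only [RingHom.id_apply]; module }
      (fun v => by
        change v + hf v p • p + hf (v + hf v p • p) p • p = v
        rw [hf_add_left, hf_smul_left, h, mul_zero, add_zero, add_assoc, add_selfV, add_zero]),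
      by
        constructor
        · intro x y
          change hf (x + hf x p • p) (y + hf y p • p) = hf x y
          simp only [hf_add_left, hf_add_right, hf_smul_left, hf_smul_right, hf_star, h]
          grind
        · intro x y z
          change vol (x + hf x p • p) (y + hf y p • p) (z + hf z p • p) = vol x y z
          have := vol_cramer x y z p p
          rw [h] at this
          generalize hf x p = a at *
          generalize hf y p = b at *
          generalize hf z p = c at *
          simp only [vol, V.add_apply, V.smul_apply] at *
          grind⟩
  else 1

theorem tv_smul {p : V F} (h : hf p p = 0) (v : V F) : tv p • v = v + hf v p • p := by
  unfold tv
  rw [dif_pos h]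
  rfl

theorem tv_fix {p v : V F} (h : hf p p = 0) (hv : hf v p = 0) : tv p • v = v := by
  rw [tv_smul h, hv, zero_smul, add_zero]

theorem tv_self {p : V F} (h : hf p p = 0) : tv p • p = p := tv_fix h h

theorem tv_mul_self {p : V F} (h : hf p p = 0) : tv p * tv p = 1 := by
  apply ug_ext
  intro v
  rw [mul_smul, tv_smul h v, ug_add, ug_smul, tv_self h, tv_smul h, one_smul, add_assoc, add_selfV,
    add_zero]

theorem tv_inv {p : V F} (h : hf p p = 0) : (tv p)⁻¹ = tv p :=
  inv_eq_of_mul_eq_one_left (tv_mul_self h)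

theorem tv_conj {p : V F} (h : hf p p = 0) (g : UG F) : g * tv p * g⁻¹ = tv (g • p) := by
  apply ug_ext
  intro v
  rw [tv_smul (by rw [ug_hf, h]), mul_smul, mul_smul, tv_smul h, ug_add, smul_inv_smul, ug_smul,
    ← ug_hf g (g⁻¹ • v), smul_inv_smul]

theorem iso_smul {p : V F} (h : hf p p = 0) (c : F) : hf (c • p) (c • p) = 0 := by
  rw [hf_smul_left, hf_smul_right, h]; ring

theorem iso_ug {p : V F} (h : hf p p = 0) (g : UG F) : hf (g • p) (g • p) = 0 := by
  rw [ug_hf, h]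

theorem tv_csmul {p : V F} (h : hf p p = 0) (c : F) (v : V F) :
    tv (c • p) • v = v + ((c * star c) * hf v p) • p := by
  rw [tv_smul (iso_smul h c), hf_smul_right, smul_smul]; congr 2; ring

theorem tv_unit {p : V F} (h : hf p p = 0) {u : F} (hu : u * star u = 1) : tv (u • p) = tv p := by
  apply ug_ext; intro v; rw [tv_csmul h, hu, one_mul, tv_smul h]

theorem tv_zero : tv (0 : V F) = 1 := by
  apply ug_ext; intro v; rw [tv_smul (hf_zero_left _), smul_zero, add_zero, one_smul]

theorem tv_mul {p : V F} (h : hf p p = 0) {c d : F} (hc : star c = c) (hd : star d = d) :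
    tv (c • p) * tv (d • p) = tv ((c + d) • p) := by
  apply ug_ext; intro v
  rw [mul_smul, tv_csmul h, tv_csmul h, tv_csmul h, hf_add_left, hf_smul_left, h, star_add, hc, hd]
  apply V.ext; intro i; simp only [V.add_apply, V.smul_apply]; grind

theorem tv_ne_one {p : V F} (h : hf p p = 0) (h0 : p ≠ 0) : tv p ≠ 1 := by
  intro h1
  obtain ⟨w, hw⟩ := hf_nondeg' h0
  have := tv_smul h w
  rw [h1, one_smul, ← hf_star p w, hw, star_one, one_smul] at this
  exact h0 (left_eq_add.mp this)

theorem tv_eq {p r : V F} (hp : hf p p = 0) (hr : hf r r = 0) (hp0 : p ≠ 0) (h : tv p = tv r) :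
    ∃ u : F, u * star u = 1 ∧ p = u • r := by
  obtain ⟨w, hw⟩ := hf_nondeg' hp0
  have key : ∀ v, hf v p • p = hf v r • r := by
    intro v
    have h1 := tv_smul hp v
    rw [h, tv_smul hr] at h1
    exact (add_left_cancel h1).symm
  have h1 := key w
  rw [← hf_star p w, hw, star_one, one_smul] at h1
  refine ⟨hf w r, ?_, h1⟩
  have h2 := hw
  rw [h1, hf_smul_left, ← hf_star w r] at h2
  exact h2

end unitary

/-! ### Bases and isotropic vectors -/

section bases

variable {F : Type*} [Field F] [StarRing F] [CharP F 2]

theorem ON.of_pair {a b : V F} (ha : hf a a = 1) (hb : hf b b = 1) (hab : hf a b = 0) :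
    ON a b (pole a b) :=
  ⟨ha, hb, by rw [hf_pole_pole, ha, hb, hab]; ring, hab, hf_pole_left a b, hf_pole_right a b⟩

theorem HB.of_pair {p r : V F} (hp : hf p p = 0) (hr : hf r r = 0) (hpr : hf p r = 1) :
    HB p (pole p r) r :=
  ⟨hp, hr, by rw [hf_pole_pole, hp, hr, ← hf_star p r, hpr, star_one]; ring, hpr, hf_pole_left p r,
    hf_pole_right p r⟩

theorem HB.ug {p z r : V F} (h : HB p z r) (g : UG F) : HB (g • p) (g • z) (g • r) := by
  constructor <;> rw [ug_hf]
  exacts [h.pp, h.rr, h.zz, h.pr, h.pz, h.rz]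

theorem ON.ug {p z r : V F} (h : ON p z r) (g : UG F) : ON (g • p) (g • z) (g • r) := by
  constructor <;> rw [ug_hf]
  exacts [h.aa, h.bb, h.cc, h.ab, h.ac, h.bc]

theorem ON.ug_pole {a b c : V F} (h : ON a b c) : ∃ l : F, l * star l = 1 ∧ c = l • pole a b := by
  have h' := ON.of_pair h.aa h.bb h.ab
  have h1 := h'.exp c
  rw [h.ca, h.cb, zero_smul, zero_smul, zero_add, zero_add] at h1
  refine ⟨_, ?_, h1⟩
  have h2 := h.cc
  rw [h1, hf_smul_left, hf_smul_right, h'.cc, mul_one] at h2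
  exact h2

theorem HB.ug_pole {p z r : V F} (h : HB p z r) :
    ∃ l : F, l * star l = 1 ∧ z = l • pole p r := by
  have h' := HB.of_pair h.pp h.rr h.pr
  have h1 := h'.exp z
  rw [h.zp, h.zr, zero_smul, zero_smul, zero_add, add_zero] at h1
  refine ⟨_, ?_, h1⟩
  have h2 := h.zz
  rw [h1, hf_smul_left, hf_smul_right, h'.zz, mul_one] at h2
  exact h2

theorem ON.ug_eq {a b c : V F} (h : ON a b c) {g k : UG F} (h1 : g • a = k • a) (h2 : g • b = k • b) :
    g = k := by
  obtain ⟨l, -, hl⟩ := h.ug_pole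
  have h3 : g • c = k • c := by rw [hl, ug_smul, ug_smul, PSUPaper.ug_pole, PSUPaper.ug_pole, h1, h2]
  apply ug_ext
  intro v
  rw [h.exp v]
  simp only [ug_add, ug_smul, h1, h2, h3]

theorem HB.ug_eq {p z r : V F} (h : HB p z r) {g k : UG F} (h1 : g • p = k • p)
    (h2 : g • r = k • r) : g = k := by
  obtain ⟨l, -, hl⟩ := h.ug_pole
  have h3 : g • z = k • z := by rw [hl, ug_smul, ug_smul, PSUPaper.ug_pole, PSUPaper.ug_pole, h1, h2]
  apply ug_ext
  intro v
  rw [h.exp v]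
  simp only [ug_add, ug_smul, h1, h2, h3]

/-- The eigenvalue on the third vector of a basis is determined by the determinant. -/
theorem HB.third {p z r : V F} (h : HB p z r) {g : UG F} {a b : F} (h1 : g • p = a • p)
    (h2 : g • r = b • r) : g • z = star (a * b) • z := by
  obtain ⟨l, -, hl⟩ := h.ug_pole
  rw [hl, ug_smul, PSUPaper.ug_pole, h1, h2, pole_smul, smul_comm]

theorem ON.third {p r z : V F} (h : ON p r z) {g : UG F} {a b : F} (h1 : g • p = a • p)
    (h2 : g • r = b • r) : g • z = star (a * b) • z := by
  obtain ⟨l, -, hl⟩ := h.ug_pole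
  rw [hl, ug_smul, PSUPaper.ug_pole, h1, h2, pole_smul, smul_comm]

variable [UFld F]

theorem exists_HB_unit {p w : V F} (hp : hf p p = 0) (hp0 : p ≠ 0) (hw : hf w w = 1)
    (hpw : hf p w = 0) : ∃ r, HB p w r := by
  obtain ⟨v, hv⟩ := hf_nondeg' hp0
  have hvp : hf v p = 1 := by rw [← hf_star, hv, star_one]
  have hwp : hf w p = 0 := hf_symm_zero hpw
  obtain ⟨a, ha⟩ := UFld.trace (hf (v + hf v w • w) (v + hf v w • w)) (hf_self _)
  refine ⟨v + hf v w • w + a • p, hp, ?_, hw, ?_, hpw, ?_⟩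
  · generalize hx : v + hf v w • w = x at *
    have hxp : hf x p = 1 := by rw [← hx, hf_add_left, hf_smul_left, hvp, hwp]; ring
    have hpx : hf p x = 1 := by rw [← hf_star, hxp, star_one]
    simp only [hf_add_left, hf_add_right, hf_smul_left, hf_smul_right, hxp, hpx, hp]
    grind
  · simp only [hf_add_left, hf_add_right, hf_smul_left, hf_smul_right, hv, hp, hpw]; ring
  · simp only [hf_add_left, hf_add_right, hf_smul_left, hf_smul_right, hpw, hw]; grind

theorem exists_HB_pair {p : V F} (hp : hf p p = 0) (hp0 : p ≠ 0) : ∃ z r, HB p z r := by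
  obtain ⟨v, hv⟩ := hf_nondeg' hp0
  have hvp : hf v p = 1 := by rw [← hf_star, hv, star_one]
  obtain ⟨a, ha⟩ := UFld.trace (hf v v) (hf_self _)
  refine ⟨pole p (v + a • p), v + a • p, HB.of_pair hp ?_ ?_⟩
  · simp only [hf_add_left, hf_add_right, hf_smul_left, hf_smul_right, hv, hvp, hp]
    grind
  · simp only [hf_add_right, hf_smul_right, hv, hp]; ring

/-- Orthogonal isotropic vectors are parallel: the Witt index is one. -/
theorem iso_par {p r : V F} (hp : hf p p = 0) (hr : hf r r = 0) (hp0 : p ≠ 0) (h : hf r p = 0) :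
    ∃ a : F, r = a • p := by
  obtain ⟨z, r', hb⟩ := exists_HB_pair hp hp0
  have h1 := hb.exp r
  rw [h, zero_smul, add_zero] at h1
  have h2 : hf r z = 0 := by
    apply norm_zero
    have : hf r r = hf r z * star (hf r z) := by
      conv_lhs => rw [h1]
      simp only [hf_add_left, hf_add_right, hf_smul_left, hf_smul_right, hb.zz, hp, hb.pz, hb.zp]
      ring
    rw [← this, hr]
  rw [h2, zero_smul, add_zero] at h1
  exact ⟨_, h1⟩

theorem iso_par' {p r : V F} (hp : hf p p = 0) (hr : hf r r = 0) (hp0 : p ≠ 0) (hr0 : r ≠ 0)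
    (h : hf r p = 0) : ∃ a : F, a ≠ 0 ∧ r = a • p := by
  obtain ⟨a, ha⟩ := iso_par hp hr hp0 h
  refine ⟨a, ?_, ha⟩
  rintro rfl
  exact hr0 (by rw [ha, zero_smul])

theorem tv_comm {p r : V F} (hp : hf p p = 0) (hr : hf r r = 0) (hr0 : r ≠ 0)
    (h : tv p * tv r = tv r * tv p) : hf r p = 0 := by
  have h1 : tv (tv p • r) = tv r := by
    rw [← tv_conj hr, h, mul_assoc, mul_inv_cancel, mul_one]
  obtain ⟨u, hu, h2⟩ := tv_eq (iso_ug hr _) hr (ug_ne hr0) h1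
  rw [tv_smul hp] at h2
  have h3 : hf r r + hf r p * hf p r = u * hf r r := by
    rw [← hf_smul_left, ← hf_smul_left, ← hf_add_left, h2]
  rw [hr, ← hf_star r p] at h3
  apply norm_zero
  linear_combination h3

/-- Every involution is a transvection. -/
theorem inv_is_tv {g : UG F} (h1 : g ≠ 1) (h2 : g * g = 1) :
    ∃ p : V F, p ≠ 0 ∧ hf p p = 0 ∧ g = tv p := by
  have hgi : g⁻¹ = g := inv_eq_of_mul_eq_one_left h2
  have hadj : ∀ x y : V F, hf (g • x + x) y = hf x (g • y + y) := by
    intro x y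
    rw [hf_add_left, hf_add_right, ug_hf_left, hgi]
  have hNN : ∀ x : V F, g • (g • x + x) + (g • x + x) = 0 := by
    intro x
    rw [ug_add, ← mul_smul, h2, one_smul, add_comm x, add_selfV]
  have horth : ∀ x y : V F, hf (g • x + x) (g • y + y) = 0 := by
    intro x y
    rw [hadj, hNN, hf_zero_right]
  obtain ⟨v0, hv0⟩ : ∃ v0 : V F, g • v0 + v0 ≠ 0 := by
    by_contra! hc
    apply h1
    apply ug_ext
    intro v
    rw [one_smul]
    exact V.add_eq_zero (hc v)
  set p := g • v0 + v0 with hp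
  have hpp : hf p p = 0 := horth _ _
  choose f hfx using fun v => iso_par hpp (horth v v) hv0 (horth v v0)
  obtain ⟨w, hw⟩ := hf_nondeg' hv0
  have hwp : hf w p = 1 := by rw [← hf_star, hw, star_one]
  have hfv : ∀ v, f v = star (f w) * hf v p := by
    intro v
    have h := hadj v w
    rw [hfx v, hfx w, hf_smul_left, hf_smul_right, hw, mul_one] at h
    exact h
  have hfix : star (f w) = f w := by
    have := hfv w
    rw [hwp, mul_one] at this
    exact this.symm
  obtain ⟨d, hd, hdd⟩ := UFld.sqrt (f w) hfix
  have hd0 : d ≠ 0 := by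
    rintro rfl
    apply hv0
    rw [hp, hfx v0, hfv, hfix, ← hdd]
    simp
  refine ⟨d • p, ?_, iso_smul hpp d, ?_⟩
  · intro h0
    rcases smul_eq_zero.mp h0 with h | h
    · exact hd0 h
    · exact hv0 h
  · apply ug_ext
    intro v
    rw [tv_csmul hpp, hd, hdd, V.eq_add_of (hfx v), hfv, hfix, add_comm]

variable [Finite F]

/-- Two nonorthogonal transvections are conjugate in the dihedral group they generate, because their
product has odd order: an involution among its powers would centralise both. -/
theorem tv_conj_in {K : Subgroup (UG F)} {p r : V F} (hp : hf p p = 0) (hr : hf r r = 0)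
    (hpr : hf p r ≠ 0) (hpK : tv p ∈ K) (hrK : tv r ∈ K) :
    ∃ g ∈ K, (∃ u : F, u * star u = 1 ∧ g • p = u • r) ∧
      ∀ z, hf z p = 0 → hf z r = 0 → g • z = z := by
  have hp0 : p ≠ 0 := by rintro rfl; exact hpr (hf_zero_left _)
  have hr0 : r ≠ 0 := by rintro rfl; exact hpr (hf_zero_right _)
  set d := tv p * tv r with hd
  have hdp : tv p * d * (tv p)⁻¹ = d⁻¹ := by
    rw [hd, mul_inv_rev, tv_inv hp, tv_inv hr, ← mul_assoc, tv_mul_self hp, one_mul]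
  have hdpk : ∀ k : ℕ, tv p * d ^ k * (tv p)⁻¹ = (d ^ k)⁻¹ := by
    intro k
    rw [← conj_pow, hdp, inv_pow]
  have hodd : Odd (orderOf d) := by
    by_contra he
    rw [Nat.not_odd_iff_even] at he
    obtain ⟨m, hm⟩ := he
    have hpos : 0 < orderOf d := orderOf_pos d
    have hm0 : 0 < m := by omega
    have e2 : d ^ m * d ^ m = 1 := by rw [← pow_add, ← hm, pow_orderOf_eq_one]
    have e1 : d ^ m ≠ 1 := pow_ne_one_of_lt_orderOf hm0.ne' (by omega)
    obtain ⟨x, hx0, hxx, hx⟩ := inv_is_tv e1 e2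
    have c1 : tv p * tv x = tv x * tv p := by
      have := hdpk m
      rw [hx, tv_inv hxx] at this
      rw [← mul_inv_eq_iff_eq_mul]
      exact this
    have c3 : d * tv x = tv x * d := by rw [← hx, ← pow_succ, ← pow_succ']
    have c4 : tv r * tv x = tv x * tv r := by
      have : tv r = tv p * d := by rw [hd, ← mul_assoc, tv_mul_self hp, one_mul]
      rw [this, mul_assoc, c3, ← mul_assoc, c1, mul_assoc]
    have o1 := tv_comm hp hxx hx0 c1
    have o2 := tv_comm hr hxx hx0 c4
    obtain ⟨a, ha0, ha⟩ := iso_par' hp hxx hp0 hx0 o1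
    rw [ha, hf_smul_left] at o2
    rcases mul_eq_zero.mp o2 with h | h
    · exact ha0 h
    · exact hpr h
  obtain ⟨m, hm⟩ := hodd
  have hdK : d ∈ K := K.mul_mem hpK hrK
  have hg : d ^ m * tv p * (d ^ m)⁻¹ = tv r := by
    have h1 : tv p * (d ^ m)⁻¹ = d ^ m * tv p := by
      have := hdpk m
      rw [mul_inv_eq_iff_eq_mul] at this
      have h2 := congrArg (fun y => d ^ m * y * (d ^ m)⁻¹) this
      simp only [mul_assoc, mul_inv_cancel_left] at h2
      simpa [mul_assoc] using h2.symm
    have h3 : d ^ m * d ^ m * d = 1 := by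
      rw [← pow_add, ← pow_succ, ← two_mul, ← hm, pow_orderOf_eq_one]
    have h4 : d ^ m * d ^ m = d⁻¹ := eq_inv_of_mul_eq_one_left h3
    rw [mul_assoc, h1, ← mul_assoc, h4, hd, mul_inv_rev, tv_inv hp, tv_inv hr, mul_assoc,
      tv_mul_self hp, mul_one]
  refine ⟨d ^ m, K.pow_mem hdK m, ?_, ?_⟩
  · rw [tv_conj hp] at hg
    exact tv_eq (iso_ug hp _) hr (ug_ne hp0) hg
  · intro z h1 h2
    have : d • z = z := by rw [hd, mul_smul, tv_fix hr h2, tv_fix hp h1]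
    have h3 : ∀ k : ℕ, d ^ k • z = z := by
      intro k
      induction k with
      | zero => simp
      | succ k ih => rw [pow_succ, mul_smul, this, ih]
    exact h3 m

end bases

/-! ### Three counting arguments in abstract groups -/

section counting

open Finset

/-- Counting products of involutions in a group which acts on a set `X` like `SL(2,Q)` acts
on a subset of a projective line: every involution has exactly one fixed point, every point is
the centre of `Q - 1` involutions, point stabilisers have order `Q (Q - 1)` and three-point
stabilisers are trivial. Comparing the number of elements without fixed points with the number of
products of two involutions gives the bound. -/
theorem countA {D Y : Type*} [Group D] [Finite D] [MulAction D Y] (X : Finset Y) (Q : ℕ) (hQ : 3 ≤ Q)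
    (c : D → Y)
    (hc : ∀ t : D, t ≠ 1 → t * t = 1 → c t ∈ X ∧ ∀ x ∈ X, t • x = x ↔ x = c t)
    (hX : ∀ g : D, ∀ x ∈ X, g • x ∈ X)
    (hcard : ∀ x ∈ X, Nat.card {t : D // t ≠ 1 ∧ t * t = 1 ∧ c t = x} = Q - 1)
    (hmul : ∀ s t : D, s ≠ 1 → s * s = 1 → t ≠ 1 → t * t = 1 → c s = c t → s * t ≠ 1 →
      (s * t) * (s * t) = 1 ∧ c (s * t) = c s)
    (h3 : ∀ g : D, ∀ x ∈ X, ∀ y ∈ X, ∀ w ∈ X, g • x = x → g • y = y → g • w = w → x ≠ y → x ≠ w →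
      y ≠ w → g = 1)
    (h4 : ∀ x ∈ X, ∀ y ∈ X, x ≠ y → Nat.card {g : D // g • x = x ∧ g • y = y} ≤ Q - 1)
    (h5 : ∀ x ∈ X, Nat.card {g : D // g • x = x} = Q * (Q - 1))
    (h6 : Nat.card D = X.card * (Q * (Q - 1))) : X.card ≤ Q + 1 := by
  have := Fintype.ofFinite D
  simp only [Nat.card_eq_fintype_card, Fintype.card_subtype] at hcard h4 h5 h6
  set T : Finset D := univ.filter fun t => t ≠ 1 ∧ t * t = 1 with hT
  have memT : ∀ t, t ∈ T ↔ t ≠ 1 ∧ t * t = 1 := by simp [hT]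
  set A : Finset D := univ.filter fun g => g ≠ 1 ∧ g * g ≠ 1 ∧ ∃ x ∈ X, g • x = x with hA
  set B : Finset D := univ.filter fun g => ∀ x ∈ X, g • x ≠ x with hB
  have hTc : ∀ x ∈ X, (T.filter fun t => c t = x).card = Q - 1 := by
    intro x hx
    rw [← hcard x hx]
    congr 1
    ext t; simp [hT, and_assoc]
  have hTcard : T.card = X.card * (Q - 1) := by
    rw [card_eq_sum_card_fiberwise (f := c) (t := X), sum_congr rfl hTc, sum_const, smul_eq_mul]
    intro t ht
    have := (memT t).mp ht
    exact (hc t this.1 this.2).1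
  -- elements of order greater than two with a fixed point
  have hA2 : X.card * (Q * (Q - 1) - Q) ≤ 2 * A.card := by
    have e1 : ∀ x ∈ X, (A.filter fun g => g • x = x).card = Q * (Q - 1) - Q := by
      intro x hx
      have hs : (univ.filter fun g : D => g • x = x) =
          insert 1 (T.filter fun t => c t = x) ∪ (A.filter fun g => g • x = x) := by
        ext g
        simp only [mem_filter, mem_univ, true_and, mem_union, mem_insert, memT, hA]
        constructor
        · intro hg
          by_cases h1 : g = 1
          · exact Or.inl (Or.inl h1)
          by_cases h2 : g * g = 1
          · exact Or.inl (Or.inr ⟨⟨h1, h2⟩, (((hc g h1 h2).2 x hx).mp hg).symm⟩)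
          · exact Or.inr ⟨⟨h1, h2, x, hx, hg⟩, hg⟩
        · rintro ((rfl | ⟨⟨h1, h2⟩, h⟩) | ⟨-, h⟩)
          · exact one_smul _ _
          · exact ((hc g h1 h2).2 x hx).mpr h.symm
          · exact h
      have hd : Disjoint (insert 1 (T.filter fun t => c t = x)) (A.filter fun g => g • x = x) := by
        rw [disjoint_left]
        intro g hg hg'
        simp only [mem_filter, mem_univ, true_and, mem_insert, memT, hA] at hg hg'
        rcases hg with rfl | h
        · exact hg'.1.1 rfl
        · exact hg'.1.2.1 h.1.2
      have h := h5 x hx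
      rw [hs, card_union_of_disjoint hd, card_insert_of_notMem (by simp [memT]), hTc x hx] at h
      have h10 : Q - 1 + 1 = Q := by omega
      rw [h10] at h
      omega
    have e2 : ∀ g ∈ A, (X.filter fun x => g • x = x).card ≤ 2 := by
      intro g hg
      by_contra! hlt
      obtain ⟨x, hx, y, hy, w, hw, hxy, hxw, hyw⟩ := two_lt_card.mp hlt
      simp only [mem_filter] at hx hy hw
      simp only [hA, mem_filter] at hg
      exact hg.2.1 (h3 g x hx.1 y hy.1 w hw.1 hx.2 hy.2 hw.2 hxy hxw hyw)
    have e3 := sum_card_bipartiteAbove_eq_sum_card_bipartiteBelow (s := A) (t := X)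
      (fun g x => g • x = x)
    simp only [bipartiteAbove, bipartiteBelow] at e3
    rw [sum_congr rfl e1, sum_const, smul_eq_mul] at e3
    rw [← e3, mul_comm 2]
    exact (sum_le_card_nsmul A _ 2 e2).trans_eq (by simp)
  have hD : 1 + T.card + A.card + B.card ≤ X.card * (Q * (Q - 1)) := by
    rw [← h6, ← card_univ]
    have hX0 : X.Nonempty := by
      rw [← card_pos]
      by_contra h0
      have h00 : X.card = 0 := by omega
      rw [h00, zero_mul] at h6
      exact Fintype.card_ne_zero h6
    obtain ⟨x0, hx0⟩ := hX0
    have d1 : Disjoint {1} T := by simp [memT]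
    have d2 : Disjoint ({1} ∪ T) A := by
      rw [disjoint_left]
      intro g hg hg'
      simp only [mem_filter, mem_union, mem_univ, true_and, mem_singleton, memT, hA] at hg hg'
      rcases hg with rfl | h
      · exact hg'.1 rfl
      · exact hg'.2.1 h.2
    have d3 : Disjoint ({1} ∪ T ∪ A) B := by
      rw [disjoint_left]
      intro g hg hg'
      simp only [mem_filter, mem_union, mem_univ, true_and, mem_singleton, memT, hA, hB] at hg hg'
      rcases hg with (rfl | h) | h
      · exact hg' x0 hx0 (one_smul _ _)
      · have := hc g h.1 h.2
        exact hg' _ this.1 ((this.2 _ this.1).mpr rfl)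
      · obtain ⟨x, hx, hxx⟩ := h.2.2
        exact hg' x hx hxx
    have := card_le_card (subset_univ ({1} ∪ T ∪ A ∪ B))
    rwa [card_union_of_disjoint d3, card_union_of_disjoint d2, card_union_of_disjoint d1,
      card_singleton] at this
  -- pairs of involutions with different centres
  set P : Finset (D × D) := (T ×ˢ T).filter fun s => c s.1 ≠ c s.2 with hP
  have memP : ∀ s, s ∈ P ↔ s.1 ∈ T ∧ s.2 ∈ T ∧ c s.1 ≠ c s.2 := by simp [hP, and_assoc]
  have hPcard : P.card + X.card * ((Q - 1) * (Q - 1)) = T.card * T.card := by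
    have e1 : ((T ×ˢ T).filter fun s => c s.1 = c s.2).card = X.card * ((Q - 1) * (Q - 1)) := by
      rw [card_eq_sum_card_fiberwise (f := fun s => c s.1) (t := X)]
      · rw [← smul_eq_mul, ← sum_const]
        apply sum_congr rfl
        intro x hx
        rw [← hTc x hx, ← card_product]
        congr 1
        ext s
        simp only [mem_filter, mem_product]
        constructor
        · rintro ⟨⟨⟨h1, h2⟩, h3⟩, h4⟩
          exact ⟨⟨h1, h4⟩, h2, h3 ▸ h4⟩
        · rintro ⟨⟨h1, h2⟩, h3, h4⟩
          exact ⟨⟨⟨h1, h3⟩, h2.trans h4.symm⟩, h2⟩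
      · intro s hs
        have := (mem_product.mp (mem_filter.mp (mem_coe.mp hs)).1).1
        rw [memT] at this
        exact (hc _ this.1 this.2).1
    rw [← e1, ← card_product, add_comm, hP]
    exact card_filter_add_card_filter_not _
  have hsq : ∀ t ∈ T, t * t = 1 := fun t ht => ((memT t).mp ht).2
  have hti : ∀ t ∈ T, t⁻¹ = t := fun t ht => inv_eq_of_mul_eq_one_left (hsq t ht)
  have hgood : (P.filter fun s => s.1 * s.2 ∈ B).card ≤ B.card * X.card := by
    rw [← card_product]
    apply card_le_card_of_injOn (fun s => (s.1 * s.2, c s.1))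
    · intro s hs
      simp only [coe_filter, Set.mem_ofPred_eq, memP, memT] at hs
      simp only [coe_product, Set.mem_prod, mem_coe]
      exact ⟨hs.2, (hc _ hs.1.1.1 hs.1.1.2).1⟩
    · rintro ⟨s, s'⟩ hs ⟨t, t'⟩ ht heq
      simp only [coe_filter, Set.mem_ofPred_eq, memP] at hs ht
      simp only [Prod.mk.injEq] at heq
      obtain ⟨⟨hs1, hs2, hs3⟩, -⟩ := hs
      obtain ⟨⟨ht1, ht2, ht3⟩, -⟩ := ht
      have Ts := (memT s).mp hs1
      have Tt := (memT t).mp ht1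
      have Ts' := (memT s').mp hs2
      have hkey : t * s = t' * s' := by
        have h1 : s = t * t' * s' := by
          rw [← heq.1, mul_assoc, hsq s' hs2, mul_one]
        rw [h1, ← mul_assoc, ← mul_assoc, hsq t ht1, one_mul]
      by_cases h1 : t * s = 1
      · have e1 : s = t := by rw [← hti t ht1]; exact (inv_eq_of_mul_eq_one_right h1).symm
        have e2 : s' = t' := by
          rw [← hti t' ht2]; exact (inv_eq_of_mul_eq_one_right (hkey ▸ h1)).symm
        rw [e1, e2]
      · exfalso
        obtain ⟨m1, m2⟩ := hmul t s Tt.1 Tt.2 Ts.1 Ts.2 heq.2.symm h1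
        -- `s'` commutes with the involution `t * s`, hence has the same centre
        have hfix : s' • c (t * s) = c (t * s) := by
          have hu := hc (t * s) h1 m1
          have hcomm : (t * s) * s' = s' * (t * s) := by
            have m1' : (t' * s') * (t' * s') = 1 := by rw [← hkey]; exact m1
            have : t' * s' = s' * t' := by
              rw [← inv_eq_of_mul_eq_one_left m1', mul_inv_rev, hti t' ht2, hti s' hs2]
            rw [hkey, mul_assoc, hsq s' hs2, this, ← mul_assoc, hsq s' hs2, mul_one, one_mul]
          apply (hu.2 _ (hX _ _ hu.1)).mp
          rw [← mul_smul, hcomm, mul_smul, (hu.2 _ hu.1).mpr rfl]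
        have := ((hc s' Ts'.1 Ts'.2).2 _ (hc _ h1 m1).1).mp hfix
        rw [m2] at this
        exact hs3 (heq.2.trans this)
  have hbad : 2 * (P.filter fun s => s.1 * s.2 ∉ B).card ≤
      (X.card * X.card - X.card) * ((Q - 1) * (Q - 1) - (Q - 1)) := by
    have e3 := sum_card_bipartiteAbove_eq_sum_card_bipartiteBelow
      (s := P.filter fun s => s.1 * s.2 ∉ B) (t := X.offDiag)
      (fun s x => s.1 • x.1 = x.2 ∧ s.2 • x.1 = x.2)
    simp only [bipartiteAbove, bipartiteBelow] at e3
    have e1 : ∀ s ∈ P.filter (fun s => s.1 * s.2 ∉ B),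
        2 ≤ (X.offDiag.filter fun x => s.1 • x.1 = x.2 ∧ s.2 • x.1 = x.2).card := by
      rintro ⟨t, t'⟩ hs
      simp only [mem_filter, memP] at hs
      obtain ⟨⟨ht, ht', hne⟩, hb⟩ := hs
      simp only [hB, mem_filter, mem_univ, true_and, not_forall, not_not] at hb
      obtain ⟨x, hx, hxx⟩ := hb
      have Tt := (memT t).mp ht
      have Tt' := (memT t').mp ht'
      have hx1 : t' • x = t • x := by
        rw [mul_smul] at hxx
        rw [← hti t ht, eq_inv_smul_iff, hxx]
      have hx2 : t • x ≠ x := by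
        intro h
        apply hne
        rw [← ((hc t Tt.1 Tt.2).2 x hx).mp h, ← ((hc t' Tt'.1 Tt'.2).2 x hx).mp (hx1.trans h)]
      have hinv : ∀ s ∈ T, s • s • x = x := fun s hs => by rw [← mul_smul, hsq s hs, one_smul]
      have : ({(x, t • x), (t • x, x)} : Finset (Y × Y)) ⊆
          X.offDiag.filter fun x => t • x.1 = x.2 ∧ t' • x.1 = x.2 := by
        intro y hy
        simp only [mem_insert, mem_singleton] at hy
        rcases hy with rfl | rfl
        · simp only [mem_filter, mem_offDiag]
          exact ⟨⟨hx, hX _ _ hx, hx2.symm⟩, trivial, hx1⟩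
        · simp only [mem_filter, mem_offDiag]
          refine ⟨⟨hX _ _ hx, hx, hx2⟩, hinv t ht, ?_⟩
          rw [← hx1]; exact hinv t' ht'
      refine le_trans ?_ (card_le_card this)
      rw [card_pair]
      intro h
      exact hx2 (Prod.mk.inj h).2
    have e2 : ∀ x ∈ X.offDiag, ((P.filter fun s => s.1 * s.2 ∉ B).filter
        fun s => s.1 • x.1 = x.2 ∧ s.2 • x.1 = x.2).card ≤ (Q - 1) * (Q - 1) - (Q - 1) := by
      rintro ⟨x, y⟩ hxy
      simp only [mem_offDiag] at hxy
      set M : Finset D := T.filter fun t => t • x = y with hM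
      have hMc : M.card ≤ Q - 1 := by
        rcases M.eq_empty_or_nonempty with h | ⟨t0, ht0⟩
        · rw [h]; simp
        · refine le_trans ?_ (h4 x hxy.1 y hxy.2.1 hxy.2.2)
          apply card_le_card_of_injOn (fun t => t0⁻¹ * t)
          · intro t ht
            simp only [hM, coe_filter, Set.mem_ofPred_eq, mem_filter] at ht ht0
            simp only [coe_filter, Set.mem_ofPred_eq, mem_univ, true_and]
            have r1 : t • y = x := by rw [← ht.2, ← mul_smul, hsq t ht.1, one_smul]
            have r2 : t0 • y = x := by rw [← ht0.2, ← mul_smul, hsq t0 ht0.1, one_smul]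
            rw [mul_smul, mul_smul, ht.2, r1, inv_smul_eq_iff, inv_smul_eq_iff, ht0.2, r2]
            exact ⟨rfl, rfl⟩
          · intro a _ b _ h
            exact mul_left_cancel h
      have : ((P.filter fun s => s.1 * s.2 ∉ B).filter
        fun s => s.1 • x = y ∧ s.2 • x = y) ⊆ M.offDiag := by
        rintro ⟨t, t'⟩ hs
        simp only [mem_filter, memP] at hs
        simp only [mem_offDiag, hM, mem_filter]
        refine ⟨⟨hs.1.1.1, hs.2.1⟩, ⟨hs.1.1.2.1, hs.2.2⟩, ?_⟩
        rintro rfl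
        exact hs.1.1.2.2 rfl
      refine (card_le_card this).trans ?_
      rw [offDiag_card, ← Nat.mul_sub_one, ← Nat.mul_sub_one]
      exact Nat.mul_le_mul hMc (Nat.sub_le_sub_right hMc 1)
    calc 2 * (P.filter fun s => s.1 * s.2 ∉ B).card
        = (P.filter fun s => s.1 * s.2 ∉ B).card • 2 := by rw [smul_eq_mul, mul_comm]
      _ ≤ _ := card_nsmul_le_sum _ _ 2 e1
      _ = _ := e3
      _ ≤ _ := sum_le_card_nsmul _ _ _ e2
      _ = _ := by rw [offDiag_card, smul_eq_mul]
  have hsum := card_filter_add_card_filter_not (s := P) (fun s => s.1 * s.2 ∈ B)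
  rw [hTcard] at hPcard hD
  obtain ⟨R, rfl⟩ : ∃ R, Q = R + 3 := ⟨Q - 3, by omega⟩
  have hv1 : 1 ≤ X.card := by
    by_contra h0
    have h00 : X.card = 0 := by omega
    rw [h00] at hD; omega
  have s1 : (R + 3) * (R + 3 - 1) - (R + 3) = (R + 3) * (R + 1) := by
    rw [← Nat.mul_sub_one]; rfl
  have s2 : (R + 3 - 1) * (R + 3 - 1) - (R + 3 - 1) = (R + 2) * (R + 1) := by
    rw [← Nat.mul_sub_one]; rfl
  have s3 : X.card * X.card - X.card = X.card * (X.card - 1) := by rw [← Nat.mul_sub_one]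
  rw [s1] at hA2
  rw [s2, s3] at hbad
  have s4 : R + 3 - 1 = R + 2 := rfl
  rw [s4] at hPcard hD
  clear hcard h4 h5 h6 hTc hTcard s1 s2 s3 s4
  generalize X.card = v at *
  obtain ⟨w, rfl⟩ : ∃ w, v = w + 1 := ⟨v - 1, by omega⟩
  rw [Nat.add_sub_cancel] at hbad
  generalize A.card = a at *
  generalize B.card = b at *
  generalize (P.filter fun s => s.1 * s.2 ∈ B).card = g at *
  generalize (P.filter fun s => s.1 * s.2 ∉ B).card = h at *
  generalize P.card = p at *
  clear_value T A B P
  have f1 : 2 * b + 2 ≤ (w + 1) * ((R + 3) * (R + 3) - 2 * (R + 3) + 2) := by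
    have : (R + 3) * (R + 3) - 2 * (R + 3) + 2 = R * R + 4 * R + 5 := by
      have : (R + 3) * (R + 3) = R * R + 4 * R + 3 + 2 * (R + 3) := by ring
      omega
    rw [this]
    nlinarith
  have f2 : (w + 1) * (w * (R + 2) * (R + 3)) ≤ (w + 1) * (2 * b) := by
    nlinarith
  have f3 := Nat.le_of_mul_le_mul_left f2 (by omega)
  have : (R + 3) * (R + 3) - 2 * (R + 3) + 2 = R * R + 4 * R + 5 := by
    have : (R + 3) * (R + 3) = R * R + 4 * R + 3 + 2 * (R + 3) := by ring
    omega
  rw [this] at f1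
  have f4 : (R + 1) * w ≤ (R + 1) * (R + 3) := by nlinarith
  have := Nat.le_of_mul_le_mul_left f4 (by omega)
  omega

/-- The number of involutions times the order of an involution centraliser, when all involutions are
conjugate. -/
theorem card_class {D : Type*} [Group D] [Fintype D]
    (hconj : ∀ s t : D, s ≠ 1 → s * s = 1 → t ≠ 1 → t * t = 1 → ∃ g, g * s * g⁻¹ = t)
    {t : D} (h1 : t ≠ 1) (h2 : t * t = 1) :
    (univ.filter fun t : D => t ≠ 1 ∧ t * t = 1).card * (univ.filter fun g : D => g * t = t * g).card
      = Fintype.card D := by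
  rw [← card_univ, card_eq_sum_card_fiberwise (s := (univ : Finset D)) (f := fun g : D => g * t * g⁻¹)
    (t := univ.filter fun t : D => t ≠ 1 ∧ t * t = 1), sum_const_nat]
  · intro s hs
    symm
    simp only [mem_filter, mem_univ, true_and] at hs
    obtain ⟨g0, hg0⟩ := hconj t s h1 h2 hs.1 hs.2
    apply card_bij (fun g _ => g0 * g)
    · intro g hg
      simp only [mem_filter, mem_univ, true_and] at hg ⊢
      rw [mul_assoc g0, hg, ← hg0]
      group
    · intro a _ b _ h
      exact mul_left_cancel h
    · intro b hb
      simp only [mem_filter, mem_univ, true_and] at hb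
      refine ⟨g0⁻¹ * b, ?_, by group⟩
      simp only [mem_filter, mem_univ, true_and]
      have h3 : g0 * t * g0⁻¹ = b * t * b⁻¹ := hg0.trans hb.symm
      have h4 : t = g0⁻¹ * (b * t * b⁻¹) * g0 := by rw [← h3]; group
      conv_rhs => rw [h4]
      group
  · intro g _
    simp only [coe_filter, mem_univ, true_and, Set.mem_ofPred_eq]
    constructor
    · intro h
      apply h1
      have : t = g⁻¹ * (g * t * g⁻¹) * g := by group
      rw [this, h]; group
    · have : g * t * g⁻¹ * (g * t * g⁻¹) = g * (t * t) * g⁻¹ := by group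
      rw [this, h2]; group

/-- There are not enough elements for the products of two involutions if distinct involutions have
disjoint centralisers which contain none of these products. -/
theorem countB {D : Type*} [Group D] [Finite D]
    (hconj : ∀ s t : D, s ≠ 1 → s * s = 1 → t ≠ 1 → t * t = 1 → ∃ g, g * s * g⁻¹ = t)
    (htwo : ∃ s t : D, s ≠ 1 ∧ s * s = 1 ∧ t ≠ 1 ∧ t * t = 1 ∧ s ≠ t)
    (hC : ∀ s t g : D, s ≠ 1 → s * s = 1 → t ≠ 1 → t * t = 1 → s ≠ t → g * s = s * g → g * t = t * g →
      g = 1)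
    (hN : ∀ r s t : D, r ≠ 1 → r * r = 1 → s ≠ 1 → s * s = 1 → t ≠ 1 → t * t = 1 → s ≠ t →
      (s * t) * r ≠ r * (s * t))
    (hM : ∀ s t : D, s ≠ 1 → s * s = 1 → t ≠ 1 → t * t = 1 → s ≠ t →
      ∃ r, r ≠ 1 ∧ r * r = 1 ∧ (r * (s * t)) * (r * (s * t)) ≠ 1) : False := by
  have := Fintype.ofFinite D
  set T : Finset D := univ.filter fun t => t ≠ 1 ∧ t * t = 1 with hT
  have memT : ∀ t, t ∈ T ↔ t ≠ 1 ∧ t * t = 1 := by simp [hT]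
  set W : Finset D := T.offDiag.image fun s => s.1 * s.2 with hW
  obtain ⟨s0, t0, hs0, hs0', ht0, ht0', hst⟩ := htwo
  have hs0T : s0 ∈ T := (memT _).mpr ⟨hs0, hs0'⟩
  have ht0T : t0 ∈ T := (memT _).mpr ⟨ht0, ht0'⟩
  have hv : 2 ≤ T.card := by
    rw [← card_pair hst]
    apply card_le_card
    intro x hx
    simp only [mem_insert, mem_singleton] at hx
    rcases hx with rfl | rfl <;> assumption
  set k := (univ.filter fun g : D => g * t0 = t0 * g).card with hk
  have hcl : ∀ t ∈ T, (univ.filter fun g : D => g * t = t * g).card = k := by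
    intro t ht
    have h1 := card_class hconj ((memT t).mp ht).1 ((memT t).mp ht).2
    have h2 := card_class hconj ht0 ht0'
    rw [← h2] at h1
    exact Nat.eq_of_mul_eq_mul_left (by change 0 < T.card; omega) h1
  set E : Finset D := T.biUnion fun t => (univ.filter fun g : D => g * t = t * g).erase 1 with hE
  have hEc : E.card = T.card * (k - 1) := by
    rw [hE, card_biUnion]
    · rw [← smul_eq_mul, ← sum_const]
      apply sum_congr rfl
      intro t ht
      rw [card_erase_of_mem (by simp), hcl t ht]
    · intro s hs t ht hne
      rw [Function.onFun, disjoint_left]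
      intro g hg hg'
      simp only [mem_erase, mem_filter, mem_univ, true_and] at hg hg'
      have a := (memT s).mp hs
      have b := (memT t).mp ht
      exact hg.1 (hC s t g a.1 a.2 b.1 b.2 hne hg.2 hg'.2)
  have hcard : 1 + E.card + W.card ≤ Fintype.card D := by
    have d1 : Disjoint {1} E := by
      rw [disjoint_singleton_left, hE]; simp
    have d2 : Disjoint ({1} ∪ E) W := by
      rw [disjoint_right]
      intro g hg hg'
      simp only [hW, mem_image, mem_offDiag] at hg
      obtain ⟨⟨s, t⟩, ⟨hs, ht, hne⟩, rfl⟩ := hg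
      have a := (memT s).mp hs
      have b := (memT t).mp ht
      simp only [mem_union, mem_singleton, hE, mem_biUnion, mem_erase, mem_filter, mem_univ,
        true_and] at hg'
      rcases hg' with h | ⟨r, hr, -, h⟩
      · apply hne
        dsimp only at *
        rw [eq_inv_of_mul_eq_one_left h]
        exact inv_eq_of_mul_eq_one_left b.2
      · have c := (memT r).mp hr
        exact hN r s t c.1 c.2 a.1 a.2 b.1 b.2 hne h
    rw [← card_univ, ← card_singleton (1 : D), ← card_union_of_disjoint d1,
      ← card_union_of_disjoint d2]
    exact card_le_card (subset_univ _)
  have hWc : T.offDiag.card ≤ W.card * (T.card - 1) := by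
    rw [card_eq_sum_card_image (fun s : D × D => s.1 * s.2), ← smul_eq_mul, ← sum_const]
    apply sum_le_sum
    intro w hw
    simp only [mem_image, mem_offDiag] at hw
    obtain ⟨⟨s, t⟩, ⟨hs, ht, hne⟩, rfl⟩ := hw
    have a := (memT s).mp hs
    have b := (memT t).mp ht
    obtain ⟨r, hr1, hr2, hr3⟩ := hM s t a.1 a.2 b.1 b.2 hne
    rw [← card_erase_of_mem ((memT r).mpr ⟨hr1, hr2⟩)]
    apply card_le_card_of_injOn (fun x => x.1)
    · rintro ⟨x, y⟩ hx
      simp only [coe_filter, Set.mem_ofPred_eq, mem_offDiag] at hx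
      have hxx := (memT x).mp hx.1.1
      have hyy := (memT y).mp hx.1.2.1
      simp only [coe_erase, Set.mem_sdiff, mem_coe, Set.mem_singleton_iff]
      refine ⟨hx.1.1, ?_⟩
      rintro rfl
      apply hr3
      dsimp only at *
      have e : x * (s * t) = y := by rw [← hx.2, ← mul_assoc, hxx.2, one_mul]
      rw [e, hyy.2]
    · rintro ⟨x, y⟩ hx ⟨x', y'⟩ hx' h
      simp only [coe_filter, Set.mem_ofPred_eq, mem_offDiag] at hx hx' h
      subst h
      have := mul_left_cancel (hx.2.trans hx'.2.symm)
      rw [this]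
  have hk1 : 1 ≤ k := by
    rw [hk, Nat.one_le_iff_ne_zero, Ne, card_eq_zero, ← Ne, ← nonempty_iff_ne_empty]
    exact ⟨1, by simp⟩
  rw [← card_class hconj ht0 ht0', hEc] at hcard
  change 1 + T.card * (k - 1) + W.card ≤ T.card * k at hcard
  rw [offDiag_card, ← Nat.mul_sub_one] at hWc
  have h1 := Nat.le_of_mul_le_mul_right hWc (by omega)
  obtain ⟨k', hk'⟩ : ∃ k', k = k' + 1 := ⟨k - 1, by omega⟩
  rw [hk', Nat.add_sub_cancel, mul_add] at hcard
  omega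

/-- If all involutions are conjugate and self-centralising, the other elements form an
abelian subgroup inverted by the involutions. -/
theorem countC {D : Type*} [Group D] [Finite D]
    (hconj : ∀ s t : D, s ≠ 1 → s * s = 1 → t ≠ 1 → t * t = 1 → ∃ g, g * s * g⁻¹ = t)
    (hC : ∀ s g : D, s ≠ 1 → s * s = 1 → g * s = s * g → g = 1 ∨ g = s)
    {s : D} (hs : s ≠ 1) (hs' : s * s = 1) :
    (∀ g h : D, g * g ≠ 1 → h * h ≠ 1 → g * h = h * g) ∧
      ∀ g : D, g * g ≠ 1 → s * g * s = g⁻¹ := by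
  have := Fintype.ofFinite D
  set T : Finset D := univ.filter fun t => t ≠ 1 ∧ t * t = 1 with hT
  have memT : ∀ t, t ∈ T ↔ t ≠ 1 ∧ t * t = 1 := by simp [hT]
  have hk : ∀ t ∈ T, (univ.filter fun g : D => g * t = t * g).card = 2 := by
    intro t ht
    have : (univ.filter fun g : D => g * t = t * g) = {1, t} := by
      ext g
      simp only [mem_filter, mem_univ, true_and, mem_insert, mem_singleton]
      constructor
      · exact hC t g ((memT t).mp ht).1 ((memT t).mp ht).2
      · rintro (rfl | rfl) <;> simp
    rw [this, card_pair ((memT t).mp ht).1.symm]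
  have hsT : s ∈ T := (memT s).mpr ⟨hs, hs'⟩
  have hcard := card_class hconj hs hs'
  rw [hk s hsT] at hcard
  change T.card * 2 = _ at hcard
  have hnot : ∀ a ∈ T, ∀ b ∈ T, a * b ∉ T := by
    intro a ha b hb hab
    have a' := (memT a).mp ha
    have b' := (memT b).mp hb
    have c' := (memT _).mp hab
    have hcomm : b * a = a * b := by
      rw [← inv_eq_of_mul_eq_one_left c'.2, mul_inv_rev, inv_eq_of_mul_eq_one_left a'.2,
        inv_eq_of_mul_eq_one_left b'.2]
    rcases hC a b a'.1 a'.2 hcomm with h | h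
    · exact b'.1 h
    · exact c'.1 (by rw [h, a'.2])
  have hcov : ∀ a ∈ T, ∀ g, g ∉ T → ∃ b ∈ T, g = a * b := by
    intro a ha g hg
    have hsub : T.image (fun b => a * b) ⊆ Tᶜ := by
      intro x hx
      simp only [mem_image] at hx
      obtain ⟨b, hb, rfl⟩ := hx
      rw [mem_compl]
      exact hnot a ha b hb
    have heq := eq_of_subset_of_card_le hsub (by
      rw [card_image_of_injective _ (mul_right_injective a), card_compl, ← hcard]; omega)
    have : g ∈ T.image (fun b => a * b) := by rw [heq, mem_compl]; exact hg
    simp only [mem_image] at this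
    obtain ⟨b, hb, rfl⟩ := this
    exact ⟨b, hb, rfl⟩
  have hinv : ∀ a ∈ T, ∀ g, g ∉ T → a * g * a = g⁻¹ := by
    intro a ha g hg
    obtain ⟨b, hb, rfl⟩ := hcov a ha g hg
    have a' := (memT a).mp ha
    have b' := (memT b).mp hb
    rw [mul_inv_rev, inv_eq_of_mul_eq_one_left a'.2, inv_eq_of_mul_eq_one_left b'.2, ← mul_assoc,
      a'.2, one_mul]
  refine ⟨fun g h hg hh => ?_, fun g hg => hinv s hsT g (fun h => hg ((memT g).mp h).2)⟩
  have hg' : g ∉ T := fun h => hg ((memT g).mp h).2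
  have hh' : h ∉ T := fun h' => hh ((memT h).mp h').2
  have hgh : g * h ∉ T := by
    obtain ⟨t, ht, rfl⟩ := hcov s hsT g hg'
    obtain ⟨t', ht', rfl⟩ := hcov t ht h hh'
    have : s * t * (t * t') = s * t' := by
      rw [mul_assoc, ← mul_assoc t, ((memT t).mp ht).2, one_mul]
    rw [this]
    exact hnot s hsT t' ht'
  have e := hinv s hsT _ hgh
  have e1 : s * (g * h) * s = (s * g * s) * (s * h * s) := by
    have : (s * g * s) * (s * h * s) = s * g * (s * s) * h * s := by group
    rw [this, hs', mul_one]; group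
  rw [e1, hinv s hsT g hg', hinv s hsT h hh', ← mul_inv_rev] at e
  exact (inv_injective e).symm

end counting

/-! ### Transvections inside a subgroup -/

section inside

variable {F : Type*} [Field F] [StarRing F] [CharP F 2]

/-- The line spanned by a vector. -/
def ln (p : V F) : Set (V F) := {x | ∃ a : F, x = a • p}

theorem ln_ug (g : UG F) (p : V F) : g • ln p = ln (g • p) := by
  ext x
  rw [Set.mem_smul_set]
  constructor
  · rintro ⟨y, ⟨a, rfl⟩, rfl⟩
    exact ⟨a, ug_smul g a p⟩
  · rintro ⟨a, rfl⟩
    exact ⟨a • p, ⟨a, rfl⟩, ug_smul g a p⟩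

theorem mem_ln (p : V F) : p ∈ ln p := ⟨1, (one_smul _ _).symm⟩

theorem ln_smul {a : F} (ha : a ≠ 0) (p : V F) : ln (a • p) = ln p := by
  ext x
  constructor
  · rintro ⟨b, rfl⟩
    exact ⟨b * a, smul_smul b a p⟩
  · rintro ⟨b, rfl⟩
    exact ⟨b * a⁻¹, by rw [smul_smul, inv_mul_cancel_right₀ ha]⟩

theorem ln_eq {p r : V F} (hp : p ≠ 0) (h : ln p = ln r) : ∃ a : F, a ≠ 0 ∧ p = a • r := by
  obtain ⟨a, ha⟩ : p ∈ ln r := h ▸ mem_ln p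
  exact ⟨a, by rintro rfl; exact hp (by rw [ha, zero_smul]), ha⟩

/-- The nonzero isotropic vectors whose transvection lies in `K`. -/
def InI (K : Subgroup (UG F)) (p : V F) : Prop := p ≠ 0 ∧ hf p p = 0 ∧ tv p ∈ K

theorem InI.ug {K : Subgroup (UG F)} {p : V F} (h : InI K p) {g : UG F} (hg : g ∈ K) :
    InI K (g • p) :=
  ⟨ug_ne h.1, iso_ug h.2.1 g, by
    rw [← tv_conj h.2.1]; exact K.mul_mem (K.mul_mem hg h.2.2) (K.inv_mem hg)⟩

theorem InI.unit {K : Subgroup (UG F)} {p : V F} (h : InI K p) {u : F} (hu : u * star u = 1) :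
    InI K (u • p) :=
  ⟨smul_ne_zero (unit_ne hu) h.1, iso_smul h.2.1 u, by rw [tv_unit h.2.1 hu]; exact h.2.2⟩

/-- Membership is invariant under scaling by norm one elements. -/
theorem InI.of_unit {K : Subgroup (UG F)} {p : V F} {u : F} (hu : u * star u = 1)
    (h : InI K (u • p)) : InI K p := by
  have := h.unit (unit_star hu)
  rwa [smul_smul, mul_comm, hu, one_smul] at this

theorem InI.smul {K : Subgroup (UG F)} {p : V F} (h : InI K p) {c : F} (hc0 : c ≠ 0)
    (hc : tv (c • p) ∈ K) : InI K (c • p) :=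
  ⟨smul_ne_zero hc0 h.1, iso_smul h.2.1 c, hc⟩

section
variable [UFld F] [Finite F]

/-- The elements of the fixed field by which the vectors of transvections in `K` may be multiplied. -/
def InC (K : Subgroup (UG F)) (c : F) : Prop := star c = c ∧ ∀ p, InI K p → tv (c • p) ∈ K

/-- If some two vectors of transvections in `K` are not orthogonal, none of them is orthogonal to all
others, since orthogonality of isotropic vectors is proportionality. -/
theorem exists_nonorth {K : Subgroup (UG F)} (hK : ∃ p r, InI K p ∧ InI K r ∧ hf p r ≠ 0) {p : V F}
    (hp : InI K p) : ∃ s, InI K s ∧ hf p s ≠ 0 := by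
  obtain ⟨a, b, ha, hb, hab⟩ := hK
  by_contra! hc
  obtain ⟨x, hx⟩ := iso_par hp.2.1 ha.2.1 hp.1 (hf_symm_zero (hc a ha))
  obtain ⟨y, hy⟩ := iso_par hp.2.1 hb.2.1 hp.1 (hf_symm_zero (hc b hb))
  apply hab
  rw [hx, hy, hf_smul_left, hf_smul_right, hp.2.1]; ring

/-- Nonorthogonal transvections of `K` are conjugate in `K`, so a scalar which works for one centre
works for all. -/
theorem InC.of_one {K : Subgroup (UG F)} (hK : ∃ p r, InI K p ∧ InI K r ∧ hf p r ≠ 0) {p : V F}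
    (hp : InI K p) {c : F} (hc : star c = c) (h : tv (c • p) ∈ K) : InC K c := by
  refine ⟨hc, ?_⟩
  have key : ∀ p r, InI K p → InI K r → hf p r ≠ 0 → tv (c • p) ∈ K → tv (c • r) ∈ K := by
    intro p r hp hr hpr h
    obtain ⟨g, hg, ⟨u, hu, hgu⟩, -⟩ := tv_conj_in hp.2.1 hr.2.1 hpr hp.2.2 hr.2.2
    have h1 := K.mul_mem (K.mul_mem hg h) (K.inv_mem hg)
    rw [tv_conj (iso_smul hp.2.1 c), ug_smul, hgu, smul_smul, mul_comm, ← smul_smul,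
      tv_unit (iso_smul hr.2.1 c) hu] at h1
    exact h1
  intro r hr
  by_cases hpr : hf p r = 0
  · obtain ⟨s, hs, hps⟩ := exists_nonorth hK hp
    obtain ⟨a, ha0, ha⟩ := iso_par' hp.2.1 hr.2.1 hp.1 hr.1 (hf_symm_zero hpr)
    refine key s r hs hr ?_ (key p s hp hs hps h)
    rw [ha, hf_smul_right, ← hf_star p s]
    exact mul_ne_zero (star_ne_zero.mpr ha0) (star_ne_zero.mpr hps)
  · exact key p r hp hr hpr h

theorem InC.zero (K : Subgroup (UG F)) : InC K 0 :=
  ⟨star_zero _, fun p _ => by rw [zero_smul, tv_zero]; exact K.one_mem⟩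
theorem InC.one (K : Subgroup (UG F)) : InC K 1 :=
  ⟨star_one _, fun p hp => by rw [one_smul]; exact hp.2.2⟩
theorem InC.add {K : Subgroup (UG F)} {c d : F} (hc : InC K c) (hd : InC K d) : InC K (c + d) :=
  ⟨fix_add hc.1 hd.1, fun p hp => by
    rw [← tv_mul hp.2.1 hc.1 hd.1]; exact K.mul_mem (hc.2 p hp) (hd.2 p hp)⟩
theorem InC.mul {K : Subgroup (UG F)} {c d : F} (hc : InC K c) (hd : InC K d) : InC K (c * d) :=
  ⟨fix_mul hc.1 hd.1, fun p hp => by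
    by_cases h : d = 0
    · rw [h, mul_zero, zero_smul, tv_zero]; exact K.one_mem
    · rw [← smul_smul]
      exact hc.2 _ (hp.smul h (hd.2 p hp))⟩
theorem InC.pow {K : Subgroup (UG F)} {c : F} (hc : InC K c) (n : ℕ) : InC K (c ^ n) := by
  induction n with
  | zero => rw [pow_zero]; exact InC.one K
  | succ n ih => rw [pow_succ]; exact ih.mul hc
theorem InC.inv {K : Subgroup (UG F)} {c : F} (hc : InC K c) : InC K c⁻¹ := by
  by_cases h : c = 0
  · rw [h, inv_zero]; exact InC.zero K
  · have := Fintype.ofFinite F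
    have h1 := FiniteField.pow_card_sub_one_eq_one c h
    obtain ⟨m, hm⟩ : ∃ m, Fintype.card F - 1 = m + 1 :=
      ⟨Fintype.card F - 2, by have := Fintype.one_lt_card (α := F); omega⟩
    rw [hm, pow_succ] at h1
    rw [inv_eq_of_mul_eq_one_left h1]
    exact hc.pow m

/-- The subfield formed by the elements which scale the transvections in `K`. -/
def CK (K : Subgroup (UG F)) : Subfield F where
  carrier := {c | InC K c}
  mul_mem' := InC.mul
  one_mem' := InC.one K
  add_mem' := InC.add
  zero_mem' := InC.zero K
  neg_mem' := by
    intro x hx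
    have : -x = x := CharTwo.neg_eq x
    rw [Set.mem_ofPred_eq, this]; exact hx
  inv_mem' := fun _ hx => InC.inv hx

theorem mem_CK {K : Subgroup (UG F)} {c : F} : c ∈ CK K ↔ InC K c := Iff.rfl

omit [UFld F] [StarRing F] in
theorem subfield_sqrt (C : Subfield F) {d : F} (h : d * d ∈ C) : d ∈ C := by
  have : Function.Surjective (fun x : C => x * x) := by
    apply Finite.surjective_of_injective
    intro x y hxy
    have hxy' : (x : F) * x = y * y := congrArg Subtype.val hxy
    apply Subtype.ext
    have h1 : ((x : F) + y) * (x + y) = 0 := by grind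
    have h2 := mul_self_eq_zero.mp h1
    grind
  obtain ⟨e, he⟩ := this ⟨d * d, h⟩
  have he' : (e : F) * e = d * d := congrArg Subtype.val he
  have h1 : ((e : F) + d) * (e + d) = 0 := by grind
  have h2 : (e : F) + d = 0 := mul_self_eq_zero.mp h1
  have : d = e := by grind
  rw [this]; exact e.2

/-- The norm of a scalar between two vectors of transvections in `K` lies in the subfield. -/
theorem InC.norm {K : Subgroup (UG F)} (hK : ∃ p r, InI K p ∧ InI K r ∧ hf p r ≠ 0) {p : V F}
    (hp : InI K p) {l : F} (h : InI K (l • p)) : InC K (l * star l) := by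
  have hl : l ≠ 0 := by rintro rfl; exact h.1 (zero_smul _ _)
  obtain ⟨d, hd, hdd⟩ := UFld.sqrt _ (fix_norm l)
  have hd0 : d ≠ 0 := by rintro rfl; apply hl; apply norm_zero; rw [← hdd]; ring
  have hu : (l * d⁻¹) * star (l * d⁻¹) = 1 := by
    rw [star_mul', star_inv₀, hd]
    have : l * d⁻¹ * (star l * d⁻¹) = (l * star l) * (d * d)⁻¹ := by rw [mul_inv]; ring
    rw [this, ← hdd, mul_inv_cancel₀ (mul_ne_zero hd0 hd0)]
  have h1 : InI K (d • p) := by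
    apply InI.of_unit hu
    rwa [smul_smul, inv_mul_cancel_right₀ hd0]
  rw [← hdd]
  exact (InC.of_one hK hp hd h1.2.2).mul (InC.of_one hK hp hd h1.2.2)

/-- A scalar whose norm lies in the subfield preserves the vectors of transvections in `K`. -/
theorem InI.smul_norm {K : Subgroup (UG F)} {p : V F} (hp : InI K p) {l : F} (hl : l ≠ 0)
    (h : InC K (l * star l)) : InI K (l • p) := by
  obtain ⟨d, hd, hdd⟩ := UFld.sqrt _ (fix_norm l)
  have hd0 : d ≠ 0 := by rintro rfl; apply hl; apply norm_zero; rw [← hdd]; ring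
  have hu : (l * d⁻¹) * star (l * d⁻¹) = 1 := by
    rw [star_mul', star_inv₀, hd]
    have : l * d⁻¹ * (star l * d⁻¹) = (l * star l) * (d * d)⁻¹ := by rw [mul_inv]; ring
    rw [this, ← hdd, mul_inv_cancel₀ (mul_ne_zero hd0 hd0)]
  have hdC : InC K d := subfield_sqrt (CK K) (by rw [mem_CK, hdd]; exact h)
  have := (hp.smul hd0 (hdC.2 p hp)).unit hu
  rwa [smul_smul, inv_mul_cancel_right₀ hd0] at this

end

end inside

/-! ### Transvections in a plane -/

section plane

variable {F : Type*} [Field F] [StarRing F] [CharP F 2] [UFld F]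

/-- A scalar may be replaced by the square root of its norm, which lies in the fixed field, without
changing the transvection. -/
theorem norm_sqrt {l : F} (hl : l ≠ 0) : ∃ d : F, star d = d ∧ d ≠ 0 ∧ d * d = l * star l ∧
    ∀ p : V F, hf p p = 0 → tv (l • p) = tv (d • p) := by
  obtain ⟨d, hd, hdd⟩ := UFld.sqrt _ (fix_norm l)
  have hd0 : d ≠ 0 := by rintro rfl; apply hl; apply norm_zero; rw [← hdd]; ring
  refine ⟨d, hd, hd0, hdd, fun p hp => ?_⟩
  have hu : (l * d⁻¹) * star (l * d⁻¹) = 1 := by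
    rw [star_mul', star_inv₀, hd]
    have : l * d⁻¹ * (star l * d⁻¹) = (l * star l) * (d * d)⁻¹ := by rw [mul_inv]; ring
    rw [this, ← hdd, mul_inv_cancel₀ (mul_ne_zero hd0 hd0)]
  rw [← tv_unit (iso_smul hp d) hu, smul_smul, inv_mul_cancel_right₀ hd0]

/-- Distinct elements of the fixed field give distinct transvections with a given centre. -/
theorem tv_inj_fix {p : V F} (hp : hf p p = 0) (hp0 : p ≠ 0) {c d : F} (hc : star c = c)
    (hd : star d = d) (h : tv (c • p) = tv (d • p)) : c = d := by
  have h1 := tv_mul hp hc hd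
  rw [h, tv_mul_self (iso_smul hp d)] at h1
  by_contra hne
  have h2 : c + d ≠ 0 := by intro h3; apply hne; grind
  exact tv_ne_one (iso_smul hp (c + d)) (smul_ne_zero h2 hp0) h1.symm

/-- An element which fixes `z` and the line of the isotropic vector `w` is upper triangular with
entries in the fixed field. -/
theorem stab_form {w z r : V F} (h : HB w z r) {g : UG F} (hz : g • z = z) {m : F}
    (hw : g • w = m • w) :
    star m = m ∧ m ≠ 0 ∧ ∃ a : F, star a = a ∧ g • r = a • w + m⁻¹ • r := by
  have hm : m ≠ 0 := by
    rintro rfl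
    rw [zero_smul] at hw
    exact ug_ne h.pne hw
  have e1 := h.exp (g • r)
  have e2 : hf (g • r) z = 0 := by
    have := ug_hf g r z
    rwa [hz, h.rz] at this
  have e3 : hf (g • r) w * star m = 1 := by
    have := ug_hf g r w
    rw [hw, hf_smul_right, h.rp] at this
    rw [mul_comm]; exact this
  rw [e2, zero_smul, add_zero] at e1
  set a := hf (g • r) r
  set e := hf (g • r) w
  have hv : vol z w r ≠ 0 := by
    intro hv
    obtain ⟨l, hl, hzl⟩ := h.ug_pole
    have h1 := h.zz
    rw [hzl, hf_smul_right, hf_pole, ← hzl, hv, mul_zero] at h1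
    exact zero_ne_one h1
  have e4 : m * e = 1 := by
    have h1 := ug_vol g z w r
    rw [hz, hw, e1] at h1
    have h2 : vol z (m • w) (a • w + e • r) = (m * e) * vol z w r := by
      simp only [vol, V.add_apply, V.smul_apply]; grind
    rw [h2] at h1
    exact mul_right_cancel₀ hv (h1.trans (one_mul _).symm)
  have he : e = m⁻¹ := eq_inv_of_mul_eq_one_right e4
  have e5 : star m = m := by
    have : star m = e⁻¹ := eq_inv_of_mul_eq_one_right e3
    rw [this, he, inv_inv]
  refine ⟨e5, hm, a, ?_, by rw [← he]; exact e1⟩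
  have h1 := ug_hf g r r
  rw [h.rr, e1, he] at h1
  simp only [hf_add_left, hf_add_right, hf_smul_left, hf_smul_right, h.pp, h.rr, h.pr, h.rp,
    star_inv₀, e5] at h1
  have h2 : m⁻¹ * (a + star a) = 0 := by grind
  have h3 := (mul_eq_zero.mp h2).resolve_left (inv_ne_zero hm)
  grind

variable [Finite F]

/-- The vectors `p` of transvections in `K` which fix `z`. -/
def Pt (K : Subgroup (UG F)) (z p : V F) : Prop := InI K p ∧ hf p z = 0

theorem Pt.hb {K : Subgroup (UG F)} {z w w' : V F} (hz : hf z z = 1) (h : Pt K z w) (h' : Pt K z w')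
    (hne : hf w w' ≠ 0) : HB w z ((star (hf w w'))⁻¹ • w') where
  pp := h.1.2.1
  rr := iso_smul h'.1.2.1 _
  zz := hz
  pr := by rw [hf_smul_right, star_inv₀, star_star, inv_mul_cancel₀ hne]
  pz := h.2
  rz := by rw [hf_smul_left, h'.2, mul_zero]

theorem Pt.ug {K : Subgroup (UG F)} {z w : V F} (h : Pt K z w) {g : UG F} (hg : g ∈ K)
    (hz : g • z = z) : Pt K z (g • w) :=
  ⟨h.1.ug hg, by have := ug_hf g w z; rwa [hz, h.2] at this⟩

theorem Pt.ln_ne {K : Subgroup (UG F)} {z w w' : V F} (h : Pt K z w) (h' : Pt K z w')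
    (hne : ln w ≠ ln w') : hf w w' ≠ 0 := by
  intro h0
  obtain ⟨a, ha, ha'⟩ := iso_par' h'.1.2.1 h.1.2.1 h'.1.1 h.1.1 h0
  rw [ha', ln_smul ha] at hne
  exact hne rfl

theorem Pt.ln_ne' {K : Subgroup (UG F)} {z w w' : V F} (h : Pt K z w)
    (hne : hf w w' ≠ 0) : ln w ≠ ln w' := by
  intro h0
  obtain ⟨a, ha, ha'⟩ := ln_eq h.1.1 h0
  have := h.1.2.1
  rw [ha', hf_smul_left, hf_smul_right, ← mul_assoc] at this
  apply hne
  rw [ha', hf_smul_left]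
  rcases mul_eq_zero.mp this with h | h
  · exact absurd (norm_zero h) ha
  · rw [h, mul_zero]

/-- The elements of `K` which fix `z` and `w` are transvections `tv (c • w)` with `c` in `CK K`. -/
theorem unip_in {K : Subgroup (UG F)} (hK : ∃ p r, InI K p ∧ InI K r ∧ hf p r ≠ 0) {w z r : V F}
    (h : HB w z r) (hw : InI K w) {g : UG F} (hg : g ∈ K) (hz : g • z = z) (hgw : g • w = w) :
    ∃ c, InC K c ∧ g = tv (c • w) := by
  obtain ⟨-, -, a, ha, har⟩ := stab_form h hz (m := 1) (by rw [hgw, one_smul])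
  obtain ⟨c, hc, hcc⟩ := UFld.sqrt a ha
  have e : g = tv (c • w) := by
    apply h.ug_eq
    · rw [hgw, tv_fix (iso_smul h.pp c)]
      rw [hf_smul_right, h.pp, mul_zero]
    · rw [har, tv_csmul h.pp, h.rp, hc, hcc, inv_one, one_smul, mul_one, add_comm]
  exact ⟨c, InC.of_one hK hw hc (e ▸ hg), e⟩

/-- Scaling by a nonzero element of `CK K` is realised on `w` by an element of `K` fixing `z`: `tv w'`
conjugates to both `tv w` and `tv (m • w)`. -/
theorem torus_in {K : Subgroup (UG F)} {z w w' : V F} (hzz : hf z z = 1) (h : Pt K z w)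
    (h' : Pt K z w') (hne : hf w w' ≠ 0) {m : F} (hm : InC K m) (hm0 : m ≠ 0) :
    ∃ g ∈ K, g • z = z ∧ g • w = m • w := by
  have hmw : InI K (m • w) := h.1.smul hm0 (hm.2 w h.1)
  obtain ⟨g, hg, ⟨u, hu, hgu⟩, hgz⟩ := tv_conj_in h.1.2.1 h'.1.2.1 hne h.1.2.2 h'.1.2.2
  obtain ⟨k, hk, ⟨v, hv, hkv⟩, hkz⟩ := tv_conj_in h'.1.2.1 hmw.2.1 (by
    rw [hf_smul_right, ← hf_star w w']
    exact mul_ne_zero (star_ne_zero.mpr hm0) (star_ne_zero.mpr hne)) h'.1.2.2 hmw.2.2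
  have e1 : g • z = z := hgz z (hf_symm_zero h.2) (hf_symm_zero h'.2)
  have e2 : k • z = z := hkz z (hf_symm_zero h'.2) (by
    rw [hf_smul_right, hf_symm_zero h.2, mul_zero])
  have e3 : (k * g) • z = z := by rw [mul_smul, e1, e2]
  have e4 : (k * g) • w = (u * v * m) • w := by
    rw [mul_smul, hgu, ug_smul, hkv, smul_smul, smul_smul, mul_assoc]
  have e5 := (stab_form (Pt.hb hzz h h' hne) e3 e4).1
  have huv := unit_mul hu hv
  have e6 : star (u * v) = u * v := by
    rw [star_mul', hm.1] at e5
    exact mul_right_cancel₀ hm0 e5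
  rw [fix_unit e6 huv, one_mul] at e4
  exact ⟨k * g, K.mul_mem hk hg, e3, e4⟩

/-- The stabiliser of `z` and of the line of `w` in `K` acts on `w` through `CK K`. -/
theorem stab_scalar {K : Subgroup (UG F)} {z w w' : V F}
    (hzz : hf z z = 1) (h : Pt K z w) (h' : Pt K z w') (hne : hf w w' ≠ 0) {g : UG F} (hg : g ∈ K)
    (hz : g • z = z) (hl : g • ln w = ln w) :
    ∃ m, m ≠ 0 ∧ InC K m ∧ g • w = m • w := by
  rw [ln_ug] at hl
  obtain ⟨m, hm0, hm⟩ := ln_eq (ug_ne h.1.1) hl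
  have h1 := (stab_form (Pt.hb hzz h h' hne) hz hm).1
  refine ⟨m, hm0, ?_, hm⟩
  have h2 := h.1.ug hg
  rw [hm] at h2
  exact InC.of_one ⟨w, w', h.1, h'.1, hne⟩ h.1 h1 h2.2.2

/-- The stabiliser of a vector `z` in `K`. -/
noncomputable def DK (K : Subgroup (UG F)) (z : V F) : Subgroup (UG F) := K ⊓ MulAction.stabilizer (UG F) z

theorem mem_DK {K : Subgroup (UG F)} {z : V F} {g : UG F} : g ∈ DK K z ↔ g ∈ K ∧ g • z = z :=
  Iff.rfl

/-- A point stabiliser is a semidirect product of the transvections `tv (c • w)`, `c ∈ CK K`, by a group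
isomorphic to the multiplicative group of `CK K`. -/
theorem card_stab_pt {K : Subgroup (UG F)} {z w w' : V F} (hzz : hf z z = 1) (h : Pt K z w)
    (h' : Pt K z w') (hne : hf w w' ≠ 0) :
    Nat.card {g : DK K z // g • ln w = ln w} = Nat.card (CK K) * (Nat.card (CK K) - 1) := by
  have hK : ∃ p r, InI K p ∧ InI K r ∧ hf p r ≠ 0 := ⟨w, w', h.1, h'.1, hne⟩
  have hb := Pt.hb hzz h h' hne
  choose t ht1 ht2 ht3 using fun m : {m : CK K // m ≠ 0} =>
    torus_in hzz h h' hne (mem_CK.mp m.1.2) (fun h0 => m.2 (Subtype.ext h0))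
  have hu : ∀ c : CK K, tv ((c : F) • w) ∈ K ∧ tv ((c : F) • w) • z = z ∧ tv ((c : F) • w) • w = w := by
    intro c
    refine ⟨c.2.2 w h.1, tv_fix (iso_smul h.1.2.1 _) ?_, tv_fix (iso_smul h.1.2.1 _) ?_⟩
    · rw [hf_smul_right, hf_symm_zero h.2, mul_zero]
    · rw [hf_smul_right, h.1.2.1, mul_zero]
  let f : CK K × {m : CK K // m ≠ 0} → {g : DK K z // g • ln w = ln w} := fun x =>
    ⟨⟨tv ((x.1 : F) • w) * t x.2, mem_DK.mpr ⟨K.mul_mem (hu _).1 (ht1 _), by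
      rw [mul_smul, ht2, (hu _).2.1]⟩⟩, by
      change (tv ((x.1 : F) • w) * t x.2) • ln w = ln w
      rw [ln_ug, mul_smul, ht3, ug_smul, (hu _).2.2, ln_smul]
      exact fun h0 => x.2.2 (Subtype.ext h0)⟩
  have hf' : Function.Bijective f := by
    constructor
    · rintro ⟨c, m⟩ ⟨c', m'⟩ he
      have he' : tv ((c : F) • w) * t m = tv ((c' : F) • w) * t m' :=
        congrArg (fun x => ((x : DK K z) : UG F)) (congrArg Subtype.val he)
      have h1 : (tv ((c : F) • w) * t m) • w = (tv ((c' : F) • w) * t m') • w := by rw [he']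
      rw [mul_smul, mul_smul, ht3, ht3, ug_smul, ug_smul, (hu _).2.2, (hu _).2.2] at h1
      have h2 : m = m' := Subtype.ext (Subtype.ext (smul_left_injective F h.1.1 h1))
      subst h2
      have h3 := mul_right_cancel he'
      have h4 := tv_inj_fix h.1.2.1 h.1.1 c.2.1 c'.2.1 h3
      rw [Subtype.ext h4]
    · rintro ⟨⟨g, hg⟩, hgl⟩
      obtain ⟨m, hm0, hm, hgm⟩ := stab_scalar hzz h h' hne hg.1 hg.2 hgl
      set m' : {m : CK K // m ≠ 0} := ⟨⟨m, hm⟩, fun h0 => hm0 (congrArg Subtype.val h0)⟩ with hm'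
      have e1 : (t m')⁻¹ • w = m⁻¹ • w := by
        apply ug_inv_eq
        rw [ug_smul, ht3, smul_smul, hm']
        exact (congrArg (· • w) (inv_mul_cancel₀ hm0)).trans (one_smul _ _)
      obtain ⟨c, hc, hgc⟩ := unip_in hK hb h.1 (K.mul_mem hg.1 (K.inv_mem (ht1 m'))) (by
        rw [mul_smul, ug_inv_eq (ht2 m')]; exact hg.2) (by
        rw [mul_smul, e1, ug_smul, hgm, smul_smul, inv_mul_cancel₀ hm0, one_smul])
      refine ⟨⟨⟨c, hc⟩, m'⟩, ?_⟩
      apply Subtype.ext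
      apply Subtype.ext
      change tv (c • w) * t m' = g
      rw [← hgc, inv_mul_cancel_right]
  rw [← Nat.card_congr (Equiv.ofBijective f hf'), Nat.card_prod]
  congr 1
  have := Fintype.ofFinite (CK K)
  rw [Nat.card_eq_fintype_card, Nat.card_eq_fintype_card, Fintype.card_subtype_compl,
    Fintype.card_subtype_eq]

end plane

/-! ### Norms of products of transvection vectors -/

section linenorm

variable {F : Type*} [Field F] [StarRing F] [CharP F 2] [UFld F] [Finite F]

theorem Pt.smul {K : Subgroup (UG F)} {z w : V F} (h : Pt K z w) {c : F} (hc0 : c ≠ 0)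
    (hc : tv (c • w) ∈ K) : Pt K z (c • w) :=
  ⟨h.1.smul hc0 hc, by rw [hf_smul_left, h.2, mul_zero]⟩

/-- If `CK K` is larger than the prime field, the number of centres of transvections of `K` in a
hyperbolic plane is at most the number of points of a projective line over `CK K`. -/
theorem card_centres {K : Subgroup (UG F)} {z x y : V F} (hzz : hf z z = 1) (hx : Pt K z x)
    (hy : Pt K z y) (hxy : hf x y ≠ 0) (hQ : 3 ≤ Nat.card (CK K)) (X : Finset (Set (V F)))
    (hX : ∀ L, L ∈ X ↔ ∃ p, Pt K z p ∧ L = ln p) : X.card ≤ Nat.card (CK K) + 1 := by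
  have hK : ∃ p r, InI K p ∧ InI K r ∧ hf p r ≠ 0 := ⟨x, y, hx.1, hy.1, hxy⟩
  have hb := Pt.hb hzz hx hy hxy
  have hother : ∀ w, Pt K z w → ∃ w', Pt K z w' ∧ hf w w' ≠ 0 := by
    intro w hw
    by_contra! hc
    apply hw.1.1
    apply hb.ext
    · rw [hc x hx, hf_zero_left]
    · rw [hw.2, hf_zero_left]
    · rw [hf_smul_right, hc y hy, hf_zero_left, mul_zero]
  have hcen : ∀ t : DK K z, t ≠ 1 → t * t = 1 → ∃ q, Pt K z q ∧ (t : UG F) = tv q := by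
    intro t h1 h2
    obtain ⟨q, hq0, hqq, hq⟩ := inv_is_tv (g := (t : UG F)) (fun h => h1 (Subtype.ext h))
      (congrArg Subtype.val h2)
    refine ⟨q, ⟨⟨hq0, hqq, hq ▸ t.2.1⟩, ?_⟩, hq⟩
    have h3 := (mem_DK.mp t.2).2
    rw [hq, tv_smul hqq] at h3
    have h4 : hf z q • q = 0 := by
      have : z + hf z q • q + z = 0 := by rw [h3, add_selfV]
      rw [add_right_comm, add_selfV, zero_add] at this
      exact this
    exact hf_symm_zero ((smul_eq_zero.mp h4).resolve_right hq0)
  let c : DK K z → Set (V F) := fun t =>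
    if h : ∃ q, Pt K z q ∧ (t : UG F) = tv q then ln h.choose else ∅
  have hcq : ∀ t : DK K z, ∀ q, Pt K z q → (t : UG F) = tv q → c t = ln q := by
    intro t q hq ht
    have h : ∃ q, Pt K z q ∧ (t : UG F) = tv q := ⟨q, hq, ht⟩
    have e : c t = ln h.choose := dif_pos h
    obtain ⟨h1, h2⟩ := h.choose_spec
    obtain ⟨u, hu, hu'⟩ := tv_eq h1.1.2.1 hq.1.2.1 h1.1.1 (h2.symm.trans ht)
    rw [e, hu', ln_smul (unit_ne hu)]
  have tvD : ∀ q, Pt K z q → tv q ∈ DK K z := fun q hq =>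
    mem_DK.mpr ⟨hq.1.2.2, tv_fix hq.1.2.1 (hf_symm_zero hq.2)⟩
  apply countA (D := DK K z) X (Nat.card (CK K)) hQ c
  · intro t h1 h2
    obtain ⟨q, hq, htq⟩ := hcen t h1 h2
    rw [hcq t q hq htq]
    refine ⟨(hX _).mpr ⟨q, hq, rfl⟩, ?_⟩
    intro L hL
    obtain ⟨w, hw, rfl⟩ := (hX L).mp hL
    change (t : UG F) • ln w = ln w ↔ _
    rw [htq, ln_ug]
    constructor
    · intro h
      by_contra hne
      have h3 := hw.ln_ne hq hne
      obtain ⟨a, ha0, ha⟩ := ln_eq (ug_ne hw.1.1) h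
      have h4 : hf (tv q • w) w = 0 := by rw [ha, hf_smul_left, hw.1.2.1, mul_zero]
      rw [tv_smul hq.1.2.1, hf_add_left, hw.1.2.1, hf_smul_left, zero_add, ← hf_star w q] at h4
      exact h3 (norm_zero h4)
    · intro h
      obtain ⟨a, ha0, ha⟩ := ln_eq hw.1.1 h
      rw [tv_fix hq.1.2.1]
      rw [ha, hf_smul_left, hq.1.2.1, mul_zero]
  · intro g L hL
    obtain ⟨w, hw, rfl⟩ := (hX L).mp hL
    exact (hX _).mpr ⟨(g : UG F) • w, hw.ug g.2.1 g.2.2, ln_ug _ _⟩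
  · intro L hL
    obtain ⟨w, hw, rfl⟩ := (hX L).mp hL
    have hin : ∀ m : {m : CK K // m ≠ 0}, Pt K z ((m.1 : F) • w) := fun m =>
      hw.smul (fun h0 => m.2 (Subtype.ext h0)) (m.1.2.2 w hw.1)
    let f : {m : CK K // m ≠ 0} → {t : DK K z // t ≠ 1 ∧ t * t = 1 ∧ c t = ln w} := fun m =>
      ⟨⟨tv ((m.1 : F) • w), tvD _ (hin m)⟩, fun h => tv_ne_one (hin m).1.2.1 (hin m).1.1
        (congrArg Subtype.val h), Subtype.ext (tv_mul_self (hin m).1.2.1), by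
        rw [hcq _ _ (hin m) rfl, ln_smul (fun h0 => m.2 (Subtype.ext h0))]⟩
    have hf' : Function.Bijective f := by
      constructor
      · intro m m' he
        have he' : tv ((m.1 : F) • w) = tv ((m'.1 : F) • w) :=
          congrArg (fun x => ((x : DK K z) : UG F)) (congrArg Subtype.val he)
        exact Subtype.ext (Subtype.ext (tv_inj_fix hw.1.2.1 hw.1.1 m.1.2.1 m'.1.2.1 he'))
      · rintro ⟨t, h1, h2, h3⟩
        obtain ⟨q, hq, htq⟩ := hcen t h1 h2
        rw [hcq t q hq htq] at h3
        obtain ⟨l, hl0, hl⟩ := ln_eq hq.1.1 h3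
        obtain ⟨d, hd, hd0, -, hdt⟩ := norm_sqrt hl0
        have e : (t : UG F) = tv (d • w) := by rw [htq, hl, hdt w hw.1.2.1]
        have hdC : InC K d := InC.of_one hK hw.1 hd (e ▸ t.2.1)
        exact ⟨⟨⟨d, hdC⟩, fun h0 => hd0 (congrArg Subtype.val h0)⟩,
          Subtype.ext (Subtype.ext e.symm)⟩
    rw [← Nat.card_congr (Equiv.ofBijective f hf')]
    have := Fintype.ofFinite (CK K)
    rw [Nat.card_eq_fintype_card, Nat.card_eq_fintype_card, Fintype.card_subtype_compl,
      Fintype.card_subtype_eq]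
  · intro s t hs1 hs2 ht1 ht2 hst hne
    obtain ⟨a, ha, hsa⟩ := hcen s hs1 hs2
    obtain ⟨b, hb', htb⟩ := hcen t ht1 ht2
    rw [hcq s a ha hsa, hcq t b hb' htb] at hst
    obtain ⟨l, hl0, hl⟩ := ln_eq hb'.1.1 hst.symm
    obtain ⟨d, hd, hd0, -, hdt⟩ := norm_sqrt hl0
    have e : ((s * t : DK K z) : UG F) = tv ((1 + d) • a) := by
      rw [← tv_mul ha.1.2.1 (star_one _) hd, one_smul]
      change (s : UG F) * (t : UG F) = _
      rw [hsa, htb, hl, hdt a ha.1.2.1]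
    have h1 : 1 + d ≠ 0 := by
      intro h0
      apply hne
      apply Subtype.ext
      rw [e, h0, zero_smul, tv_zero]; rfl
    have h2 : Pt K z ((1 + d) • a) := ha.smul h1 (e ▸ (s * t).2.1)
    constructor
    · apply Subtype.ext
      change ((s * t : DK K z) : UG F) * ((s * t : DK K z) : UG F) = 1
      rw [e, tv_mul_self h2.1.2.1]
    · rw [hcq _ _ h2 e, hcq s a ha hsa, ln_smul h1]
  · intro g L1 h1 L2 h2 L3 h3 e1 e2 e3 n12 n13 n23
    obtain ⟨w, hw, rfl⟩ := (hX L1).mp h1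
    obtain ⟨w', hw', rfl⟩ := (hX L2).mp h2
    obtain ⟨v, hv, rfl⟩ := (hX L3).mp h3
    have n12' := hw.ln_ne hw' n12
    have n21' : hf w' w ≠ 0 := by rw [← hf_star]; exact star_ne_zero.mpr n12'
    have n13' := hw.ln_ne hv n13
    have n23' := hw'.ln_ne hv n23
    have hgz := (mem_DK.mp g.2).2
    obtain ⟨m, hm0, hm, hgm⟩ := stab_scalar hzz hw hw' n12' g.2.1 hgz e1
    obtain ⟨m', hm0', hm', hgm'⟩ := stab_scalar hzz hw' hw n21' g.2.1 hgz e2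
    obtain ⟨k, hk0, hk, hgk⟩ := stab_scalar hzz hv hw (by
      rw [← hf_star]; exact star_ne_zero.mpr n13') g.2.1 hgz e3
    have r1 := ug_hf (g : UG F) w w'
    rw [hgm, hgm', hf_smul_left, hf_smul_right, hm'.1] at r1
    have r2 := ug_hf (g : UG F) w v
    rw [hgm, hgk, hf_smul_left, hf_smul_right, hk.1] at r2
    have r3 := ug_hf (g : UG F) w' v
    rw [hgm', hgk, hf_smul_left, hf_smul_right, hk.1] at r3
    have q1 : m * m' = 1 := mul_right_cancel₀ n12' (by rw [one_mul, mul_assoc]; exact r1)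
    have q2 : m * k = 1 := mul_right_cancel₀ n13' (by rw [one_mul, mul_assoc]; exact r2)
    have q3 : m' * k = 1 := mul_right_cancel₀ n23' (by rw [one_mul, mul_assoc]; exact r3)
    have q4 : m' = k := mul_left_cancel₀ hm0 (q1.trans q2.symm)
    rw [q4] at q3
    have q5 : k = 1 := fix_unit hk.1 (by rw [hk.1]; exact q3)
    have q6 : m' = 1 := q4.trans q5
    have q7 : m = 1 := by rw [q6, mul_one] at q1; exact q1
    apply Subtype.ext
    apply (Pt.hb hzz hw hw' n12').ug_eq
    · rw [hgm, q7, one_smul]; exact (one_smul _ _).symm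
    · rw [ug_smul, hgm', q6, one_smul]; exact (one_smul _ _).symm
  · intro L1 h1 L2 h2 n12
    obtain ⟨w, hw, rfl⟩ := (hX L1).mp h1
    obtain ⟨w', hw', rfl⟩ := (hX L2).mp h2
    have n12' := hw.ln_ne hw' n12
    have n21' : hf w' w ≠ 0 := by rw [← hf_star]; exact star_ne_zero.mpr n12'
    choose f hf0 hfC hf1 using fun g : {g : DK K z // g • ln w = ln w ∧ g • ln w' = ln w'} =>
      stab_scalar hzz hw hw' n12' g.1.2.1 g.1.2.2 g.2.1
    choose k hk0 hkC hk1 using fun g : {g : DK K z // g • ln w = ln w ∧ g • ln w' = ln w'} =>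
      stab_scalar hzz hw' hw n21' g.1.2.1 g.1.2.2 g.2.2
    have hfk : ∀ g, f g * k g = 1 := by
      intro g
      have r1 := ug_hf (g.1 : UG F) w w'
      rw [hf1, hk1, hf_smul_left, hf_smul_right, (hkC g).1] at r1
      exact mul_right_cancel₀ n12' (by rw [one_mul, mul_assoc]; exact r1)
    let f' : {g : DK K z // g • ln w = ln w ∧ g • ln w' = ln w'} → {m : CK K // m ≠ 0} := fun g =>
      ⟨⟨f g, hfC g⟩, fun h0 => hf0 g (congrArg Subtype.val h0)⟩
    have hinj : Function.Injective f' := by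
      intro g g' he
      have he' : f g = f g' := congrArg (fun x => ((x : CK K) : F)) (congrArg Subtype.val he)
      have he2 : k g = k g' := mul_left_cancel₀ (hf0 g) (by rw [hfk, he', hfk])
      apply Subtype.ext
      apply Subtype.ext
      apply (Pt.hb hzz hw hw' n12').ug_eq
      · rw [hf1, hf1, he']
      · rw [ug_smul, ug_smul, hk1, hk1, he2]
    refine (Nat.card_le_card_of_injective f' hinj).trans (le_of_eq ?_)
    have := Fintype.ofFinite (CK K)
    rw [Nat.card_eq_fintype_card, Nat.card_eq_fintype_card, Fintype.card_subtype_compl,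
      Fintype.card_subtype_eq]
  · intro L hL
    obtain ⟨w, hw, rfl⟩ := (hX L).mp hL
    obtain ⟨w', hw', hne⟩ := hother w hw
    exact card_stab_pt hzz hw hw' hne
  · have e1 : MulAction.orbit (DK K z) (ln x) = (X : Set (Set (V F))) := by
      ext L
      rw [Finset.mem_coe, hX]
      constructor
      · rintro ⟨g, rfl⟩
        exact ⟨(g : UG F) • x, hx.ug g.2.1 g.2.2, ln_ug _ _⟩
      · rintro ⟨p, hp, rfl⟩
        by_cases hxp : hf x p = 0
        · obtain ⟨a, ha0, ha⟩ := iso_par' hx.1.2.1 hp.1.2.1 hx.1.1 hp.1.1 (hf_symm_zero hxp)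
          rw [ha, ln_smul ha0]
          exact MulAction.mem_orbit_self _
        · obtain ⟨g, hg, ⟨u, hu, hgu⟩, hgz⟩ := tv_conj_in hx.1.2.1 hp.1.2.1 hxp hx.1.2.2 hp.1.2.2
          refine ⟨⟨g, mem_DK.mpr ⟨hg, hgz z (hf_symm_zero hx.2) (hf_symm_zero hp.2)⟩⟩, ?_⟩
          change g • ln x = ln p
          rw [ln_ug, hgu, ln_smul (unit_ne hu)]
    have e2 := MulAction.index_stabilizer (DK K z) (ln x)
    rw [e1, Set.ncard_coe_finset] at e2
    have e3 := Subgroup.card_mul_index (MulAction.stabilizer (DK K z) (ln x))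
    rw [e2] at e3
    rw [← e3, mul_comm]
    congr 1
    exact card_stab_pt hzz hx hy hxy

/-- The images of `y` under the transvections `tv (c • x)`, `c ∈ CK K`, and `x` span as many lines as
`card_centres` allows. Therefore the image of `x` under `tv y` lies on one of these lines, which is a
condition on the norm of `hf x y`. -/
theorem line_norm {K : Subgroup (UG F)} {x y : V F} (hx : InI K x) (hy : InI K y) (hxy : hf x y ≠ 0)
    (hQ : 3 ≤ Nat.card (CK K)) : InC K (hf x y * star (hf x y)) := by
  have hK : ∃ p r, InI K p ∧ InI K r ∧ hf p r ≠ 0 := ⟨x, y, hx, hy, hxy⟩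
  set b := hf x y with hb
  have hb0 : star b ≠ 0 := star_ne_zero.mpr hxy
  have hB := HB.of_pair hx.2.1 (iso_smul hy.2.1 (star b)⁻¹) (by
    rw [hf_smul_right, star_inv₀, star_star, inv_mul_cancel₀ hxy])
  set z := pole x ((star b)⁻¹ • y) with hz
  have hyz : hf y z = 0 := by
    have := hB.rz
    rw [hf_smul_left] at this
    exact (mul_eq_zero.mp this).resolve_left (inv_ne_zero hb0)
  have px : Pt K z x := ⟨hx, hB.pz⟩
  have py : Pt K z y := ⟨hy, hyz⟩
  have hyx : hf y x = star b := (hf_star x y).symm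
  set X : Finset (Set (V F)) := (Set.toFinite {L | ∃ p, Pt K z p ∧ L = ln p}).toFinset with hXd
  have hX : ∀ L, L ∈ X ↔ ∃ p, Pt K z p ∧ L = ln p := by intro L; simp [hXd]
  have hcard := card_centres hB.zz px py hxy hQ X hX
  have hin : ∀ c : CK K, Pt K z (tv ((c : F) • x) • y) := fun c =>
    py.ug (c.2.2 x hx) (tv_fix (iso_smul hx.2.1 _) (by rw [hf_smul_right, hB.zp, mul_zero]))
  have hform : ∀ c : CK K, tv ((c : F) • x) • y = y + ((c : F) * c * star b) • x := by
    intro c; rw [tv_csmul hx.2.1, hyx, c.2.1]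
  have hne : ∀ c : CK K, hf (tv ((c : F) • x) • y) x = star b := by
    intro c; rw [hform, hf_add_left, hf_smul_left, hx.2.1, hyx, mul_zero, add_zero]
  have := Fintype.ofFinite (CK K)
  set S : Finset (Set (V F)) := Finset.univ.image fun c : CK K => ln (tv ((c : F) • x) • y) with hS
  have hSX : S ⊆ X.erase (ln x) := by
    intro L hL
    simp only [hS, Finset.mem_image, Finset.mem_univ, true_and] at hL
    obtain ⟨c, rfl⟩ := hL
    rw [Finset.mem_erase]
    exact ⟨(hin c).ln_ne' (by rw [hne]; exact hb0), (hX _).mpr ⟨_, hin c, rfl⟩⟩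
  have hScard : S.card = Nat.card (CK K) := by
    rw [hS, Finset.card_image_of_injective, Finset.card_univ, Nat.card_eq_fintype_card]
    intro c d h
    obtain ⟨a, ha0, ha⟩ := ln_eq (hin c).1.1 h
    have h1 := congrArg (fun v => hf v x) ha
    simp only [hf_smul_left, hne] at h1
    have ha1 : a = 1 := mul_right_cancel₀ hb0 (by rw [one_mul, ← h1])
    rw [ha1, one_smul, hform, hform] at ha
    have h2 := smul_left_injective F hx.1 (add_left_cancel ha)
    have h3 : (c : F) * c = d * d := mul_right_cancel₀ hb0 h2
    have h4 : ((c : F) + d) * (c + d) = 0 := by grind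
    have h5 := mul_self_eq_zero.mp h4
    apply Subtype.ext
    grind
  have hxX : ln x ∈ X := (hX _).mpr ⟨x, px, rfl⟩
  have heq := Finset.eq_of_subset_of_card_le hSX (by
    rw [Finset.card_erase_of_mem hxX, hScard]; omega)
  have hv : Pt K z (tv y • x) := px.ug hy.2.2 (tv_fix hy.2.1 (hf_symm_zero hyz))
  have hvx : tv y • x = x + b • y := by rw [tv_smul hy.2.1]
  have hvin : ln (tv y • x) ∈ S := by
    rw [heq, Finset.mem_erase]
    refine ⟨hv.ln_ne' ?_, (hX _).mpr ⟨_, hv, rfl⟩⟩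
    rw [hvx, hf_add_left, hf_smul_left, hx.2.1, hyx, zero_add]
    exact mul_ne_zero hxy hb0
  simp only [hS, Finset.mem_image, Finset.mem_univ, true_and] at hvin
  obtain ⟨c, hc⟩ := hvin
  obtain ⟨l, hl0, hl⟩ := ln_eq hv.1.1 hc.symm
  rw [hvx, hform] at hl
  have h1 := congrArg (fun v => hf v x) hl
  simp only [hf_add_left, hf_smul_left, hx.2.1, hyx, zero_add, mul_zero, add_zero] at h1
  have h1' : b = l := mul_right_cancel₀ hb0 h1
  have h2 := congrArg (fun v => hf v y) hl
  simp only [hf_add_left, hf_smul_left, hy.2.1, ← hb, mul_zero, add_zero, zero_add] at h2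
  have h3 : ((c : F) * c) * (b * star b) = 1 := by
    rw [← h1'] at h2
    apply mul_right_cancel₀ (mul_ne_zero hxy hxy)
    grind
  have h4 : b * star b = ((c * c)⁻¹ : CK K) := by
    rw [Subfield.coe_inv]
    exact eq_inv_of_mul_eq_one_right h3
  rw [h4]
  exact (c * c)⁻¹.2

end linenorm

/-! ### Subgroups with many transvections -/

section full

variable {F : Type*} [Field F] [StarRing F] [CharP F 2] [UFld F]

theorem pole_pole (x y : V F) : pole x (pole x y) = hf y x • x + hf x x • y := by
  apply V.ext
  intro i
  fin_cases i
  · change pole x (pole x y) 0 = hf y x * x 0 + hf x x * y 0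
    simp only [hf, pole_zero, pole_one, pole_two, star_add, star_mul', star_star]; grind
  · change pole x (pole x y) 1 = hf y x * x 1 + hf x x * y 1
    simp only [hf, pole_zero, pole_one, pole_two, star_add, star_mul', star_star]; grind
  · change pole x (pole x y) 2 = hf y x * x 2 + hf x x * y 2
    simp only [hf, pole_zero, pole_one, pole_two, star_add, star_mul', star_star]; grind

theorem pole_zero_right (x : V F) : pole x 0 = 0 := by
  have := pole_smul (1 : F) 0 x 0
  rwa [smul_zero, mul_zero, star_zero, zero_smul, one_smul] at this

/-- Two unit vectors with product in the fixed field but not equal to one are exchanged by a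
transvection. -/
theorem unit_swap {w w' : V F} (hw : hf w w = 1) (hw' : hf w' w' = 1) (hs : star (hf w w') = hf w w')
    (h1 : hf w w' ≠ 1) : ∃ d : F, d • (w + w') ≠ 0 ∧ hf (d • (w + w')) (d • (w + w')) = 0 ∧
      tv (d • (w + w')) • w = w' := by
  set s := hf w w' with hsd
  have hs1 : 1 + s ≠ 0 := by intro h; apply h1; grind
  obtain ⟨d, hd, hdd⟩ := UFld.sqrt (1 + s)⁻¹ (by rw [star_inv₀, star_add, star_one, hs])
  have hd0 : d ≠ 0 := by rintro rfl; rw [mul_zero] at hdd; exact inv_ne_zero hs1 hdd.symm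
  have hs' : hf w' w = s := by rw [← hf_star, ← hsd, hs]
  have hx : hf (w + w') (w + w') = 0 := by
    simp only [hf_add_left, hf_add_right, hw, hw', hs', ← hsd]; grind
  refine ⟨d, ?_, iso_smul hx d, ?_⟩
  · intro h
    have h2 := V.add_eq_zero ((smul_eq_zero.mp h).resolve_left hd0)
    apply h1
    rw [hsd, h2, hw']
  · rw [tv_csmul hx, hd, hdd, hf_add_right, hw, ← hsd, inv_mul_cancel₀ hs1, one_smul, ← add_assoc,
      add_selfV, zero_add]

/-- `unit_swap` inside a plane all of whose transvections belong to `K`. -/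
theorem unit_swap_in {K : Subgroup (UG F)} {z : V F}
    (hall : ∀ x : V F, x ≠ 0 → hf x x = 0 → hf x z = 0 → tv x ∈ K) {w w' : V F} (hw : hf w w = 1)
    (hw' : hf w' w' = 1) (hwz : hf w z = 0) (hwz' : hf w' z = 0) (hs : star (hf w w') = hf w w')
    (h1 : hf w w' ≠ 1) : ∃ g ∈ K, g • z = z ∧ g • w = w' := by
  obtain ⟨d, h0, hi, hg⟩ := unit_swap hw hw' hs h1
  have h2 : hf (d • (w + w')) z = 0 := by rw [hf_smul_left, hf_add_left, hwz, hwz']; ring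
  exact ⟨_, hall _ h0 hi h2, tv_fix hi (hf_symm_zero h2), hg⟩

/-- The transvections of the plane orthogonal to `z` act transitively on its unit vectors. -/
theorem plane_trans {K : Subgroup (UG F)} {z : V F} (hz : hf z z = 1)
    (hall : ∀ x : V F, x ≠ 0 → hf x x = 0 → hf x z = 0 → tv x ∈ K) {w w' : V F} (hw : hf w w = 1)
    (hw' : hf w' w' = 1) (hwz : hf w z = 0) (hwz' : hf w' z = 0) :
    ∃ g ∈ K, g • z = z ∧ g • w = w' := by
  have hB := ON.of_pair hz hw (hf_symm_zero hwz)
  set y := pole z w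
  have e := hB.exp w'
  rw [hwz', zero_smul, zero_add] at e
  set a := hf w' w with ha
  set b := hf w' y
  have hww' : hf w w' = star a := by rw [ha, hf_star]
  by_cases ha0 : a = 0
  · apply unit_swap_in hall hw hw' hwz hwz'
    · rw [hww', ha0, star_zero, star_zero]
    · rw [hww', ha0, star_zero]; exact zero_ne_one
  · have hab : a * star a + b * star b = 1 := by
      have := hw'
      rw [e] at this
      simp only [hf_add_left, hf_add_right, hf_smul_left, hf_smul_right, hB.bb, hB.cc, hB.bc,
        hB.cb] at this
      rw [← this]; ring
    obtain ⟨u, hu, hub, hub1⟩ : ∃ u : F, u * star u = 1 ∧ star (u * star b) = u * star b ∧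
        u * star b ≠ 1 := by
      by_cases hb0 : b = 0
      · exact ⟨1, by simp, by simp [hb0], by simp [hb0]⟩
      · obtain ⟨d, hd, hd0, hdd, -⟩ := norm_sqrt hb0
        have e1 : b * d⁻¹ * star b = d := by
          rw [mul_right_comm, ← hdd, mul_assoc, mul_inv_cancel₀ hd0, mul_one]
        refine ⟨b * d⁻¹, ?_, ?_, ?_⟩
        · rw [star_mul', star_inv₀, hd, ← mul_assoc, e1, mul_inv_cancel₀ hd0]
        · rw [e1, hd]
        · rw [e1]
          rintro rfl
          apply ha0
          apply norm_zero
          rw [← hdd, mul_one] at hab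
          grind
    have hy1 : hf (u • y) (u • y) = 1 := by
      rw [hf_smul_left, hf_smul_right, hB.cc, mul_one, hu]
    have hyz : hf (u • y) z = 0 := by rw [hf_smul_left, hB.ca, mul_zero]
    have hwy : hf w (u • y) = 0 := by rw [hf_smul_right, hB.bc, mul_zero]
    have hyw' : hf (u • y) w' = u * star b := by rw [hf_smul_left, ← hf_star w' y]
    obtain ⟨g, hg, hgz, hgw⟩ := unit_swap_in hall hw hy1 hwz hyz (by rw [hwy, star_zero])
      (by rw [hwy]; exact zero_ne_one)
    obtain ⟨k, hk, hkz, hkw⟩ := unit_swap_in hall hy1 hw' hyz hwz' (by rw [hyw', hub])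
      (by rw [hyw']; exact hub1)
    exact ⟨k * g, K.mul_mem hk hg, by rw [mul_smul, hgz, hkz], by rw [mul_smul, hgw, hkw]⟩

/-- All transvections together generate the group. -/
theorem eq_top_of_all {K : Subgroup (UG F)} {p z r : V F} (h : HB p z r)
    (hall : ∀ x : V F, x ≠ 0 → hf x x = 0 → tv x ∈ K) : K = ⊤ := by
  have step : ∀ w w' : V F, hf w w = 1 → hf w' w' = 1 → hf (pole w w') (pole w w') ≠ 0 →
      ∃ g ∈ K, g • w = w' := by
    intro w w' hw hw' hn
    obtain ⟨d, hd, hdd⟩ := UFld.sqrt _ (hf_self (pole w w'))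
    have hd0 : d ≠ 0 := by rintro rfl; apply hn; rw [← hdd, mul_zero]
    obtain ⟨g, hg, -, hgw⟩ := plane_trans (z := d⁻¹ • pole w w') (K := K) (w := w) (w' := w') (by
      rw [hf_smul_left, hf_smul_right, star_inv₀, hd, ← hdd, inv_mul_cancel_left₀ hd0,
        inv_mul_cancel₀ hd0]) (fun x h0 hi _ => hall x h0 hi) hw hw'
      (by rw [hf_smul_right, hf_pole_left, mul_zero]) (by rw [hf_smul_right, hf_pole_right, mul_zero])
    exact ⟨g, hg, hgw⟩
  have trans : ∀ w' : V F, hf w' w' = 1 → ∃ g ∈ K, g • w' = z := by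
    intro w' hw'
    by_cases hn : hf (pole w' z) (pole w' z) ≠ 0
    · exact step w' z hw' h.zz hn
    · rw [not_not] at hn
      obtain ⟨y, hy0, hyy, hyz, hyw⟩ : ∃ y : V F, y ≠ 0 ∧ hf y y = 0 ∧ hf y z = 0 ∧ hf w' y = 0 := by
        by_cases hp0 : pole w' z = 0
        · refine ⟨p, h.pne, h.pp, h.pz, ?_⟩
          have e := pole_pole w' z
          rw [hp0, pole_zero_right, hw', one_smul] at e
          have e2 := congrArg (fun v => hf p v) (V.add_eq_zero e.symm)
          simp only [hf_smul_right, h.pz] at e2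
          have e3 : hf z w' ≠ 0 := by
            intro h0
            rw [h0, zero_smul] at e
            rw [zero_add] at e
            exact h.zne e.symm
          exact hf_symm_zero ((mul_eq_zero.mp e2).resolve_left (star_ne_zero.mpr e3))
        · exact ⟨_, hp0, hn, hf_symm_zero (hf_pole_right _ _), hf_pole_left _ _⟩
      obtain ⟨r', hB⟩ := exists_HB_unit hyy hy0 h.zz hyz
      have ew := hB.exp w'
      rw [hyw, zero_smul, add_zero] at ew
      set al := hf w' r'
      set a := hf w' z
      obtain ⟨c, hc, hc0, hc1⟩ : ∃ c : F, star c = c ∧ c ≠ 0 ∧ (al * star al) * (c * c) ≠ 1 := by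
        obtain ⟨c, hc, hc0, hc1⟩ := UFld.big (F := F)
        by_cases h1 : al * star al = 1
        · refine ⟨c, hc, hc0, ?_⟩
          rw [h1, one_mul]
          intro h2
          exact hc1 (fix_unit hc (by rw [hc, h2]))
        · exact ⟨1, star_one _, one_ne_zero, by rwa [mul_one, mul_one]⟩
      obtain ⟨l, hl⟩ := UFld.trace c⁻¹ (by rw [star_inv₀, hc])
      set v := l • y + c • r' with hv
      have hvv : hf v v = 1 := by
        rw [hv]
        simp only [hf_add_left, hf_add_right, hf_smul_left, hf_smul_right, hB.pp, hB.rr, hB.pr,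
          hB.rp, hc]
        have : c * (l + star l) = 1 := by rw [hl, mul_inv_cancel₀ hc0]
        linear_combination this
      have hvz : hf v z = 0 := by
        rw [hv, hf_add_left, hf_smul_left, hf_smul_left, hB.pz, hB.rz]; ring
      have hwv : hf w' v = al * c := by
        rw [ew, hv]
        simp only [hf_add_left, hf_add_right, hf_smul_left, hf_smul_right, hB.pp, hB.pr,
          hB.zp, hB.zr, hc]
        ring
      obtain ⟨g, hg, hgw⟩ := step w' v hw' hvv (by
        rw [hf_pole_pole, hw', hvv, ← hf_star w' v, hwv, star_mul', hc]
        intro h0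
        apply hc1
        grind)
      obtain ⟨k, hk, hkw⟩ := step v z hvv h.zz (by
        rw [hf_pole_pole, hvv, h.zz, hvz, zero_mul, add_zero, one_mul]; exact one_ne_zero)
      exact ⟨k * g, K.mul_mem hk hg, by rw [mul_smul, hgw, hkw]⟩
  obtain ⟨t, ht⟩ := UFld.trace (1 : F) (star_one _)
  set w := t • p + r with hw
  have hww : hf w w = 1 := by
    rw [hw]
    simp only [hf_add_left, hf_add_right, hf_smul_left, hf_smul_right, h.pp, h.rr, h.pr, h.rp]
    linear_combination ht
  have hwz : hf w z = 0 := by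
    rw [hw, hf_add_left, hf_smul_left, h.pz, h.rz]; ring
  have hB := ON.of_pair h.zz hww (hf_symm_zero hwz)
  rw [eq_top_iff]
  intro g _
  obtain ⟨k, hk, hkz⟩ := trans (g • z) (by rw [ug_hf, h.zz])
  obtain ⟨k', hk', hkz', hkw'⟩ := plane_trans (K := K) (w := k • g • w) (w' := w) h.zz
    (fun x h0 hi _ => hall x h0 hi) (by rw [ug_hf, ug_hf, hww]) hww (by
      have : hf (k • g • w) (k • g • z) = 0 := by rw [ug_hf, ug_hf, hwz]
      rwa [hkz] at this) hwz
  have : k' * k * g = 1 := by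
    apply hB.ug_eq
    · rw [mul_smul, mul_smul, hkz, hkz', one_smul]
    · rw [mul_smul, mul_smul, hkw', one_smul]
  have h2 : g = (k' * k)⁻¹ := eq_inv_of_mul_eq_one_right this
  rw [h2]
  exact K.inv_mem (K.mul_mem hk' hk)

variable [Finite F]

/-- For vectors outside a plane, the triple product `θ = hf x y * hf y v * hf v x` has norm and trace in
`CK K`, and its trace is the norm of the volume of `x, y, v`, hence not zero. Thus `θ` is not in the fixed
field, which is possible only if `CK K` is the whole fixed field. -/
theorem full_CK {K : Subgroup (UG F)} {x y v : V F} (hx : InI K x) (hy : InI K y) (hv : InI K v)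
    (hvxy : hf v (pole x y) ≠ 0) (hQ : 3 ≤ Nat.card (CK K)) {c : F}
    (hc : star c = c) : InC K c := by
  have hn : ∀ a b, InI K a → InI K b → hf a b * star (hf a b) ∈ CK K := by
    intro a b ha hb
    by_cases h0 : hf a b = 0
    · rw [h0, zero_mul]; exact (CK K).zero_mem
    · exact line_norm ha hb h0 hQ
  rcases UFld.chain (CK K) (fun c hc => hc.1) with h | h
  · exact h c hc
  · exfalso
    set th := hf x y * hf y v * hf v x with hth
    have hs1 : star (hf x y) = hf y x := hf_star _ _
    have hs2 : star (hf y v) = hf v y := hf_star _ _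
    have hs3 : star (hf v x) = hf x v := hf_star _ _
    have h1 : th * star th ∈ CK K := by
      have : th * star th = (hf x y * star (hf x y)) * (hf y v * star (hf y v)) *
          (hf v x * star (hf v x)) := by
        rw [hth, star_mul', star_mul']; ring
      rw [this]
      exact (CK K).mul_mem ((CK K).mul_mem (hn _ _ hx hy) (hn _ _ hy hv)) (hn _ _ hv hx)
    have h2 : th + star th ∈ CK K := by
      have e : hf (tv x • y) v = hf y v + hf y x * hf x v := by
        rw [tv_smul hx.2.1, hf_add_left, hf_smul_left]
      have e1 := hn _ _ (hy.ug hx.2.2) hv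
      have : th + star th = hf (tv x • y) v * star (hf (tv x • y) v) + hf y v * star (hf y v)
          + (hf x y * star (hf x y)) * (hf v x * star (hf v x)) := by
        rw [e, hth]
        simp only [star_add, star_mul', hs1, hs2, hs3, hf_star]
        grind
      rw [this]
      exact (CK K).add_mem ((CK K).add_mem e1 (hn _ _ hy hv))
        ((CK K).mul_mem (hn _ _ hx hy) (hn _ _ hv hx))
    have h3 := h th h2 h1
    have h4 : vol v x y * star (vol v x y) = th + star th := by
      have a1 := hx.2.1
      have a2 := hy.2.1
      have a3 := hv.2.1
      have : vol v x y * star (vol v x y) = hf v v * (hf x x * hf y y + hf x y * hf y x)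
          + hf v x * (hf x v * hf y y + hf x y * hf y v) + hf v y * (hf x v * hf y x + hf x x * hf y v) := by
        simp only [hf, vol, star_add, star_mul', star_star]; grind
      rw [this, hth, a1, a2, a3]
      simp only [star_mul', hs1, hs2, hs3]
      ring
    rw [h3, add_selfF] at h4
    apply hvxy
    rw [hf_pole]
    exact norm_zero h4

/-- By `full_CK`, all transvections in the plane of `x, y` belong to `K`. They are transitive on the unit
vectors of the plane, so the vector `v` outside it is moved to multiples of all other isotropic
vectors outside the plane. -/
theorem eq_top_of_big {K : Subgroup (UG F)} {x y v : V F} (hx : InI K x) (hy : InI K y)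
    (hv : InI K v) (hxy : hf x y ≠ 0) (hvxy : hf v (pole x y) ≠ 0) (hQ : 3 ≤ Nat.card (CK K)) :
    K = ⊤ := by
  have hfull : ∀ w, InI K w → ∀ l : F, l ≠ 0 → InI K (l • w) := fun w hw l hl =>
    hw.smul_norm hl (full_CK hx hy hv hvxy hQ (fix_norm l))
  set b := (star (hf x y))⁻¹ with hb
  have hb0 : b ≠ 0 := inv_ne_zero (star_ne_zero.mpr hxy)
  set r := b • y with hr
  have hrI : InI K r := hfull y hy b hb0
  have hB := HB.of_pair hx.2.1 hrI.2.1 (by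
    rw [hr, hb, hf_smul_right, star_inv₀, star_star, inv_mul_cancel₀ hxy])
  set z := pole x r with hz
  have hplane : ∀ w : V F, w ≠ 0 → hf w w = 0 → hf w z = 0 → InI K w := by
    intro w hw0 hww hwz
    have e := hB.exp w
    rw [hwz, zero_smul, add_zero] at e
    set a := hf w r
    set c := hf w x
    by_cases hc0 : c = 0
    · rw [hc0, zero_smul, add_zero] at e
      rw [e]
      apply hfull x hx
      intro h0
      apply hw0
      rw [e, h0, zero_smul]
    · have e2 : a * star c = star (a * star c) := by
        have := hww
        rw [e] at this
        simp only [hf_add_left, hf_add_right, hf_smul_left, hf_smul_right, hB.pp, hB.rr, hB.pr,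
          hB.rp] at this
        rw [star_mul', star_star]
        grind
      have hcs : star c ≠ 0 := star_ne_zero.mpr hc0
      have e3 : a * c⁻¹ = (a * star c) * (c * star c)⁻¹ := by
        rw [mul_inv]
        have : a * star c * (c⁻¹ * (star c)⁻¹) = a * c⁻¹ * (star c * (star c)⁻¹) := by ring
        rw [this, mul_inv_cancel₀ hcs, mul_one]
      obtain ⟨d, hd, hdd⟩ := UFld.sqrt (a * c⁻¹) (by
        rw [e3, star_mul', ← e2, star_inv₀, fix_norm])
      have e4 : w = c • (tv (d • x) • r) := by
        rw [tv_csmul hx.2.1, hB.rp, hd, hdd, mul_one, smul_add, smul_smul c (a * c⁻¹) x,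
          mul_comm c, inv_mul_cancel_right₀ hc0, add_comm]
        exact e
      rw [e4]
      exact hfull _ (hrI.ug ((full_CK hx hy hv hvxy hQ hd).2 x hx)) c hc0
  have hvz : hf v z ≠ 0 := by
    rw [hz, hr]
    have := pole_smul (1 : F) b x y
    rw [one_smul, one_mul] at this
    rw [this, hf_smul_right, star_star]
    exact mul_ne_zero hb0 hvxy
  have hsplit : ∀ w : V F, hf w w = 0 → hf w z = 1 → ∃ w0, hf w0 w0 = 1 ∧ hf w0 z = 0 ∧ w = w0 + z := by
    intro w hww hwz
    have hzw : hf z w = 1 := by rw [← hf_star, hwz, star_one]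
    refine ⟨w + z, ?_, ?_, ?_⟩
    · simp only [hf_add_left, hf_add_right, hww, hwz, hzw, hB.zz]; grind
    · simp only [hf_add_left, hwz, hB.zz]; grind
    · rw [add_assoc, add_selfV, add_zero]
  obtain ⟨w0, h01, h02, h03⟩ := hsplit ((hf v z)⁻¹ • v) (iso_smul hv.2.1 _) (by
    rw [hf_smul_left, inv_mul_cancel₀ hvz])
  have hw0I := hfull v hv _ (inv_ne_zero hvz)
  rw [h03] at hw0I
  apply eq_top_of_all hB
  intro w hw0 hww
  by_cases hwz : hf w z = 0
  · exact (hplane w hw0 hww hwz).2.2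
  · obtain ⟨w1, h11, h12, h13⟩ := hsplit ((hf w z)⁻¹ • w) (iso_smul hww _) (by
      rw [hf_smul_left, inv_mul_cancel₀ hwz])
    obtain ⟨g, hg, hgz, hgw⟩ := plane_trans hB.zz (K := K)
      (fun x h0 hi hz => (hplane x h0 hi hz).2.2) h01 h11 h02 h12
    have h1 := hw0I.ug hg
    rw [ug_add, hgw, hgz, ← h13] at h1
    have h2 := hfull _ h1 _ hwz
    rw [smul_smul, mul_inv_cancel₀ hwz, one_smul] at h2
    exact h2.2.2

end full

/-! ### Subgroups with few transvections -/

section few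

variable {F : Type*} [Field F] [StarRing F] [CharP F 2] [UFld F]

/-- The action of a unitary map on a hyperbolic basis whose first vector is an eigenvector. -/
theorem borel_form {p z r : V F} (h : HB p z r) {g : UG F} {a : F} (ha : a * star a = 1)
    (hp : g • p = a • p) : ∃ e f k : F, g • z = star (a * a) • z + e • p ∧
      g • r = a • r + f • z + k • p := by
  have ha0 := unit_ne ha
  have h1 : hf (g • z) p = 0 := by
    have := ug_hf g z p
    rw [hp, hf_smul_right, h.zp] at this
    exact (mul_eq_zero.mp this).resolve_left (star_ne_zero.mpr ha0)
  have h2 : hf (g • r) p = a := by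
    have := ug_hf g r p
    rw [hp, hf_smul_right, h.rp] at this
    have e : a * (star a * hf (g • r) p) = a := by rw [this, mul_one]
    rwa [← mul_assoc, ha, one_mul] at e
  have e1 := h.exp (g • z)
  rw [h1, zero_smul, add_zero, add_comm] at e1
  have e2 := h.exp (g • r)
  rw [h2] at e2
  have hv : vol p z r ≠ 0 := by
    intro hv
    obtain ⟨l, hl, hzl⟩ := h.ug_pole
    have h1 := h.zz
    rw [hzl, hf_smul_right, hf_pole, ← hzl] at h1
    have : vol z p r = vol p z r := by simp only [vol]; grind
    rw [this, hv, mul_zero] at h1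
    exact zero_ne_one h1
  have h3 : a * a * hf (g • z) z = 1 := by
    have h4 := ug_vol g p z r
    rw [hp] at h4
    set b := hf (g • z) z
    rw [e1, e2] at h4
    have h5 : vol (a • p) (b • z + hf (g • z) r • p)
        (hf (g • r) r • p + hf (g • r) z • z + a • r) = (a * a * b) * vol p z r := by
      simp only [vol, V.add_apply, V.smul_apply]; grind
    rw [h5] at h4
    exact mul_right_cancel₀ hv (h4.trans (one_mul _).symm)
  have h6 : star (a * a) = hf (g • z) z := by
    have : star (a * a) * (a * a * hf (g • z) z) = star (a * a) := by rw [h3, mul_one]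
    rw [← this, star_mul']
    have : star a * star a * (a * a * hf (g • z) z) = (a * star a) * (a * star a) * hf (g • z) z := by
      ring
    rw [this, ha, one_mul, one_mul]
  refine ⟨hf (g • z) r, hf (g • r) z, hf (g • r) r, ?_, ?_⟩
  · rw [h6]; exact e1
  · refine e2.trans ?_
    rw [add_comm, ← add_assoc]
    exact add_right_comm _ _ _

variable [Finite F]

/-- The centres of nontrivial homologies in `K`, normalised to unit vectors. -/
def Hom (K : Subgroup (UG F)) (w : V F) : Prop :=
  hf w w = 1 ∧ ∃ η ∈ K, ∃ a : F, a ≠ 1 ∧ a * star a = 1 ∧ (∀ v, hf v w = 0 → η • v = a • v) ∧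
    η • w = star (a * a) • w

theorem Hom.ug {K : Subgroup (UG F)} {w : V F} (h : Hom K w) {g : UG F} (hg : g ∈ K) :
    Hom K (g • w) := by
  obtain ⟨hw, η, hη, a, ha1, ha, h1, h2⟩ := h
  refine ⟨by rw [ug_hf, hw], g * η * g⁻¹, K.mul_mem (K.mul_mem hg hη) (K.inv_mem hg), a, ha1, ha, ?_,
    ?_⟩
  · intro v hv
    have : hf (g⁻¹ • v) w = 0 := by
      have := ug_hf g (g⁻¹ • v) w
      rw [smul_inv_smul] at this
      rw [← this, hv]
    rw [mul_smul, mul_smul, h1 _ this, ug_smul, smul_inv_smul]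
  · rw [mul_smul, mul_smul, inv_smul_smul, h2, ug_smul]

/-- Eigenvectors of a homology. -/
theorem hom_eig {w : V F} (hw : hf w w = 1) {η : UG F} {a : F} (ha1 : a ≠ 1) (ha : a * star a = 1)
    (h1 : ∀ v, hf v w = 0 → η • v = a • v) (h2 : η • w = star (a * a) • w) {y : V F} {c : F}
    (hy : η • y = c • y) : hf y w = 0 ∨ (y = hf y w • w ∧ (y ≠ 0 → c = star (a * a))) := by
  by_cases h0 : hf y w = 0
  · exact Or.inl h0
  right
  set b := hf y w with hb
  set y' := y + b • w with hy'
  have hyw : hf y' w = 0 := by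
    rw [hy', hf_add_left, hf_smul_left, hw, ← hb, mul_one, add_selfF]
  have e : y = b • w + y' := by rw [hy', add_comm y, ← add_assoc, add_selfV, zero_add]
  have e1 := h1 y' hyw
  have e2 : (b * star (a * a)) • w + a • y' = (c * b) • w + c • y' := by
    have : η • y = (b * star (a * a)) • w + a • y' := by
      rw [e, ug_add, ug_smul, h2, e1, smul_smul]
    rw [← this, hy]
    conv_lhs => rw [e, smul_add, smul_smul]
  have e3 := congrArg (fun v => hf v w) e2
  simp only [hf_add_left, hf_smul_left, hw, hyw, mul_zero, add_zero, mul_one] at e3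
  have e4 : star (a * a) = c := mul_left_cancel₀ h0 (by rw [e3, mul_comm])
  have hac : a ≠ c := by
    intro h
    apply ha1
    apply UFld.no3 a ha
    have : a * (a * a) = star (a * a) * (a * a) := by rw [e4, ← h]
    have h3 : star (a * a) * (a * a) = (a * star a) * (a * star a) := by rw [star_mul']; ring
    rw [h3, ha] at this
    rw [← mul_one (1 : F), ← this]; ring
  have e5 : (a + c) • y' = 0 := by
    rw [e3] at e2
    have := add_left_cancel e2
    rw [add_smul, this, add_selfV]
  have e6 : a + c ≠ 0 := by intro h; apply hac; grind
  rw [(smul_eq_zero.mp e5).resolve_left e6, add_zero] at e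
  exact ⟨e, fun _ => e4.symm⟩

/-- Proportional vectors of transvections in `K` differ by a scalar of norm one. -/
def Small (K : Subgroup (UG F)) : Prop := ∀ p, InI K p → ∀ l : F, InI K (l • p) → l * star l = 1

/-- If the field `CK K` has only two elements, the norms of scalars are `0` or `1`. -/
theorem Small.of_card {K : Subgroup (UG F)} (hK : ∃ p r, InI K p ∧ InI K r ∧ hf p r ≠ 0)
    (h : ¬ 3 ≤ Nat.card (CK K)) : Small K := by
  intro p hp l hl
  have h1 := InC.norm hK hp hl
  by_contra h2
  apply h
  have hl0 : l * star l ≠ 0 := by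
    intro h0
    have := norm_zero h0
    rw [this, zero_smul] at hl
    exact hl.1 rfl
  have : ({(0 : CK K), 1, ⟨l * star l, h1⟩} : Finset (CK K)).card = 3 := by
    rw [Finset.card_eq_three]
    refine ⟨_, _, _, zero_ne_one, ?_, ?_, rfl⟩
    · intro h; exact hl0 (congrArg Subtype.val h).symm
    · intro h; exact h2 (congrArg Subtype.val h).symm
  have := Fintype.ofFinite (CK K)
  rw [Nat.card_eq_fintype_card, ← ‹_ = 3›]
  exact Finset.card_le_univ _

theorem Small.tv {K : Subgroup (UG F)} (hS : Small K) {p r : V F} (hp : InI K p) (hr : InI K r)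
    (h : hf p r = 0) : PSUPaper.tv p = PSUPaper.tv r := by
  obtain ⟨a, ha0, ha⟩ := iso_par' hp.2.1 hr.2.1 hp.1 hr.1 (hf_symm_zero h)
  rw [ha, tv_unit hp.2.1]
  exact hS p hp a (ha ▸ hr)

/-- Involutions of `K` are transvections. -/
theorem inv_InI {K : Subgroup (UG F)} {g : UG F} (hg : g ∈ K) (h1 : g ≠ 1) (h2 : g * g = 1) :
    ∃ p, InI K p ∧ g = tv p := by
  obtain ⟨q, hq0, hqq, hq⟩ := inv_is_tv h1 h2
  exact ⟨q, ⟨hq0, hqq, hq ▸ hg⟩, hq⟩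

theorem tv_ne_of {p r : V F} (hp : hf p p = 0) (hr : hf r r = 0) (h : hf p r ≠ 0) : tv p ≠ tv r := by
  intro he
  have hp0 : p ≠ 0 := by rintro rfl; exact h (hf_zero_left r)
  obtain ⟨u, -, hu⟩ := tv_eq hp hr hp0 he
  apply h
  rw [hu, hf_smul_left, hr, mul_zero]

theorem tv_comm_eig {p : V F} (hp : hf p p = 0) (hp0 : p ≠ 0) {g : UG F}
    (h : g * tv p = tv p * g) : ∃ u : F, u * star u = 1 ∧ g • p = u • p := by
  have : tv (g • p) = tv p := by rw [← tv_conj hp, h, mul_inv_cancel_right]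
  exact tv_eq (iso_ug hp g) hp (ug_ne hp0) this

theorem smul_indep {p r : V F} (hp : hf p p = 0) (h : hf p r ≠ 0) {a b : F}
    (he : a • p = b • r) : a = 0 ∧ b = 0 := by
  have h1 := congrArg (fun v => hf v p) he
  simp only [hf_smul_left, hp, mul_zero] at h1
  have hb : b = 0 := (mul_eq_zero.mp h1.symm).resolve_right (by
    rw [← hf_star]; exact star_ne_zero.mpr h)
  refine ⟨?_, hb⟩
  rw [hb, zero_smul] at he
  refine (smul_eq_zero.mp he).resolve_right ?_
  rintro rfl
  exact h (hf_zero_left r)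

/-- Some element of `K` acts on a vector of a transvection by a nontrivial scalar. -/
theorem exists_scalar {K : Subgroup (UG F)} {x y v : V F} (hx : InI K x) (hy : InI K y)
    (hv : InI K v) (hxy : hf x y ≠ 0) (hvxy : hf v (pole x y) ≠ 0) (hS : Small K) :
    ∃ g ∈ K, ∃ p, InI K p ∧ ∃ a : F, a ≠ 1 ∧ g • p = a • p := by
  by_contra! hH
  have hfix : ∀ p, InI K p → ∀ g ∈ K, g * tv p = tv p * g → g • p = p := by
    intro p hp g hg hc
    obtain ⟨u, hu, hgu⟩ := tv_comm_eig hp.2.1 hp.1 hc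
    by_cases hu1 : u = 1
    · rw [hgu, hu1, one_smul]
    · exact absurd hgu (hH g hg p hp u hu1)
  have key : ∀ s : K, s ≠ 1 → s * s = 1 → ∃ p, InI K p ∧ (s : UG F) = tv p := fun s h1 h2 =>
    inv_InI s.2 (fun h => h1 (Subtype.ext h)) (congrArg Subtype.val h2)
  have hne : ∀ s t : K, s ≠ t → ∀ p r, InI K p → InI K r → (s : UG F) = tv p → (t : UG F) = tv r →
      hf p r ≠ 0 := by
    intro s t hst p r hp hr h1 h2 h0
    apply hst
    apply Subtype.ext
    rw [h1, h2]
    exact hS.tv hp hr h0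
  -- now involutions are determined by their centres, and the elements commuting with one fix its
  -- vector; this is more than `countB` allows
  refine countB (D := K) ?_ ?_ ?_ ?_ ?_
  · intro s t hs hs' ht ht'
    obtain ⟨p, hp, hsp⟩ := key s hs hs'
    obtain ⟨r, hr, htr⟩ := key t ht ht'
    by_cases h0 : hf p r = 0
    · refine ⟨1, Subtype.ext ?_⟩
      rw [one_mul, inv_one, mul_one, hsp, htr]
      exact hS.tv hp hr h0
    · obtain ⟨g, hg, ⟨u, hu, hgu⟩, -⟩ := tv_conj_in hp.2.1 hr.2.1 h0 hp.2.2 hr.2.2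
      refine ⟨⟨g, hg⟩, Subtype.ext ?_⟩
      change g * (s : UG F) * g⁻¹ = (t : UG F)
      rw [hsp, htr, tv_conj hp.2.1, hgu, tv_unit hr.2.1 hu]
  · refine ⟨⟨tv x, hx.2.2⟩, ⟨tv y, hy.2.2⟩, ?_, ?_, ?_, ?_, ?_⟩
    · exact fun h => tv_ne_one hx.2.1 hx.1 (congrArg Subtype.val h)
    · exact Subtype.ext (tv_mul_self hx.2.1)
    · exact fun h => tv_ne_one hy.2.1 hy.1 (congrArg Subtype.val h)
    · exact Subtype.ext (tv_mul_self hy.2.1)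
    · exact fun h => tv_ne_of hx.2.1 hy.2.1 hxy (congrArg Subtype.val h)
  · intro s t g hs hs' ht ht' hst c1 c2
    obtain ⟨p, hp, hsp⟩ := key s hs hs'
    obtain ⟨r, hr, htr⟩ := key t ht ht'
    have h0 := hne s t hst p r hp hr hsp htr
    have c1' : (g : UG F) * tv p = tv p * g := by rw [← hsp]; exact congrArg Subtype.val c1
    have c2' : (g : UG F) * tv r = tv r * g := by rw [← htr]; exact congrArg Subtype.val c2
    have e1 := hfix p hp g g.2 c1'
    have e2 := hfix r hr g g.2 c2'
    have hB := HB.of_pair hp.2.1 (iso_smul hr.2.1 (star (hf p r))⁻¹) (by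
      rw [hf_smul_right, star_inv₀, star_star, inv_mul_cancel₀ h0])
    apply Subtype.ext
    apply hB.ug_eq
    · rw [e1]; exact (one_smul _ _).symm
    · rw [ug_smul, e2]; exact (one_smul _ _).symm
  · intro w s t hw hw' hs hs' ht ht' hst hc
    obtain ⟨p, hp, hsp⟩ := key s hs hs'
    obtain ⟨r, hr, htr⟩ := key t ht ht'
    obtain ⟨m, hm, hwm⟩ := key w hw hw'
    have h0 := hne s t hst p r hp hr hsp htr
    have hc' : (tv p * tv r) * tv m = tv m * (tv p * tv r) := by
      rw [← hsp, ← htr, ← hwm]; exact congrArg Subtype.val hc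
    have e1 := hfix m hm _ (K.mul_mem hp.2.2 hr.2.2) hc'
    have e2 : tv r • m = tv p • m := by
      rw [mul_smul] at e1
      rw [← ug_inv_eq e1, tv_inv hp.2.1]
    rw [tv_smul hp.2.1, tv_smul hr.2.1] at e2
    obtain ⟨h1, h2⟩ := smul_indep hp.2.1 h0 (add_left_cancel e2).symm
    obtain ⟨a, ha⟩ := iso_par hm.2.1 hp.2.1 hm.1 (hf_symm_zero h1)
    obtain ⟨b, hb⟩ := iso_par hm.2.1 hr.2.1 hm.1 (hf_symm_zero h2)
    apply h0
    rw [ha, hb, hf_smul_left, hf_smul_right, hm.2.1]; ring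
  · intro s t hs hs' ht ht' hst
    obtain ⟨p, hp, hsp⟩ := key s hs hs'
    obtain ⟨r, hr, htr⟩ := key t ht ht'
    have h0 := hne s t hst p r hp hr hsp htr
    set z := pole p r with hz
    have hz0 : z ≠ 0 := by
      intro h
      have := hf_pole_pole p r
      rw [← hz, h, hf_zero_left, hp.2.1, hr.2.1, ← hf_star p r] at this
      exact h0 (norm_zero (by linear_combination -this))
    obtain ⟨m, hm, hmz⟩ : ∃ m, InI K m ∧ hf z m ≠ 0 := by
      by_contra! hc
      apply hz0
      apply hf_nondeg
      intro u
      have e := vol_cramer x y v u z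
      rw [hf_symm_zero (hc x hx), hf_symm_zero (hc y hy), hf_symm_zero (hc v hv)] at e
      simp only [zero_mul, add_zero] at e
      have hvol : vol x y v ≠ 0 := by
        have : vol x y v = hf v (pole x y) := by rw [hf_pole]; simp only [vol]; grind
        rw [this]; exact hvxy
      exact hf_symm_zero ((mul_eq_zero.mp e.symm).resolve_right hvol)
    refine ⟨⟨tv m, hm.2.2⟩, fun h => tv_ne_one hm.2.1 hm.1 (congrArg Subtype.val h),
      Subtype.ext (tv_mul_self hm.2.1), ?_⟩
    intro h1
    have h2 : (tv m * (tv p * tv r)) * (tv m * (tv p * tv r)) = 1 := by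
      rw [← hsp, ← htr]; exact congrArg Subtype.val h1
    have hzf : (tv p * tv r) • z = z := by
      rw [mul_smul, tv_fix hr.2.1 (hf_symm_zero (hf_pole_right p r)),
        tv_fix hp.2.1 (hf_symm_zero (hf_pole_left p r))]
    by_cases h3 : tv m * (tv p * tv r) = 1
    · have h4 : tv m • (tv p * tv r) • z = z := by rw [← mul_smul, h3, one_smul]
      rw [hzf] at h4
      rw [tv_smul hm.2.1] at h4
      rcases smul_eq_zero.mp (add_eq_left.mp h4) with h5 | h5
      · exact hmz h5
      · exact hm.1 h5
    · obtain ⟨w, hw, hmw⟩ := inv_InI (K.mul_mem hm.2.2 (K.mul_mem hp.2.2 hr.2.2)) h3 h2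
      have h4 : tv m • z = tv w • z := by
        rw [← hmw, mul_smul, hzf]
      rw [tv_smul hm.2.1, tv_smul hw.2.1] at h4
      have h5 : hf m w = 0 := by
        by_contra h5
        exact hmz (smul_indep hm.2.1 h5 (add_left_cancel h4)).1
      rw [← hS.tv hm hw h5] at hmw
      have h6 : tv p * tv r = 1 := mul_left_cancel (hmw.trans (mul_one _).symm)
      exact tv_ne_of hp.2.1 hr.2.1 h0 (by
        rw [← tv_inv hr.2.1]; exact eq_inv_of_mul_eq_one_left h6)

end few

/-! ### Homologies normalising few transvections -/

section homologies

variable {F : Type*} [Field F] [StarRing F] [CharP F 2] [UFld F] [Finite F]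

theorem unit_sq {a : F} (ha : a * a = 1) : a = 1 := by
  have : (a + 1) * (a + 1) = 0 := by grind
  have := mul_self_eq_zero.mp this
  grind

theorem cube_ne {a : F} (ha1 : a ≠ 1) (ha : a * star a = 1) : a ≠ star (a * a) := by
  intro h
  apply ha1
  apply UFld.no3 a ha
  rw [star_mul'] at h
  have h2 : a ^ 3 = (a * star a) * (a * star a) := by
    rw [pow_succ, pow_two]; nth_rewrite 3 [h]; ring
  rw [h2, ha, one_mul]

/-- An element which multiplies `p` by a nontrivial scalar has a homology of `K` as its square. -/
theorem hom_of_scalar {K : Subgroup (UG F)} (hS : Small K) {g : UG F} (hg : g ∈ K) {p : V F}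
    (hp : InI K p) {a : F} (ha1 : a ≠ 1) (hgp : g • p = a • p) : ∃ w, Hom K w ∧ hf w p = 0 := by
  have ha : a * star a = 1 := hS p hp a (hgp ▸ hp.ug hg)
  obtain ⟨z, r, hb⟩ := exists_HB_pair hp.2.1 hp.1
  obtain ⟨e, -, -, h1, -⟩ := borel_form hb ha hgp
  have hab := cube_ne ha1 ha
  set b := star (a * a) with hbdef
  have hab' : a + b ≠ 0 := by intro h; apply hab; grind
  set t := e * (a + b)⁻¹ with ht
  have hte : t * (a + b) = e := by rw [ht, mul_assoc, inv_mul_cancel₀ hab', mul_one]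
  set w := z + t • p with hw
  have hww : hf w w = 1 := by
    simp only [hw, hf_add_left, hf_add_right, hf_smul_left, hf_smul_right, hb.zz, hb.zp, hb.pz, hb.pp]
    ring
  have hpw : hf p w = 0 := by
    simp only [hw, hf_add_right, hf_smul_right, hb.pz, hb.pp]; ring
  have hgw : g • w = b • w := by
    rw [hw, ug_add, h1, ug_smul, hgp]
    apply V.ext; intro i; simp only [V.add_apply, V.smul_apply]; grind
  obtain ⟨r', hb'⟩ := exists_HB_unit hp.2.1 hp.1 hww hpw
  obtain ⟨-, f, k, -, h2⟩ := borel_form hb' ha hgp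
  have hf0 : f = 0 := by
    have h3 := ug_hf g r' w
    rw [h2, hgw, hb'.rz] at h3
    simp only [hf_add_left, hf_smul_left, hf_smul_right, hb'.rz, hb'.zz, hb'.pz] at h3
    have hb0 : star b ≠ 0 := by
      rw [hbdef, star_star]; exact mul_ne_zero (unit_ne ha) (unit_ne ha)
    have : f * star b = 0 := by linear_combination h3
    exact (mul_eq_zero.mp this).resolve_right hb0
  rw [hf0, zero_smul, add_zero] at h2
  have e1 : (g * g) • p = (a * a) • p := by rw [mul_smul, hgp, ug_smul, hgp, smul_smul]
  have e2 : (g * g) • w = star ((a * a) * (a * a)) • w := by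
    rw [mul_smul, hgw, ug_smul, hgw, smul_smul, star_mul' (a * a)]
  have e3 : (g * g) • r' = (a * a) • r' := by
    rw [mul_smul, h2, ug_add, ug_smul, ug_smul, h2, hgp]
    apply V.ext; intro i; simp only [V.add_apply, V.smul_apply]; grind
  refine ⟨w, ⟨hww, g * g, K.mul_mem hg hg, a * a, fun h => ha1 (unit_sq h), unit_mul ha ha, ?_, e2⟩,
    hf_symm_zero hpw⟩
  intro v hv
  have h4 := hb'.exp v
  rw [hv, zero_smul, add_zero] at h4
  rw [h4, ug_add, ug_smul, ug_smul, e1, e3, smul_add, smul_comm, smul_comm (hf v p)]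

/-- The square of such an element `u` is the transvection `tv (e • p)`, so `e` has norm one unless it is
zero. -/
theorem unip_small {K : Subgroup (UG F)} (hS : Small K) {p w r : V F} (hp : InI K p)
    (hb : HB p w r) {u : UG F} (hu : u ∈ K) (hup : u • p = p) {e : F} (huw : u • w = w + e • p) :
    e = 0 ∨ e * star e = 1 := by
  by_cases he : e = 0
  · exact Or.inl he
  right
  obtain ⟨-, f, k, -, h2⟩ := borel_form (a := 1) hb (by rw [star_one, one_mul])
    (by rw [hup, one_smul])
  rw [one_smul] at h2
  have h3 : star e = f := by
    have h3 := ug_hf u r w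
    rw [h2, huw, hb.rz] at h3
    simp only [hf_add_left, hf_add_right, hf_smul_left, hf_smul_right, hb.rz, hb.zz, hb.pz, hb.rp,
      hb.zp, hb.pp] at h3
    grind
  have h4 : u * u = tv (e • p) := by
    apply hb.ug_eq
    · rw [mul_smul, hup, hup, tv_fix (iso_smul hp.2.1 e)]
      rw [hf_smul_right, hp.2.1, mul_zero]
    · rw [mul_smul, h2, ug_add, ug_add, ug_smul, ug_smul, h2, hup, huw, tv_csmul hp.2.1, hb.rp, ← h3]
      apply V.ext; intro i; simp only [V.add_apply, V.smul_apply]; grind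
  exact hS p hp e (hp.smul he (h4 ▸ K.mul_mem hu hu))

/-- A unipotent element of `K` with centre `p` commutes with every homology of `K` whose centre is
orthogonal to `p`. -/
theorem hom_fix {K : Subgroup (UG F)} (hS : Small K) {p w : V F} (hp : InI K p)
    (hw : Hom K w) (hwp : hf w p = 0) {u : UG F} (hu : u ∈ K) (hup : u • p = p) : u • w = w := by
  obtain ⟨hww, η, hη, a, ha1, ha, h1, h2⟩ := hw
  obtain ⟨r, hb⟩ := exists_HB_unit hp.2.1 hp.1 hww (hf_symm_zero hwp)
  obtain ⟨e, -, -, h3, -⟩ := borel_form (a := 1) hb (by rw [star_one, one_mul])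
    (by rw [hup, one_smul])
  rw [mul_one, star_one, one_smul] at h3
  have h4 := h1 p (hf_symm_zero hwp)
  have h4' : η⁻¹ • p = star a • p := by
    apply ug_inv_eq
    rw [ug_smul, h4, smul_smul, mul_comm, ha, one_smul]
  have h2' : η⁻¹ • w = (a * a) • w := by
    apply ug_inv_eq
    rw [ug_smul, h2, smul_smul, unit_mul ha ha, one_smul]
  have k1 : (u * (η * u * η⁻¹)) • p = p := by
    rw [mul_smul, mul_smul, mul_smul, h4', ug_smul, ug_smul, hup, h4, ug_smul, ug_smul, hup, smul_smul,
      mul_comm, ha, one_smul]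
  have k2 : (u * (η * u * η⁻¹)) • w = w + (e * (1 + a * a * a)) • p := by
    have haa := unit_mul ha ha
    rw [mul_smul, mul_smul, mul_smul, h2']
    simp only [ug_smul, ug_add, h3, h2, h4, hup]
    generalize star (a * a) = s at haa
    apply V.ext; intro i; simp only [V.add_apply, V.smul_apply]; grind
  have h5 := unip_small hS hp hb hu hup h3
  rcases h5 with h5 | h5
  · rw [h3, h5, zero_smul, add_zero]
  exfalso
  set b := a * a * a with hbd
  have hbb : b * star b = 1 := unit_mul (unit_mul ha ha) ha
  have hb1 : b ≠ 1 := by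
    intro h
    exact ha1 (UFld.no3 a ha (by rw [← h, hbd]; ring))
  rcases unip_small hS hp hb (K.mul_mem hu (K.mul_mem (K.mul_mem hη hu) (K.inv_mem hη))) k1 k2
    with h6 | h6
  · rcases mul_eq_zero.mp h6 with h7 | h7
    · exact unit_ne h5 h7
    · apply hb1; grind
  · have h7 : b + star b = 1 := by
      rw [star_mul', star_add, star_one] at h6
      have : (e * star e) * (1 + b + star b + b * star b) = 1 := by linear_combination h6
      rw [h5, hbb] at this
      grind
    apply hb1
    apply UFld.no3 b hbb
    have : b * (b + star b) = b := by rw [h7, mul_one]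
    grind

/-- The homologies of `K` with centre orthogonal to a given `p` have a common centre. -/
theorem hom_par {K : Subgroup (UG F)} (hS : Small K) {p w w' : V F} (hp : InI K p)
    (hw : Hom K w) (hw' : Hom K w') (hwp : hf w p = 0) (hwp' : hf w' p = 0) :
    w = hf w w' • w' := by
  have hfix := fun u => hom_fix hS hp hw hwp (u := u)
  obtain ⟨hww, η, hη, a, ha1, ha, h1, h2⟩ := hw
  obtain ⟨hww', η', hη', a', ha1', ha', h1', h2'⟩ := hw'
  have e1 := h1 p (hf_symm_zero hwp)
  have e1' := h1' p (hf_symm_zero hwp')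
  have i1 : η⁻¹ • p = star a • p := by
    apply ug_inv_eq
    rw [ug_smul, e1, smul_smul, mul_comm, ha, one_smul]
  have i1' : η'⁻¹ • p = star a' • p := by
    apply ug_inv_eq
    rw [ug_smul, e1', smul_smul, mul_comm, ha', one_smul]
  have i2 : η⁻¹ • w = (a * a) • w := by
    apply ug_inv_eq
    rw [ug_smul, h2, smul_smul, unit_mul ha ha, one_smul]
  have h3 := hfix (η' * η * η'⁻¹ * η⁻¹) (K.mul_mem (K.mul_mem (K.mul_mem hη' hη) (K.inv_mem hη'))
    (K.inv_mem hη)) (by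
      rw [mul_smul, mul_smul, mul_smul]
      simp only [i1, ug_smul, i1', e1, e1', smul_smul]
      have : star a * star a' * a * a' = (a * star a) * (a' * star a') := by ring
      rw [this, ha, ha', one_mul, one_smul])
  rw [mul_smul, mul_smul, mul_smul, i2, ug_smul, ug_smul, ug_smul] at h3
  have h4 : η • (η'⁻¹ • w) = star (a * a) • (η'⁻¹ • w) := by
    rw [← ug_smul, ← eq_inv_smul_iff.mpr (show η' • (η • η'⁻¹ • w) = star (a * a) • w from ?_)]
    conv_rhs => rw [← h3]
    rw [smul_smul (star (a * a)), mul_comm (star (a * a)), unit_mul ha ha, one_smul]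
  have hw0 : w ≠ 0 := by rintro rfl; rw [hf_zero_left] at hww; exact zero_ne_one hww
  rcases hom_eig hww ha1 ha h1 h2 h4 with h5 | ⟨h5, -⟩
  · rw [h1 _ h5] at h4
    have : (a + star (a * a)) • (η'⁻¹ • w) = 0 := by rw [add_smul, h4, add_selfV]
    have := (smul_eq_zero.mp this).resolve_right (ug_ne hw0)
    exact absurd (by grind) (cube_ne ha1 ha)
  · set c := hf (η'⁻¹ • w) w
    have h6 : w = c • η' • w := by
      rw [← ug_smul, ← h5, smul_inv_smul]
    have hc0 : c ≠ 0 := by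
      intro h; rw [h, zero_smul] at h6; exact hw0 h6
    have h7 : η' • w = c⁻¹ • w := by
      conv_rhs => rw [h6]
      rw [smul_smul, inv_mul_cancel₀ hc0, one_smul]
    rcases hom_eig hww' ha1' ha' h1' h2' h7 with h8 | ⟨h8, -⟩
    · obtain ⟨r', hb⟩ := exists_HB_unit hp.2.1 hp.1 hww' (hf_symm_zero hwp')
      have h9 := hb.exp w
      rw [h8, hwp, zero_smul, zero_smul, add_zero, add_zero] at h9
      rw [h9, iso_smul hp.2.1] at hww
      exact absurd hww zero_ne_one
    · exact h8

end homologies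

/-! ### Classification of subgroups -/

section classification

variable {F : Type*} [Field F] [StarRing F] [CharP F 2] [UFld F] [Finite F]

/-- Two homologies of `K`, one of which commutes with a transvection `tv p ∈ K` while the other does
not, have orthogonal centres; moreover the second centre is orthogonal to its image under `tv p`. -/
theorem hom_orth {K : Subgroup (UG F)} (hS : Small K) {p w w' : V F} (hp : InI K p)
    (hw : Hom K w) (hw' : Hom K w') (hwp : hf w p = 0) (hwp' : hf w' p ≠ 0) :
    hf w w' = 0 ∧ hf w' (tv p • w') = 0 := by
  have hpar := fun x => hom_par (w' := x) hS hp hw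
  obtain ⟨hww', η, hη, a, ha1, ha, h1, h2⟩ := hw'
  have ha0 := unit_ne ha
  have haa := unit_mul ha ha
  have hx0 : pole w' p ≠ 0 := by
    intro h
    have := hf_pole_pole w' p
    rw [h, hf_zero_left, hp.2.1, mul_zero, zero_add, ← hf_star w' p] at this
    exact hwp' (norm_zero this.symm)
  set x := (hf w' p)⁻¹ • pole w' p with hx
  have hxx : hf x x = 1 := by
    rw [hx, hf_smul_left, hf_smul_right, hf_pole_pole, hp.2.1, mul_zero, zero_add, ← hf_star w' p,
      star_inv₀]
    have := star_ne_zero.mpr hwp'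
    field_simp
  have hpx : hf p x = 0 := by rw [hx, hf_smul_right, hf_pole_right, mul_zero]
  have hwx : hf w' x = 0 := by rw [hx, hf_smul_right, hf_pole_left, mul_zero]
  have hηx : η • x = a • x := h1 x (hf_symm_zero hwx)
  have hηx' : η⁻¹ • x = star a • x := by
    apply ug_inv_eq
    rw [ug_smul, hηx, smul_smul, mul_comm, ha, one_smul]
  set p' := η • p with hp'
  have hpp' : InI K p' := hp.ug hη
  have hpx' : hf p' x = 0 := by
    have := ug_hf η p x
    rw [hηx, hf_smul_right, hpx] at this
    exact (mul_eq_zero.mp this).resolve_left (star_ne_zero.mpr ha0)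
  have hne : hf p p' ≠ 0 := by
    set c := hf p w' with hc
    have hc0 : c ≠ 0 := by
      intro h; exact hwp' (hf_symm_zero h)
    have e1 : hf (p + c • w') w' = 0 := by
      rw [hf_add_left, hf_smul_left, hww', ← hc, mul_one, add_selfF]
    have e2 : p = (p + c • w') + c • w' := by rw [add_assoc, add_selfV, add_zero]
    have e3 : p' = a • (p + c • w') + (c * star (a * a)) • w' := by
      rw [hp']; conv_lhs => rw [e2]
      rw [ug_add, h1 _ e1, ug_smul, h2, smul_smul]
    rw [e3, hf_add_right, hf_smul_right, hf_smul_right, hf_add_right, hf_smul_right, hp.2.1, ← hc,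
      star_mul', star_star, zero_add]
    intro h
    have h5 : (c * star c) * (star a + a * a) = 0 := by linear_combination h
    rcases mul_eq_zero.mp h5 with h6 | h6
    · exact hc0 (norm_zero h6)
    · apply cube_ne ha1 ha
      have : star a = a * a := by grind
      rw [← this, star_star]
  set t := tv p with ht
  have htx : t • x = x := tv_fix hp.2.1 (hf_symm_zero hpx)
  have htx' : tv p' • x = x := tv_fix hpp'.2.1 (hf_symm_zero hpx')
  set g := t * tv p' with hg
  have hgK : g ∈ K := K.mul_mem hp.2.2 hpp'.2.2
  have hgx : g • x = x := by rw [hg, mul_smul, htx', htx]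
  have htt : t * t = 1 := tv_mul_self hp.2.1
  have hgg : g * g ≠ 1 := by
    intro h
    apply hne
    apply hf_symm_zero
    apply tv_comm hp.2.1 hpp'.2.1 hpp'.1
    have := eq_inv_of_mul_eq_one_left h
    rw [hg, mul_inv_rev, ht, tv_inv hp.2.1, tv_inv hpp'.2.1] at this
    exact this
  have hK : ∃ p r, InI K p ∧ InI K r ∧ hf p r ≠ 0 := ⟨p, p', hp, hpp', hne⟩
  have key : ∀ s : DK K x, s ≠ 1 → s * s = 1 → ∃ q, InI K q ∧ (s : UG F) = tv q ∧ hf q x = 0 := by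
    intro s hs hs'
    obtain ⟨q, hq, hsq⟩ := inv_InI (mem_DK.mp s.2).1 (fun h => hs (Subtype.ext h))
      (congrArg Subtype.val hs')
    refine ⟨q, hq, hsq, ?_⟩
    have h3 := (mem_DK.mp s.2).2
    rw [hsq, tv_smul hq.2.1] at h3
    exact hf_symm_zero ((smul_eq_zero.mp (add_eq_left.mp h3)).resolve_right hq.1)
  obtain ⟨c1, c2⟩ := countC (D := DK K x) (s := ⟨t, mem_DK.mpr ⟨hp.2.2, htx⟩⟩) (by
      intro s1 s2 hs1 hs1' hs2 hs2'
      obtain ⟨q, hq, hsq, hqx⟩ := key s1 hs1 hs1'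
      obtain ⟨q', hq', hsq', hqx'⟩ := key s2 hs2 hs2'
      by_cases h0 : hf q q' = 0
      · refine ⟨1, Subtype.ext ?_⟩
        rw [one_mul, inv_one, mul_one, hsq, hsq']
        exact hS.tv hq hq' h0
      · obtain ⟨k, hk, ⟨u, hu, hku⟩, hkx⟩ := tv_conj_in hq.2.1 hq'.2.1 h0 hq.2.2 hq'.2.2
        refine ⟨⟨k, mem_DK.mpr ⟨hk, hkx x (hf_symm_zero hqx) (hf_symm_zero hqx')⟩⟩, Subtype.ext ?_⟩
        change k * (s1 : UG F) * k⁻¹ = (s2 : UG F)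
        rw [hsq, hsq', tv_conj hq.2.1, hku, tv_unit hq'.2.1 hu]) (by
      intro s k hs hs' hc
      obtain ⟨q, hq, hsq, hqx⟩ := key s hs hs'
      have hc' : (k : UG F) * tv q = tv q * k := by rw [← hsq]; exact congrArg Subtype.val hc
      obtain ⟨u, hu, hku⟩ := tv_comm_eig hq.2.1 hq.1 hc'
      obtain ⟨r, hb⟩ := exists_HB_unit hq.2.1 hq.1 hxx hqx
      obtain ⟨hkK, hkx⟩ := mem_DK.mp k.2
      rw [fix_unit (stab_form hb hkx hku).1 hu, one_smul] at hku
      obtain ⟨c, hcC, hkc⟩ := unip_in hK hb hq hkK hkx hku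
      by_cases hc0 : c = 0
      · left; apply Subtype.ext; rw [hkc, hc0, zero_smul, tv_zero]; rfl
      · right
        have := fix_unit hcC.1 (hS q hq c (hq.smul hc0 (hcC.2 q hq)))
        apply Subtype.ext; rw [hkc, hsq, this, one_smul])
    (fun h => tv_ne_one hp.2.1 hp.1 (congrArg Subtype.val h)) (Subtype.ext htt)
  set k := η * g * η⁻¹ with hk
  have hkx : k • x = x := by
    rw [hk, mul_smul, mul_smul, hηx', ug_smul, ug_smul, hgx, hηx, smul_smul, mul_comm, ha, one_smul]
  have hkk : k * k ≠ 1 := by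
    intro h
    apply hgg
    have : k * k = η * (g * g) * η⁻¹ := by rw [hk]; group
    rw [this] at h
    exact conj_eq_one_iff.mp h
  have hgk : g * k = k * g := congrArg Subtype.val (c1
    ⟨g, mem_DK.mpr ⟨hgK, hgx⟩⟩ ⟨k, mem_DK.mpr ⟨K.mul_mem (K.mul_mem hη hgK) (K.inv_mem hη), hkx⟩⟩
    (fun h => hgg (congrArg Subtype.val h)) (fun h => hkk (congrArg Subtype.val h)))
  have htg : t * g * t = g⁻¹ := congrArg Subtype.val (c2
    ⟨g, mem_DK.mpr ⟨hgK, hgx⟩⟩ (fun h => hgg (congrArg Subtype.val h)))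
  have hon := ON.of_pair hww' hxx hwx
  set m := pole w' x with hm
  have hwi : η⁻¹ • w' = (a * a) • w' := by
    apply ug_inv_eq
    rw [ug_smul, h2, smul_smul, haa, one_smul]
  have hηm : η • m = a • m := h1 m hon.ca
  have hmi : η⁻¹ • m = star a • m := by
    apply ug_inv_eq
    rw [ug_smul, hηm, smul_smul, mul_comm, ha, one_smul]
  have gw : g • w' = hf (g • w') w' • w' + hf (g • w') m • m := by
    have e := hon.exp (g • w')
    have : hf (g • w') x = 0 := by
      have := ug_hf g w' x
      rwa [hgx, hwx] at this
    rw [this, zero_smul, add_zero] at e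
    exact e
  have gm : g • m = hf (g • m) w' • w' + hf (g • m) m • m := by
    have e := hon.exp (g • m)
    have : hf (g • m) x = 0 := by
      have := ug_hf g m x
      rwa [hgx, hon.cb] at this
    rw [this, zero_smul, add_zero] at e
    exact e
  set α := hf (g • w') w' with hα
  set γ := hf (g • w') m with hγ
  set β := hf (g • m) w' with hβ
  set δ := hf (g • m) m with hδ
  have kw : k • w' = α • w' + (a * a * a * γ) • m := by
    rw [hk, mul_smul, mul_smul, hwi, ug_smul, gw]
    simp only [ug_smul, ug_add, h2, hηm]
    generalize star (a * a) = s at haa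
    apply V.ext; intro i; simp only [V.add_apply, V.smul_apply]; grind
  have km : k • m = (star (a * a * a) * β) • w' + δ • m := by
    rw [hk, mul_smul, mul_smul, hmi, ug_smul, gm]
    simp only [ug_smul, ug_add, h2, hηm, star_mul']
    apply V.ext; intro i; simp only [V.add_apply, V.smul_apply]; grind
  have hρ : β * γ * (a * a * a + star (a * a * a)) = 0 := by
    have e1 := congrArg (fun h : UG F => hf (h • w') w') hgk
    simp only [mul_smul g k w', mul_smul k g w'] at e1
    rw [kw, gw, ug_add, ug_add, ug_smul, ug_smul, ug_smul, ug_smul, gw, kw, gm, km] at e1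
    simp only [hf_add_left, hf_smul_left, hww', hon.ca] at e1
    grind
  have hbc : β = 0 ∨ γ = 0 := by
    rcases mul_eq_zero.mp hρ with h | h
    · exact mul_eq_zero.mp h
    · exfalso
      have h3 : star (a * a * a) = a * a * a := by grind
      have h4 := fix_unit h3 (unit_mul (unit_mul ha ha) ha)
      exact ha1 (UFld.no3 a ha (by rw [← h4]; ring))
  have hγ0 : γ = 0 := by
    rcases hbc with h | h
    · have e1 := ug_hf g w' m
      rw [gm, h, zero_smul, zero_add, hf_smul_right, hon.ac] at e1
      rcases mul_eq_zero.mp e1 with h3 | h3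
      · rw [h, star_eq_zero.mp h3, zero_smul, zero_smul, add_zero] at gm
        exact absurd gm (ug_ne (by
          intro h; have := hon.cc; rw [h, hf_zero_left] at this; exact zero_ne_one this))
      · exact h3
    · exact h
  rw [hγ0, zero_smul, add_zero] at gw
  have hαu : α * star α = 1 := by
    have := ug_hf g w' w'
    rwa [gw, hf_smul_left, hf_smul_right, hww', mul_one] at this
  have hα1 : α * α ≠ 1 := by
    intro h
    have h3 := unit_sq h
    rw [h3, one_smul] at gw
    have : g = 1 := hon.ug_eq (gw.trans (one_smul _ _).symm) (hgx.trans (one_smul _ _).symm)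
    exact hgg (by rw [this, one_mul])
  have horth : hf w' (t • w') = 0 := by
    have e1 : g * t = t * g⁻¹ := by
      rw [← htg, mul_assoc t, ← mul_assoc t t, htt, one_mul]
    have e2 : g⁻¹ • w' = star α • w' := by
      apply ug_inv_eq
      rw [ug_smul, gw, smul_smul, mul_comm, hαu, one_smul]
    have e3 : g • (t • w') = star α • (t • w') := by
      rw [← mul_smul, e1, mul_smul, e2, ug_smul]
    have e4 := ug_hf g w' (t • w')
    rw [e3, gw, hf_smul_left, hf_smul_right, star_star, ← mul_assoc] at e4
    by_contra h0
    exact hα1 (mul_right_cancel₀ h0 (e4.trans (one_mul _).symm))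
  refine ⟨?_, horth⟩
  have hxt : hf x (t • w') = 0 := by
    have := ug_hf t x w'
    rwa [htx, hf_symm_zero hwx] at this
  have hon' : ON w' (t • w') x :=
    ⟨hww', by rw [ug_hf, hww'], hxx, horth, hwx, hf_symm_zero hxt⟩
  have hti : t⁻¹ = t := inv_eq_of_mul_eq_one_left htt
  have hHx : Hom K x := by
    have hs : a * star (a * a) = star a := by rw [star_mul', ← mul_assoc, ha, one_mul]
    have f1 : (η * (t * η * t⁻¹)) • w' = star a • w' := by
      rw [mul_smul, mul_smul, mul_smul, hti, h1 (t • w') hon'.ba, ug_smul, ← mul_smul t t, htt,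
        one_smul, ug_smul, h2, smul_smul, hs]
    have f2 : (η * (t * η * t⁻¹)) • (t • w') = star a • (t • w') := by
      rw [mul_smul, mul_smul, mul_smul, inv_smul_smul, h2, ug_smul, ug_smul, h1 (t • w') hon'.ba,
        smul_smul, mul_comm, hs]
    have f3 : (η * (t * η * t⁻¹)) • x = star (star a * star a) • x := by
      rw [mul_smul, mul_smul, mul_smul, hti, htx, hηx, ug_smul, htx, ug_smul, hηx, smul_smul, star_mul',
        star_star]
    refine ⟨hxx, _, K.mul_mem hη (K.mul_mem (K.mul_mem hp.2.2 hη) (K.inv_mem hp.2.2)), star a, ?_,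
      unit_star ha, ?_, f3⟩
    · intro h
      apply ha1
      rw [← star_star a, h, star_one]
    · intro v hv
      have e := hon'.exp v
      rw [hv, zero_smul, add_zero] at e
      rw [e, ug_add, ug_smul, ug_smul, f1, f2, smul_add, smul_comm, smul_comm (hf v (t • w'))]
  have h9 := congrArg (fun v => hf v w') (hpar x hHx hwp (hf_symm_zero hpx))
  simpa only [hf_smul_left, hf_symm_zero hwx, mul_zero] using h9

/-- The union of the three coordinate lines of a frame. -/
def InFr (e₁ e₂ e₃ v : V F) : Prop := ∃ c : F, v = c • e₁ ∨ v = c • e₂ ∨ v = c • e₃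

/-- The case in which proportional transvections coincide: the homology centres orthogonal to some
transvection vector are pairwise equal or orthogonal, up to scalars. -/
theorem classify_small {K : Subgroup (UG F)} (hS : Small K) {p w : V F} (hp : InI K p)
    (hw : Hom K w) (hwp : hf w p = 0) :
    (∃ w : V F, hf w w = 1 ∧ ∀ g ∈ K, ∃ a : F, g • w = a • w) ∨
    ∃ e₁ e₂ e₃ : V F, ON e₁ e₂ e₃ ∧ ∀ g ∈ K, ∀ v, InFr e₁ e₂ e₃ v → InFr e₁ e₂ e₃ (g • v) := by
  have dich : ∀ x y p, InI K p → hf x p = 0 → Hom K x → Hom K y →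
      hf x y = 0 ∨ y = hf y x • x := by
    intro x y p hp hxp hx hy
    by_cases h : hf y p = 0
    · exact Or.inr (hom_par hS hp hy hx h hxp)
    · exact Or.inl (hom_orth hS hp hx hy hxp h).1
  -- centres orthogonal to the vector of some transvection in `K`
  set Γ : V F → Prop := fun x => Hom K x ∧ ∃ q, InI K q ∧ hf x q = 0 with hΓ
  have hΓg : ∀ x, Γ x → ∀ g ∈ K, Γ (g • x) := by
    rintro x ⟨hx, q, hq, hxq⟩ g hg
    exact ⟨hx.ug hg, g • q, hq.ug hg, by rw [ug_hf, hxq]⟩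
  have hΓd : ∀ x y, Γ x → Γ y → hf x y = 0 ∨ y = hf y x • x := fun x y hx hy => by
    obtain ⟨hx, q, hq, hxq⟩ := hx
    exact dich x y q hq hxq hx hy.1
  have hΓw : Γ w := ⟨hw, p, hp, hwp⟩
  by_cases hall : ∀ x, Γ x → ∃ c : F, x = c • w
  · exact Or.inl ⟨w, hw.1, fun g hg => hall _ (hΓg w hΓw g hg)⟩
  right
  push Not at hall
  obtain ⟨x, hx, hxw⟩ := hall
  have hxp : hf x p ≠ 0 := fun h => hxw _ (hom_par hS hp hx.1 hw h hwp)
  obtain ⟨h1, h2⟩ := hom_orth hS hp hw hx.1 hwp hxp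
  have hy : Γ (tv p • x) := hΓg x hx _ hp.2.2
  have hon : ON w x (tv p • x) := ⟨hw.1, hx.1.1, hy.1.1, h1, by
    have := ug_hf (tv p) w x
    rwa [h1, tv_fix hp.2.1 hwp] at this, h2⟩
  refine ⟨w, x, tv p • x, hon, ?_⟩
  have key : ∀ y, Γ y → InFr w x (tv p • x) y := by
    intro y hy'
    rcases hΓd w y hΓw hy' with e1 | e1
    · rcases hΓd x y hx hy' with e2 | e2
      · rcases hΓd _ y hy hy' with e3 | e3
        · exfalso
          have := hon.exp y
          rw [hf_symm_zero e1, hf_symm_zero e2, hf_symm_zero e3, zero_smul, zero_smul, zero_smul,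
            add_zero, add_zero] at this
          have h3 := hy'.1.1
          rw [this, hf_zero_left] at h3
          exact zero_ne_one h3
        · exact ⟨_, Or.inr (Or.inr e3)⟩
      · exact ⟨_, Or.inr (Or.inl e2)⟩
    · exact ⟨_, Or.inl e1⟩
  have hsm : ∀ (a : F) y, InFr w x (tv p • x) y → InFr w x (tv p • x) (a • y) := by
    rintro a y ⟨c, h | h | h⟩
    · exact ⟨a * c, Or.inl (by rw [h, smul_smul])⟩
    · exact ⟨a * c, Or.inr (Or.inl (by rw [h, smul_smul]))⟩
    · exact ⟨a * c, Or.inr (Or.inr (by rw [h, smul_smul]))⟩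
  rintro g hg v ⟨c, h | h | h⟩
  all_goals rw [h, ug_smul]; apply hsm; apply key
  exacts [hΓg _ hΓw g hg, hΓg _ hx g hg, hΓg _ hy g hg]

/-- A subgroup containing a transvection is everything, or stabilises an isotropic line, an
anisotropic line or the set of coordinate lines of an orthonormal basis. -/
theorem classify {K : Subgroup (UG F)} {p : V F} (hp : InI K p) :
    K = ⊤ ∨ (∃ p : V F, p ≠ 0 ∧ hf p p = 0 ∧ ∀ g ∈ K, ∃ a : F, g • p = a • p) ∨
    (∃ w : V F, hf w w = 1 ∧ ∀ g ∈ K, ∃ a : F, g • w = a • w) ∨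
    ∃ e₁ e₂ e₃ : V F, ON e₁ e₂ e₃ ∧ ∀ g ∈ K, ∀ v, InFr e₁ e₂ e₃ v → InFr e₁ e₂ e₃ (g • v) := by
  -- all transvections in `K` have the same centre
  by_cases hA : ∀ r, InI K r → hf r p = 0
  · exact Or.inr (Or.inl ⟨p, hp.1, hp.2.1, fun g hg =>
      iso_par hp.2.1 (iso_ug hp.2.1 g) hp.1 (hA _ (hp.ug hg))⟩)
  push Not at hA
  obtain ⟨r, hr, hrp⟩ := hA
  have hpr : hf p r ≠ 0 := fun h => hrp (hf_symm_zero h)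
  -- all centres lie in the hyperbolic plane spanned by `p` and `r`
  by_cases hB : ∀ v, InI K v → hf v (pole p r) = 0
  · right; right; left
    set c := (star (hf p r))⁻¹ with hc
    have hb := HB.of_pair hp.2.1 (iso_smul hr.2.1 c) (by
      rw [hf_smul_right, hc, star_inv₀, star_star, inv_mul_cancel₀ hpr])
    have hz : pole p (c • r) = star c • pole p r := by
      have := pole_smul 1 c p r
      rwa [one_smul, one_mul] at this
    set z := pole p (c • r)
    have hB' : ∀ v, InI K v → hf v z = 0 := fun v hv => by
      rw [hz, hf_smul_right, hB v hv, mul_zero]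
    have hB'' : ∀ g ∈ K, ∀ v, InI K v → hf (g • z) v = 0 := fun g hg v hv => by
      have := ug_hf g (g⁻¹ • v) z
      rw [smul_inv_smul, hB' _ (hv.ug (K.inv_mem hg))] at this
      exact hf_symm_zero this
    refine ⟨z, hb.zz, fun g hg => ⟨hf (g • z) z, ?_⟩⟩
    have e := hb.exp (g • z)
    rw [hf_smul_right, hB'' g hg p hp, hB'' g hg r hr, mul_zero, zero_smul, zero_smul, zero_add,
      add_zero] at e
    exact e
  push Not at hB
  obtain ⟨v, hv, hvz⟩ := hB
  -- the centres span the space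
  by_cases hQ : 3 ≤ Nat.card (CK K)
  · exact Or.inl (eq_top_of_big hp hr hv hpr hvz hQ)
  have hS := Small.of_card ⟨p, r, hp, hr, hpr⟩ hQ
  obtain ⟨g, hg, q, hq, a, ha1, hga⟩ := exists_scalar hp hr hv hpr hvz hS
  obtain ⟨w, hw, hwq⟩ := hom_of_scalar hS hg hq ha1 hga
  exact Or.inr (Or.inr (classify_small hS hq hw hwq))

end classification

/-! ### A Möbius function computation -/

section mobius

/-- The defining recursion of the Möbius function, as a finite sum. -/
theorem mobius_sum {G : Type*} [Group G] [Fintype (Subgroup G)] {mu : Subgroup G → ℤ}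
    (hmu : IsSubgroupMobius mu) (H : Subgroup G) :
    ∑ K with H ≤ K, mu K = if H = ⊤ then 1 else 0 := by
  rw [← hmu H, ← finsum_mem_coe_finset]
  refine finsum_mem_congr ?_ fun _ _ => rfl
  ext K; simp

/-- Möbius inversion above a subgroup. -/
theorem mobius_unique {G : Type*} [Group G] [Fintype (Subgroup G)] {Z : Subgroup G}
    {f g : Subgroup G → ℤ}
    (h : ∀ H, Z ≤ H → ∑ K with H ≤ K, f K = ∑ K with H ≤ K, g K) : ∀ H, Z ≤ H → f H = g H := by
  intro H
  induction H using WellFoundedGT.induction with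
  | ind H ih =>
    intro hZ
    have h1 := h H hZ
    have e : (Finset.univ.filter fun K => H ≤ K) = insert H (Finset.univ.filter fun K => H < K) := by
      ext K
      simp only [Finset.mem_filter, Finset.mem_univ, true_and, Finset.mem_insert]
      rw [le_iff_eq_or_lt, eq_comm]
    rw [e, Finset.sum_insert (by simp), Finset.sum_insert (by simp)] at h1
    have h2 : ∑ K with H < K, f K = ∑ K with H < K, g K :=
      Finset.sum_congr rfl fun K hK => by
        have hK' : H < K := by simpa using hK
        exact ih K hK' (hZ.trans hK'.le)
    linarith

theorem sum_sw {G I : Type*} [Group G] [Fintype (Subgroup G)] [Fintype I] (H : Subgroup G)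
    (X : I → Subgroup G) (m : ℤ) :
    ∑ K with H ≤ K, ∑ i, (if K = X i then m else 0) = ∑ i, if H ≤ X i then m else 0 := by
  rw [Finset.sum_comm]
  refine Finset.sum_congr rfl fun i _ => ?_
  rw [Finset.sum_ite_eq']
  simp

/-- The value of the Möbius function at a subgroup `Z` of a finite group for which every proper
subgroup above `Z` is contained in one of the subgroups `B`, `N a` and `T s`, where these intersect
in a prescribed way. -/
theorem mobius_abstract {G : Type*} [Group G] [Finite G] {A Ω : Type*} [Fintype A] [Fintype Ω]
    {Z B : Subgroup G} {N : A → Subgroup G} {T : Ω → Subgroup G} {α : Ω → A} {ι : Ω → Ω} {k : ℕ}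
    (hZB : Z ≤ B) (hZN : ∀ a, Z ≤ N a) (hZT : ∀ s, Z ≤ T s)
    (hB : B ≠ ⊤) (hN : ∀ a, N a ≠ ⊤) (hT : ∀ s, T s ≠ ⊤)
    (hBN : ∀ a, B ⊓ N a ≠ Z) (hTN : ∀ s, T s ⊓ N (α s) ≠ Z) (hBZ : B ≠ Z)
    (hBT : ∀ H s, H ≤ B → H ≤ T s → H ≤ N (α s))
    (hNN : ∀ H a a', a ≠ a' → H ≤ N a → H ≤ N a' → H ≤ B)
    (hmin : ∀ H s a, Z < H → H ≤ T s → H ≤ N a → a ≠ α s →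
      H = T s ⊓ N a ∧ ¬ H ≤ N (α s))
    (hk : ∀ s, (Finset.univ.filter fun a => a ≠ α s ∧ Z < T s ⊓ N a).card = k)
    (hι : ∀ s, ι s ≠ s ∧ T (ι s) = T s)
    (hTT : ∀ H s s', Z ≤ H → H ≤ T s → H ≤ T s' → (∀ a, ¬ H ≤ N a) → s' = s ∨ s' = ι s)
    (hcl : ∀ H, Z ≤ H → H ≠ ⊤ → ¬ H ≤ B → (∀ a, ¬ H ≤ N a) → ∃ s, H ≤ T s)
    {mu : Subgroup G → ℤ} (hmu : IsSubgroupMobius mu) :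
    2 * mu Z = -(Fintype.card Ω * k) := by
  have := Fintype.ofFinite (Subgroup G)
  set c : Subgroup G → ℕ := fun H => (Finset.univ.filter fun s => H ≤ T s ∧ ¬ H ≤ N (α s)).card with hc
  set S : Finset (Subgroup G) := Finset.univ.filter fun H => Z < H ∧ (∃ a, H ≤ N a) ∧
    ∃ s, H ≤ T s ∧ ¬ H ≤ N (α s) with hS
  have memS : ∀ H, H ∈ S ↔ Z < H ∧ (∃ a, H ≤ N a) ∧ ∃ s, H ≤ T s ∧ ¬ H ≤ N (α s) := by
    intro H; rw [hS, Finset.mem_filter]; simp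
  set M : ℤ := ∑ H ∈ S, (c H : ℤ) with hM
  -- the explicit form of `2 * mu` above `Z`, by uniqueness of Möbius inversion; the intersections of
  -- `T s` and `N a` with `a ≠ α s` enter through `S`
  set ν : Subgroup G → ℤ := fun K =>
    (if K = ⊤ then 2 else 0) - (if K = B then 2 else 0) - (∑ a, if K = N a then 2 else 0)
      + (∑ a, if K = B ⊓ N a then 2 else 0) - (∑ s, if K = T s then 1 else 0)
      + (∑ s, if K = T s ⊓ N (α s) then 1 else 0) + (if K ∈ S then (c K : ℤ) else 0)
      - (if K = Z then M else 0) with hν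
  have hminS : ∀ H K, Z < H → H ≤ K → K ∈ S → H = K := by
    intro H K hZH hHK hK
    obtain ⟨h1, ⟨a, ha⟩, s, hs, hs'⟩ := (memS K).mp hK
    have hne : a ≠ α s := by rintro rfl; exact hs' ha
    rw [(hmin K s a h1 hs ha hne).1]
    exact (hmin H s a hZH (hHK.trans hs) (hHK.trans ha) hne).1
  have hMk : M = Fintype.card Ω * k := by
    have : ∑ H ∈ S, c H = Fintype.card Ω * k := by
      simp only [hc, Finset.card_filter]
      rw [Finset.sum_comm, ← smul_eq_mul, ← Finset.card_univ, ← Finset.sum_const]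
      refine Finset.sum_congr rfl fun s _ => ?_
      rw [← Finset.card_filter, ← hk s]
      symm
      refine Finset.card_bij (fun a _ => T s ⊓ N a) ?_ ?_ ?_
      · intro a ha
        rw [Finset.mem_filter] at ha
        have h1 := hmin _ s a ha.2.2 inf_le_left inf_le_right ha.2.1
        rw [Finset.mem_filter, memS]
        exact ⟨⟨ha.2.2, ⟨a, inf_le_right⟩, s, inf_le_left, h1.2⟩, inf_le_left, h1.2⟩
      · intro a ha a' ha' he
        by_contra hne
        rw [Finset.mem_filter] at ha
        exact (hmin _ s a ha.2.2 inf_le_left inf_le_right ha.2.1).2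
          (hBT _ s (hNN _ a a' hne inf_le_right (by rw [he]; exact inf_le_right)) inf_le_left)
      · intro H hH
        rw [Finset.mem_filter, memS] at hH
        obtain ⟨⟨h1, ⟨a, ha⟩, -⟩, h2, h3⟩ := hH
        have hne : a ≠ α s := by rintro rfl; exact h3 ha
        have h4 := (hmin H s a h1 h2 ha hne).1
        exact ⟨a, by rw [Finset.mem_filter, ← h4]; exact ⟨Finset.mem_univ _, hne, h1⟩, h4.symm⟩
    rw [hM, ← Nat.cast_sum, this, Nat.cast_mul]
  have hsum : ∀ H, Z ≤ H → ∑ K with H ≤ K, 2 * mu K = ∑ K with H ≤ K, ν K := by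
    intro H hZH
    rw [← Finset.mul_sum, mobius_sum hmu]
    have sw1 : ∀ (X : Subgroup G) (m : ℤ),
        ∑ K with H ≤ K, (if K = X then m else 0) = if H ≤ X then m else 0 := by
      intro X m
      rw [Finset.sum_ite_eq']
      simp
    have e : ∑ K with H ≤ K, ν K = 2 - (if H ≤ B then 2 else 0) - (∑ a, if H ≤ N a then 2 else 0)
      + (∑ a, if H ≤ B ⊓ N a then 2 else 0) - (∑ s, if H ≤ T s then 1 else 0)
      + (∑ s, if H ≤ T s ⊓ N (α s) then 1 else 0) + (∑ K with H ≤ K, if K ∈ S then (c K : ℤ) else 0)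
      - (if H ≤ Z then M else 0) := by
      rw [hν]
      simp only [Finset.sum_sub_distrib, Finset.sum_add_distrib]
      rw [sw1, sw1, sw1, sum_sw H N, sum_sw H (fun a => B ⊓ N a), sum_sw H T, sum_sw H (fun s => T s ⊓ N (α s)), if_pos le_top]
    have eτ : (∑ s, if H ≤ T s then (1 : ℤ) else 0) - (∑ s, if H ≤ T s ⊓ N (α s) then 1 else 0)
        = c H := by
      have cE : c H = (Finset.univ.filter fun s => H ≤ T s ∧ ¬ H ≤ N (α s)).card := rfl
      rw [cE, ← Finset.sum_sub_distrib, Finset.card_filter, Nat.cast_sum]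
      refine Finset.sum_congr rfl fun s _ => ?_
      by_cases h1 : H ≤ T s <;> by_cases h2 : H ≤ N (α s) <;> simp [h1, h2]
    set r : ℤ := ∑ a, if H ≤ N a then 2 else 0 with hr
    have er : (∑ a, if H ≤ B ⊓ N a then (2 : ℤ) else 0) = if H ≤ B then r else 0 := by
      by_cases h1 : H ≤ B <;> simp [h1, hr]
    set u : ℤ := ∑ K with H ≤ K, if K ∈ S then (c K : ℤ) else 0 with hu
    have main : 2 - (if H ≤ B then 2 else 0) - r + (if H ≤ B then r else 0) - c H + u
        - (if H ≤ Z then M else 0) = if H = ⊤ then 2 else 0 := by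
      by_cases hHZ : H ≤ Z
      · obtain rfl : H = Z := le_antisymm hHZ hZH
        have h1 : c H = 0 := by
          rw [hc, Finset.card_eq_zero, Finset.filter_eq_empty_iff]
          exact fun s _ h => h.2 (hZN _)
        have h2 : u = M := by
          rw [hu, Finset.sum_ite, Finset.sum_const_zero, add_zero, hM]
          refine Finset.sum_congr ?_ fun _ _ => rfl
          ext K
          rw [Finset.mem_filter, Finset.mem_filter]
          exact ⟨fun h => h.2, fun h => ⟨⟨Finset.mem_univ _, ((memS K).mp h).1.le⟩, h⟩⟩
        have h3 : H ≠ ⊤ := fun h => hB (top_le_iff.mp (h ▸ hZB))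
        rw [if_pos hZB, if_pos hZB, if_pos le_rfl, if_neg h3, h1, h2]
        push_cast; ring
      have hlt : Z < H := lt_of_le_not_ge hZH hHZ
      rw [if_neg hHZ]
      have hu' : u = if H ∈ S then (c H : ℤ) else 0 := by
        rw [hu, Finset.sum_eq_single_of_mem H (by simp)]
        intro K hK hne
        rw [if_neg]
        intro hKS
        exact hne (hminS H K hlt (by simpa using hK) hKS).symm
      by_cases ht : H = ⊤
      · have h1 : r = 0 := by
          rw [hr]
          exact Finset.sum_eq_zero fun a _ => if_neg fun h => hN a (top_le_iff.mp (ht ▸ h))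
        have h2 : c H = 0 := by
          rw [hc, Finset.card_eq_zero, Finset.filter_eq_empty_iff]
          exact fun s _ h => hT s (top_le_iff.mp (ht ▸ h.1))
        rw [hu', if_neg (c := H ≤ B) fun h => hB (top_le_iff.mp (ht ▸ h)), h1, h2, if_pos ht]
        simp [ht]
      rw [if_neg ht]
      by_cases hr0 : ∀ a, ¬ H ≤ N a
      · have h1 : r = 0 := by
          rw [hr]
          exact Finset.sum_eq_zero fun a _ => if_neg (hr0 a)
        have h2 : H ∉ S := fun h => by
          obtain ⟨-, ⟨a, ha⟩, -⟩ := (memS H).mp h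
          exact hr0 a ha
        rw [hu', if_neg h2, h1]
        by_cases hb : H ≤ B
        · have h3 : c H = 0 := by
            rw [hc, Finset.card_eq_zero, Finset.filter_eq_empty_iff]
            exact fun s _ h => h.2 (hBT H s hb h.1)
          rw [if_pos hb, if_pos hb, h3]; simp
        · obtain ⟨s, hs⟩ := hcl H hZH ht hb hr0
          have h3 : c H = 2 := by
            rw [hc, Finset.card_eq_two]
            refine ⟨s, ι s, (hι s).1.symm, ?_⟩
            ext s'
            rw [Finset.mem_filter, Finset.mem_insert, Finset.mem_singleton]
            constructor
            · exact fun h => hTT H s s' hZH hs h.2.1 hr0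
            · rintro (h | h)
              · rw [h]; exact ⟨Finset.mem_univ _, hs, hr0 _⟩
              · rw [h, (hι s).2]; exact ⟨Finset.mem_univ _, hs, hr0 _⟩
          rw [if_neg hb, if_neg hb, h3]; simp
      · push Not at hr0
        obtain ⟨a, ha⟩ := hr0
        have h3 : u = c H := by
          rw [hu']
          by_cases hHS : H ∈ S
          · rw [if_pos hHS]
          · rw [if_neg hHS]
            symm
            rw [Nat.cast_eq_zero, hc, Finset.card_eq_zero, Finset.filter_eq_empty_iff]
            exact fun s _ h => hHS ((memS H).mpr ⟨hlt, ⟨a, ha⟩, s, h⟩)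
        rw [h3]
        by_cases hb : H ≤ B
        · rw [if_pos hb, if_pos hb]; ring
        · have h1 : r = 2 := by
            rw [hr, Finset.sum_eq_single_of_mem a (Finset.mem_univ _), if_pos ha]
            intro a' _ hne
            exact if_neg fun h => hb (hNN H a' a hne h ha)
          rw [if_neg hb, if_neg hb, h1]; ring
    rw [e, er]
    have h2 : (2 : ℤ) * (if H = ⊤ then 1 else 0) = if H = ⊤ then 2 else 0 := by
      split_ifs <;> norm_num
    rw [h2, ← main, ← eτ]
    ring
  have h := mobius_unique hsum Z le_rfl
  rw [h, hν, ← hMk]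
  have hNZ : ∀ a, Z ≠ N a := fun a h => hBN a (le_antisymm (inf_le_right.trans h.ge) (le_inf hZB (hZN a)))
  have hTZ : ∀ s, Z ≠ T s := fun s h =>
    hTN s (le_antisymm (inf_le_left.trans h.ge) (le_inf (hZT s) (hZN _)))
  have hZt : Z ≠ ⊤ := fun h => hB (top_le_iff.mp (h ▸ hZB))
  have hZS : Z ∉ S := fun h => lt_irrefl _ ((memS Z).mp h).1
  simp only [if_neg hZt, if_neg hBZ.symm, if_neg (hNZ _), if_neg (hBN _).symm, if_neg (hTZ _),
    if_neg (hTN _).symm, if_neg hZS, if_true, Finset.sum_const_zero]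
  ring

end mobius

/-! ### The subgroups above a transvection -/

section above

variable {F : Type*} [Field F] [StarRing F] [CharP F 2]

/-- The stabiliser of the line spanned by `v`. -/
noncomputable def lstab (v : V F) : Subgroup (UG F) := MulAction.stabilizer (UG F) (ln v)

/-- The stabiliser of a set of three lines. -/
noncomputable def fstab (a b c : V F) : Subgroup (UG F) := MulAction.stabilizer (UG F) {v | InFr a b c v}

theorem mem_lstab {v : V F} (hv : v ≠ 0) {g : UG F} : g ∈ lstab v ↔ ∃ a : F, g • v = a • v := by
  rw [lstab, MulAction.mem_stabilizer_iff, ln_ug]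
  constructor
  · intro h
    obtain ⟨a, -, h⟩ := ln_eq (ug_ne hv) h
    exact ⟨a, h⟩
  · rintro ⟨a, h⟩
    rw [h, ln_smul]
    rintro rfl
    exact ug_ne hv (by rw [h, zero_smul])

theorem InFr.smul {a b c v : V F} (h : InFr a b c v) (x : F) : InFr a b c (x • v) := by
  obtain ⟨y, h⟩ := h
  refine ⟨x * y, ?_⟩
  rcases h with h | h | h
  · left; rw [h, smul_smul]
  · right; left; rw [h, smul_smul]
  · right; right; rw [h, smul_smul]

theorem InFr.one {a b c : V F} (x : F) : InFr a b c (x • a) := ⟨x, Or.inl rfl⟩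
theorem InFr.two {a b c : V F} (x : F) : InFr a b c (x • b) := ⟨x, Or.inr (Or.inl rfl)⟩
theorem InFr.fst {a b c : V F} : InFr a b c a := ⟨1, Or.inl (one_smul _ _).symm⟩
theorem InFr.snd {a b c : V F} : InFr a b c b := ⟨1, Or.inr (Or.inl (one_smul _ _).symm)⟩
theorem InFr.trd {a b c : V F} : InFr a b c c := ⟨1, Or.inr (Or.inr (one_smul _ _).symm)⟩
theorem InFr.three {a b c : V F} (x : F) : InFr a b c (x • c) := ⟨x, Or.inr (Or.inr rfl)⟩

/-- The union of three lines does not depend on the spanning vectors. -/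
theorem InFr.sub {a b c a' b' c' : V F} (ha : InFr a b c a') (hb : InFr a b c b')
    (hc : InFr a b c c') {v : V F} (h : InFr a' b' c' v) : InFr a b c v := by
  obtain ⟨x, rfl | rfl | rfl⟩ := h
  exacts [ha.smul x, hb.smul x, hc.smul x]

theorem mem_fstab [Finite F] {a b c : V F} {g : UG F} :
    g ∈ fstab a b c ↔ ∀ v, InFr a b c v → InFr a b c (g • v) := by
  rw [fstab, MulAction.mem_stabilizer_iff]
  constructor
  · intro h v hv
    have : g • v ∈ g • {v | InFr a b c v} := Set.smul_mem_smul_set hv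
    rw [h] at this
    exact this
  · intro h
    refine Set.eq_of_subset_of_ncard_le ?_ ?_ (Set.toFinite _)
    · rintro x ⟨y, hy, rfl⟩
      exact h y hy
    · rw [Set.ncard_smul_set]

theorem mem_fstab_of [Finite F] {a b c : V F} {g : UG F} (ha : InFr a b c (g • a))
    (hb : InFr a b c (g • b)) (hc : InFr a b c (g • c)) : g ∈ fstab a b c := by
  rw [mem_fstab]
  rintro v ⟨x, rfl | rfl | rfl⟩
  all_goals rw [ug_smul]
  exacts [ha.smul x, hb.smul x, hc.smul x]

theorem fstab_congr {a b c a' b' c' : V F} (h : ∀ v, InFr a b c v ↔ InFr a' b' c' v) :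
    fstab a b c = fstab a' b' c' := by
  unfold fstab
  congr 1
  ext v
  exact h v

theorem ON.iso {a b c : V F} (h : ON a b c) {x : F} (hx : x * star x = 1) :
    hf (a + x • b) (a + x • b) = 0 := by
  simp only [hf_add_left, hf_add_right, hf_smul_left, hf_smul_right, h.aa, h.ab, h.ba, h.bb]
  grind

/-- The transvection which exchanges the first two lines of an orthogonal frame. -/
theorem ON.tv {a b c : V F} (h : ON a b c) {x : F} (hx : x * star x = 1) :
    tv (a + x • b) • a = x • b ∧ tv (a + x • b) • b = star x • a ∧ tv (a + x • b) • c = c := by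
  have hi := h.iso hx
  refine ⟨?_, ?_, ?_⟩
  · rw [tv_smul hi, hf_add_right, hf_smul_right, h.aa, h.ab]
    apply V.ext; intro i; simp only [V.add_apply, V.smul_apply]; grind
  · rw [tv_smul hi, hf_add_right, hf_smul_right, h.ba, h.bb]
    apply V.ext; intro i; simp only [V.add_apply, V.smul_apply]; grind
  · rw [tv_fix hi]
    rw [hf_add_right, hf_smul_right, h.ca, h.cb]; ring

theorem ON.tv_mem [Finite F] {a b c : V F} (h : ON a b c) {x : F} (hx : x * star x = 1) :
    PSUPaper.tv (a + x • b) ∈ fstab a b c := by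
  obtain ⟨h1, h2, h3⟩ := h.tv hx
  refine mem_fstab_of ?_ ?_ ?_
  · rw [h1]; exact InFr.two x
  · rw [h2]; exact InFr.one _
  · rw [h3]; exact InFr.trd

theorem lstab_smul {a : F} (ha : a ≠ 0) (v : V F) : lstab (a • v) = lstab v := by
  unfold lstab; rw [ln_smul ha]

/-- Scalars by which vectors of nonzero norm are multiplied have norm one. -/
theorem unit_of {g : UG F} {v w : V F} {c : F} (hv : hf v v = 1) (hw : hf w w = 1)
    (h : g • v = c • w) : c * star c = 1 := by
  have := ug_hf g v v
  rw [h, hf_smul_left, hf_smul_right, hv, hw] at this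
  linear_combination this

theorem mem_zp {p : V F} (hp : hf p p = 0) {g : UG F} :
    g ∈ Subgroup.zpowers (tv p) ↔ g = 1 ∨ g = tv p := by
  constructor
  · rintro ⟨k, rfl⟩
    have h2 : tv p ^ (2 : ℤ) = 1 := by rw [zpow_two, tv_mul_self hp]
    rcases Int.even_or_odd' k with ⟨m, rfl | rfl⟩
    · left; simp only []; rw [zpow_mul, h2, one_zpow]
    · right; simp only []; rw [zpow_add, zpow_mul, h2, one_zpow, one_mul, zpow_one]
  · rintro (rfl | rfl)
    · exact one_mem _
    · exact Subgroup.mem_zpowers _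

variable {p z r : V F}

/-- Vectors `s` of norm one with `hf s p = 1`; they correspond to the ordered pairs of distinct
lines exchanged by the transvection with centre `p` in some orthogonal frame. -/
abbrev Om (p : V F) := {s : V F // hf s s = 1 ∧ hf s p = 1}

/-- The vector `w_a` of norm one orthogonal to `p` with parameter `a`. -/
noncomputable def wv (p z : V F) (a : F) : V F := z + a • p

section
variable (h : HB p z r)
include h

theorem wv_wv (a b : F) : hf (wv p z a) (wv p z b) = 1 := by
  simp only [wv, hf_add_left, hf_add_right, hf_smul_left, hf_smul_right, h.zz, h.zp, h.pz, h.pp]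
  ring
theorem wv_p (a : F) : hf (wv p z a) p = 0 := by
  simp only [wv, hf_add_left, hf_smul_left, h.zp, h.pp]; ring
theorem wv_ne (a : F) : wv p z a ≠ 0 := by
  intro h0
  have := wv_wv h a a
  rw [h0, hf_zero_left] at this
  exact zero_ne_one this
theorem wv_add (a b : F) : wv p z b = wv p z a + (b + a) • p := by
  apply V.ext; intro i; simp only [wv, V.add_apply, V.smul_apply]; grind

/-- The norm one vectors orthogonal to `p` are multiples of the vectors `w_a`. -/
theorem perp_wv {v : V F} (hv : hf v v = 1) (hvp : hf v p = 0) :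
    ∃ c a : F, c ≠ 0 ∧ v = c • wv p z a := by
  have h1 := h.exp v
  rw [hvp, zero_smul, add_zero] at h1
  have h2 : hf v z ≠ 0 := by
    intro h2
    rw [h2, zero_smul, add_zero] at h1
    rw [h1, hf_smul_left, hf_smul_right, h.pp] at hv
    simp at hv
  refine ⟨hf v z, hf v r / hf v z, h2, ?_⟩
  nth_rewrite 1 [h1]
  rw [wv]
  apply V.ext; intro i; simp only [V.add_apply, V.smul_apply]
  field_simp
  ring

theorem om_wv (s : Om p) (a : F) : hf s.1 (wv p z a) = star (hf z s.1) + star a := by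
  simp only [wv, hf_add_right, hf_smul_right, s.2.2, hf_star]; ring

/-- The frame attached to `s`. -/
theorem om_on (s : Om p) : ON s.1 (s.1 + p) (wv p z (hf z s.1)) := by
  have h1 := s.2.1
  have h2 := s.2.2
  have h3 : hf p s.1 = 1 := by rw [← hf_star, h2, star_one]
  have h4 : hf s.1 (wv p z (hf z s.1)) = 0 := by rw [om_wv h, add_selfF]
  have h5 : hf p (wv p z (hf z s.1)) = 0 := hf_symm_zero (wv_p h _)
  refine ⟨h1, ?_, wv_wv h _ _, ?_, h4, ?_⟩
  · simp only [hf_add_left, hf_add_right, h1, h2, h3, h.pp]; grind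
  · simp only [hf_add_right, h1, h2]; grind
  · simp only [hf_add_left, h4, h5]; ring

/-- The vector of the other line of the pair exchanged by the transvection. -/
noncomputable def omι (_ : HB p z r) (s : Om p) : Om p :=
  ⟨s.1 + p, (om_on ‹HB p z r› s).bb, by rw [hf_add_left, s.2.2, HB.pp ‹HB p z r›, add_zero]⟩

/-- The stabiliser of the frame attached to `s`. -/
noncomputable def tstab (_ : HB p z r) (s : Om p) : Subgroup (UG F) :=
  fstab s.1 (s.1 + p) (wv p z (hf z s.1))

theorem tv_s (s : Om p) : tv p • s.1 = s.1 + p := by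
  rw [tv_smul h.pp, s.2.2, one_smul]
theorem tv_sp (s : Om p) : tv p • (s.1 + p) = s.1 := by
  rw [ug_add, tv_s h, tv_self h.pp, add_assoc, add_selfV, add_zero]
theorem tv_wv (a : F) : tv p • wv p z a = wv p z a := tv_fix h.pp (wv_p h a)

theorem zp_le {H : Subgroup (UG F)} (hH : tv p ∈ H) : Subgroup.zpowers (tv p) ≤ H := by
  rwa [Subgroup.zpowers_le]

theorem mem_N {a : F} {g : UG F} :
    g ∈ lstab (wv p z a) ↔ ∃ c : F, g • wv p z a = c • wv p z a := mem_lstab (wv_ne h a)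

theorem tv_mem_N (a : F) : tv p ∈ lstab (wv p z a) :=
  (mem_N h).mpr ⟨1, by rw [tv_wv h, one_smul]⟩

theorem mem_B {g : UG F} : g ∈ lstab p ↔ ∃ c : F, g • p = c • p := mem_lstab h.pne

variable [UFld F]

/-- The plane orthogonal to `p` is spanned by any two of the vectors `w_a`, and `p` spans its radical. -/
theorem hNN {g : UG F} {a a' : F} (hne : a ≠ a') (h1 : g ∈ lstab (wv p z a))
    (h2 : g ∈ lstab (wv p z a')) : g ∈ lstab p := by
  rw [mem_N h] at h1 h2
  obtain ⟨c, hc⟩ := h1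
  obtain ⟨d, hd⟩ := h2
  have key : ∀ (b e : F), g • wv p z b = e • wv p z b → hf (g • p) (wv p z b) = 0 := by
    intro b e he
    have he0 : e ≠ 0 := by rintro rfl; exact ug_ne (wv_ne h b) (by rw [he, zero_smul])
    have := ug_hf g p (wv p z b)
    rw [hf_symm_zero (wv_p h b), he, hf_smul_right] at this
    exact (mul_eq_zero.mp this).resolve_left fun h => he0 (star_eq_zero.mp h)
  have k1 := key a c hc
  have k2 := key a' d hd
  rw [wv_add h a a', hf_add_right, k1, zero_add, hf_smul_right] at k2
  have : star (a' + a) ≠ 0 := by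
    rw [Ne, star_eq_zero]
    intro h0; apply hne; grind
  rw [mem_B h]
  exact iso_par h.pp (iso_ug h.pp g) h.pne ((mul_eq_zero.mp k2).resolve_left this)

variable [Finite F]

theorem tv_mem_T (s : Om p) : tv p ∈ tstab h s := by
  refine mem_fstab_of ?_ ?_ ?_
  · rw [tv_s h]; exact InFr.snd
  · rw [tv_sp h]; exact InFr.fst
  · rw [tv_wv h]; exact InFr.trd

/-- Images of the third vector of the frame. -/
theorem T_img (s : Om p) {g : UG F} (hg : g ∈ tstab h s) : ∃ c : F, c * star c = 1 ∧
    (g • wv p z (hf z s.1) = c • s.1 ∨ g • wv p z (hf z s.1) = c • (s.1 + p) ∨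
      g • wv p z (hf z s.1) = c • wv p z (hf z s.1)) := by
  have := mem_fstab.mp hg (wv p z (hf z s.1)) InFr.trd
  have hon := om_on h s
  obtain ⟨c, hc⟩ := this
  refine ⟨c, ?_, hc⟩
  rcases hc with hc | hc | hc
  exacts [unit_of hon.cc hon.aa hc, unit_of hon.cc hon.bb hc, unit_of hon.cc hon.cc hc]

theorem hBT (s : Om p) {g : UG F} (h1 : g ∈ lstab p) (h2 : g ∈ tstab h s) :
    g ∈ lstab (wv p z (hf z s.1)) := by
  obtain ⟨c, hc, h3⟩ := T_img h s h2
  obtain ⟨a, ha⟩ := (mem_B h).mp h1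
  have ha0 : star a ≠ 0 := by
    rw [Ne, star_eq_zero]; rintro rfl; exact ug_ne h.pne (by rw [ha, zero_smul])
  have h4 := ug_hf g (wv p z (hf z s.1)) p
  rw [wv_p h, ha, hf_smul_right] at h4
  have h5 := (mul_eq_zero.mp h4).resolve_left ha0
  have hs := s.2.2
  rcases h3 with h3 | h3 | h3
  · rw [h3, hf_smul_left, hs, mul_one] at h5
    exact absurd h5 (unit_ne hc)
  · rw [h3, hf_smul_left, hf_add_left, hs, h.pp, add_zero, mul_one] at h5
    exact absurd h5 (unit_ne hc)
  · exact (mem_N h).mpr ⟨c, h3⟩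

/-- An element fixing the third line of the frame fixes or exchanges the other two. -/
theorem T_alt (s : Om p) {g : UG F} (hg : g ∈ tstab h s) {e : F}
    (he : g • wv p z (hf z s.1) = e • wv p z (hf z s.1)) :
    ∃ c d : F, (g • s.1 = c • s.1 ∧ g • (s.1 + p) = d • (s.1 + p)) ∨
      ((tv p * g) • s.1 = c • s.1 ∧ (tv p * g) • (s.1 + p) = d • (s.1 + p)) := by
  have hon := om_on h s
  have he0 : e ≠ 0 := unit_ne (unit_of hon.cc hon.cc he)
  have ha : InFr s.1 (s.1 + p) (wv p z (hf z s.1)) (g • s.1) :=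
    mem_fstab.mp hg s.1 InFr.fst
  have hb : InFr s.1 (s.1 + p) (wv p z (hf z s.1)) (g • (s.1 + p)) :=
    mem_fstab.mp hg (s.1 + p) InFr.snd
  obtain ⟨c, hc⟩ := ha
  obtain ⟨d, hd⟩ := hb
  have hxc := ug_hf g s.1 (wv p z (hf z s.1))
  have hxd := ug_hf g (s.1 + p) (wv p z (hf z s.1))
  have hcd := ug_hf g s.1 (s.1 + p)
  rw [he, hon.ac, hf_smul_right] at hxc
  rw [he, hon.bc, hf_smul_right] at hxd
  rw [hon.ab] at hcd
  have he' : star e ≠ 0 := by rwa [Ne, star_eq_zero]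
  rcases hc with hc | hc | hc
  · have hc1 := unit_ne (unit_of hon.aa hon.aa hc)
    rcases hd with hd | hd | hd
    · exfalso
      have hd1 := unit_ne (unit_of hon.bb hon.aa hd)
      rw [hc, hd, hf_smul_left, hf_smul_right, hon.aa] at hcd
      simp [hc1, hd1] at hcd
    · exact ⟨c, d, Or.inl ⟨hc, hd⟩⟩
    · exfalso
      have hd1 := unit_ne (unit_of hon.bb hon.cc hd)
      rw [hd, hf_smul_left, hon.cc] at hxd
      simp [he0, hd1] at hxd
  · have hc1 := unit_ne (unit_of hon.aa hon.bb hc)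
    rcases hd with hd | hd | hd
    · exact ⟨c, d, Or.inr ⟨by rw [mul_smul, hc, ug_smul, tv_sp h], by
        rw [mul_smul, hd, ug_smul, tv_s h]⟩⟩
    · exfalso
      have hd1 := unit_ne (unit_of hon.bb hon.bb hd)
      rw [hc, hd, hf_smul_left, hf_smul_right, hon.bb] at hcd
      simp [hc1, hd1] at hcd
    · exfalso
      have hd1 := unit_ne (unit_of hon.bb hon.cc hd)
      rw [hd, hf_smul_left, hon.cc] at hxd
      simp [he0, hd1] at hxd
  · exfalso
    have hc1 := unit_ne (unit_of hon.aa hon.cc hc)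
    rw [hc, hf_smul_left, hon.cc] at hxc
    simp [he0, hc1] at hxc

end
end above

/-! ### Intersections of the maximal subgroups -/

section above2

variable {F : Type*} [Field F] [StarRing F] [CharP F 2] [UFld F] [Finite F] {p z r : V F}
theorem ON.coord {a b c : V F} (hon : ON a b c) {x y t x' y' t' : F}
    (e : x • a + y • b + t • c = x' • a + y' • b + t' • c) : x = x' ∧ y = y' ∧ t = t' := by
  have f1 := congrArg (fun v => hf v a) e
  have f2 := congrArg (fun v => hf v b) e
  have f3 := congrArg (fun v => hf v c) e
  simp only [hf_add_left, hf_smul_left, hon.aa, hon.ba, hon.ca] at f1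
  simp only [hf_add_left, hf_smul_left, hon.ab, hon.bb, hon.cb] at f2
  simp only [hf_add_left, hf_smul_left, hon.ac, hon.bc, hon.cc] at f3
  exact ⟨by linear_combination f1, by linear_combination f2, by linear_combination f3⟩

variable (h : HB p z r)
include h

/-- An element stabilising the frame and each of its lines, with equal scalars, is trivial. -/
theorem diag_one (s : Om p) {g : UG F} {c : F} (h1 : g • s.1 = c • s.1)
    (h2 : g • (s.1 + p) = c • (s.1 + p))
    (h3 : g • wv p z (hf z s.1) = c • wv p z (hf z s.1)) : g = 1 := by
  have hon := om_on h s
  have hc := unit_of hon.aa hon.aa h1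
  have h4 := hon.third h1 h2
  rw [h3] at h4
  have h5 : c = star (c * c) := smul_left_injective F (wv_ne h _) h4
  have hc1 : c = 1 := by
    refine UFld.no3 c hc ?_
    rw [star_mul'] at h5
    have : c ^ 3 = (c * star c) * (c * star c) * 1 := by
      rw [pow_succ, pow_two]; nth_rewrite 3 [h5]; ring
    rw [this, hc]; ring
  rw [hc1, one_smul] at h1 h2
  exact hon.ug_eq (by rw [h1, one_smul]) (by rw [h2, one_smul])

/-- Only the transvection stabilises the frame, its third line and another line `⟨w_a⟩`. -/
theorem T_N_N (s : Om p) {g : UG F} {a : F} (hne : a ≠ hf z s.1) (hT : g ∈ tstab h s)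
    (hN : g ∈ lstab (wv p z a)) (hN' : g ∈ lstab (wv p z (hf z s.1))) :
    g ∈ Subgroup.zpowers (tv p) := by
  have hon := om_on h s
  -- it suffices to treat elements fixing all lines of the frame
  have key : ∀ g : UG F, g ∈ lstab (wv p z a) → g ∈ lstab (wv p z (hf z s.1)) →
      ∀ c d : F, g • s.1 = c • s.1 → g • (s.1 + p) = d • (s.1 + p) → g = 1 := by
    intro g hN hN' c d hc hd
    obtain ⟨b, hb⟩ := (mem_N h).mp hN
    obtain ⟨e, he⟩ := (mem_N h).mp hN'
    rw [wv_add h (hf z s.1) a] at hb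
    have hu : a + hf z s.1 ≠ 0 := by intro h0; apply hne; grind
    set u := a + hf z s.1 with hud
    set w := wv p z (hf z s.1) with hw
    have ew : w + u • p = u • s.1 + u • (s.1 + p) + w := by
      apply V.ext; intro i; simp only [V.add_apply, V.smul_apply]; grind
    rw [ew, ug_add, ug_add, ug_smul, ug_smul, hc, hd, he, smul_smul, smul_smul, smul_add b (_ + _) w,
      smul_add b (u • s.1), smul_smul b u, smul_smul b u (s.1 + p)] at hb
    obtain ⟨f1, f2, g3⟩ := hon.coord hb
    have g1 : c = b := mul_left_cancel₀ hu (by linear_combination f1)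
    have g2 : d = b := mul_left_cancel₀ hu (by linear_combination f2)
    rw [g1] at hc
    rw [g2] at hd
    rw [g3] at he
    exact diag_one h s hc hd he
  obtain ⟨e, he⟩ := (mem_N h).mp hN'
  rw [mem_zp h.pp]
  obtain ⟨c, d, h1 | h1⟩ := T_alt h s hT he
  · exact Or.inl (key g hN hN' c d h1.1 h1.2)
  · right
    have := key _ (mul_mem (tv_mem_N h a) hN) (mul_mem (tv_mem_N h _) hN') c d h1.1 h1.2
    rw [← tv_inv h.pp]
    exact eq_inv_of_mul_eq_one_right this

/-- The only subgroup above `Z = ⟨tv p⟩`, other than `Z`, which stabilises a frame and a line `⟨w_a⟩`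
different from its third line is their common stabiliser, which does not fix the third line. -/
theorem hmin {H : Subgroup (UG F)} (s : Om p) {a : F} (hZ : Subgroup.zpowers (tv p) < H)
    (hT : H ≤ tstab h s) (hN : H ≤ lstab (wv p z a)) (hne : a ≠ hf z s.1) :
    H = tstab h s ⊓ lstab (wv p z a) ∧ ¬ H ≤ lstab (wv p z (hf z s.1)) := by
  have hσ : tv p ∈ H := hZ.le (Subgroup.mem_zpowers _)
  obtain ⟨k, hkH, hkZ⟩ := SetLike.exists_of_lt hZ
  have hkN : k ∉ lstab (wv p z (hf z s.1)) := fun hk =>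
    hkZ (T_N_N h s hne (hT hkH) (hN hkH) hk)
  refine ⟨le_antisymm (le_inf hT hN) ?_, fun hle => hkN (hle hkH)⟩
  rintro g ⟨hgT, hgN⟩
  have fin : ∀ k' ∈ H, (k'⁻¹ * g) ∈ lstab (wv p z (hf z s.1)) → g ∈ H := by
    intro k' hk' hk
    have := hZ.le (T_N_N h s hne (mul_mem (inv_mem (hT hk')) hgT) (mul_mem (inv_mem (hN hk')) hgN) hk)
    have := mul_mem hk' this
    rwa [mul_inv_cancel_left] at this
  have fin2 : ∀ (k' : UG F) (x : V F) (c d : F), c * star c = 1 → g • wv p z (hf z s.1) = d • x →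
      k' • wv p z (hf z s.1) = c • x → (k'⁻¹ * g) ∈ lstab (wv p z (hf z s.1)) := by
    intro k' x c d hc hg hk
    have hx : x = star c • (k' • wv p z (hf z s.1)) := by
      rw [hk, smul_smul (star c) c, mul_comm, hc, one_smul]
    rw [mem_N h]
    refine ⟨d * star c, ?_⟩
    rw [mul_smul, hg, hx, ug_smul, ug_smul, inv_smul_smul, smul_smul d]
  obtain ⟨c, hc, h1⟩ := T_img h s (hT hkH)
  obtain ⟨d, hd, h2⟩ := T_img h s hgT
  have hσk := mul_mem hσ hkH
  rcases h1 with h1 | h1 | h1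
  · rcases h2 with h2 | h2 | h2
    · exact fin k hkH (fin2 k _ c d hc h2 h1)
    · exact fin _ hσk (fin2 _ _ c d hc h2 (by rw [mul_smul, h1, ug_smul, tv_s h]))
    · exact hZ.le (T_N_N h s hne hgT hgN ((mem_N h).mpr ⟨d, h2⟩))
  · rcases h2 with h2 | h2 | h2
    · exact fin _ hσk (fin2 _ _ c d hc h2 (by rw [mul_smul, h1, ug_smul, tv_sp h]))
    · exact fin k hkH (fin2 k _ c d hc h2 h1)
    · exact hZ.le (T_N_N h s hne hgT hgN ((mem_N h).mpr ⟨d, h2⟩))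
  · exact absurd ((mem_N h).mpr ⟨c, h1⟩) hkN

theorem hf_wv_s (s : Om p) (a : F) : hf (wv p z a) s.1 = hf z s.1 + a := by
  have : hf p s.1 = 1 := by rw [← hf_star, s.2.2, star_one]
  rw [wv, hf_add_left, hf_smul_left, this, mul_one]

theorem hf_wv_sp (s : Om p) (a : F) : hf (wv p z a) (s.1 + p) = hf z s.1 + a := by
  rw [hf_add_right, hf_wv_s h, wv_p h, add_zero]

/-- The intersection of `T s` and `N a` is larger than `Z` exactly when `w_a` has products of norm one with
the first two vectors of the frame. -/
theorem mem_hk (s : Om p) {a : F} (hne : a ≠ hf z s.1) :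
    Subgroup.zpowers (tv p) < tstab h s ⊓ lstab (wv p z a) ↔
      (hf z s.1 + a) * star (hf z s.1 + a) = 1 := by
  have hon := om_on h s
  constructor
  · intro hlt
    obtain ⟨-, hnot⟩ := hmin h s hlt inf_le_left inf_le_right hne
    obtain ⟨g, ⟨hgT, hgN⟩, hg⟩ := SetLike.not_le_iff_exists.mp hnot
    obtain ⟨d, hd⟩ := (mem_N h).mp hgN
    have hd1 := unit_of (wv_wv h a a) (wv_wv h a a) hd
    obtain ⟨c, hc, h1⟩ := T_img h s hgT
    have h2 := ug_hf g (wv p z a) (wv p z (hf z s.1))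
    rw [wv_wv h, hd] at h2
    have h3 : d * (star c * (hf z s.1 + a)) = 1 := by
      rcases h1 with h1 | h1 | h1
      · rw [h1, hf_smul_left, hf_smul_right, hf_wv_s h] at h2; exact h2
      · rw [h1, hf_smul_left, hf_smul_right, hf_wv_sp h] at h2; exact h2
      · exact absurd ((mem_N h).mpr ⟨c, h1⟩) hg
    have h4 := congrArg star h3
    rw [star_mul', star_mul', star_star, star_one] at h4
    grind
  · intro hu
    set u := hf z s.1 + a with hud
    have ht : ON (wv p z (hf z s.1)) s.1 (s.1 + p) := hon.rot.rot
    have hm := ht.tv_mem hu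
    obtain ⟨t1, t2, t3⟩ := ht.tv hu
    have hi := ht.iso hu
    set τ := tv (wv p z (hf z s.1) + u • s.1) with hτ
    rw [SetLike.lt_iff_le_and_exists]
    refine ⟨zp_le h ⟨tv_mem_T h s, tv_mem_N h a⟩, τ, ⟨?_, ?_⟩, ?_⟩
    · have e : tstab h s = fstab (wv p z (hf z s.1)) s.1 (s.1 + p) := by
        refine fstab_congr fun v => ?_
        unfold InFr
        exact exists_congr fun c => by tauto
      rw [e]; exact hm
    · refine (mem_N h).mpr ⟨1, ?_⟩
      rw [one_smul]
      refine tv_fix hi ?_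
      rw [hf_add_right, hf_smul_right, wv_wv h, hf_wv_s h, ← hud]
      grind
    · intro hZ
      obtain ⟨e, he⟩ := (mem_N h).mp (zp_le h (tv_mem_N h (hf z s.1)) hZ)
      rw [t1] at he
      have := congrArg (fun v => hf v s.1) he
      simp only [hf_smul_left, hon.aa, hon.ca] at this
      rw [mul_zero, mul_one] at this
      exact unit_ne hu this

/-- An element which stabilises all lines of one frame, and another frame with a different third
line, is trivial. -/
theorem diag_triv {s s' : Om p} (hne : hf z s.1 ≠ hf z s'.1) {g : UG F} (hT' : g ∈ tstab h s')
    {c d e : F} (h1 : g • s.1 = c • s.1) (h2 : g • (s.1 + p) = d • (s.1 + p))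
    (h3 : g • wv p z (hf z s.1) = e • wv p z (hf z s.1)) : g = 1 := by
  have hon := om_on h s
  have hc := unit_of hon.aa hon.aa h1
  have hd := unit_of hon.bb hon.bb h2
  have hsp := hon.ba
  have hab := hon.ab
  have hac := hon.ac
  have hbc := hon.bc
  have hs2 := s.2.2
  set w := wv p z (hf z s.1) with hw
  set w' := wv p z (hf z s'.1) with hw'
  have hu : hf z s.1 + hf z s'.1 ≠ 0 := by intro h0; apply hne; grind
  set u := hf z s.1 + hf z s'.1 with hud
  have ew' : w' = u • s.1 + u • (s.1 + p) + w := by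
    rw [hw', wv_add h (hf z s.1), ← hw]
    apply V.ext; intro i; simp only [V.add_apply, V.smul_apply]; grind
  have gw' : g • w' = (u * c) • s.1 + (u * d) • (s.1 + p) + e • w := by
    rw [ew', ug_add, ug_add, ug_smul, ug_smul, h1, h2, h3, smul_smul, smul_smul]
  obtain ⟨l, hl, h4⟩ := T_img h s' hT'
  -- if the third line of the second frame moves, its coordinates give a cube root of unity
  have bad : ∀ t : V F, hf t t = 1 → hf t p = 1 → hf t w' = 0 → g • w' = l • t → False := by
    intro t ht htp htw hg
    have e1 := congrArg (fun v => hf v p) hg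
    rw [gw'] at e1
    simp only [hf_add_left _ _ p, hf_smul_left, hs2, h.pp, htp] at e1
    rw [wv_p h] at e1
    have e2 := congrArg (fun v => hf v w) hg
    rw [gw'] at e2
    simp only [hf_add_left (_ + _) _ w, hf_add_left (_ • _) _ w, hf_smul_left, hac, hbc, hon.cc] at e2
    have e3 : hf t w = star u := by
      have : w = w' + u • p := by
        rw [ew']; apply V.ext; intro i; simp only [V.add_apply, V.smul_apply]; grind
      rw [this, hf_add_right, hf_smul_right, htw, htp]; ring
    have he := unit_of hon.cc hon.cc h3
    rw [e3] at e2
    have hu1 : u * star u = 1 := by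
      have e4 : e = l * star u := by linear_combination e2
      rw [e4, star_mul', star_star] at he
      linear_combination he - (u * star u) * hl
    -- the ratio of the coordinates of `g w'`
    set y := u * c * star l with hy
    have hy1 : y * star y = 1 := by
      rw [hy]; exact unit_mul (unit_mul hu1 hc) (unit_star hl)
    have hy2 : (y + 1) * star (y + 1) = 1 := by
      have e5 : y + 1 = u * d * star l := by
        rw [hy]
        have : (u * c + u * d) * star l = 1 := by
          have : u * c + u * d = l := by linear_combination e1
          rw [this, hl]
        grind
      rw [e5]; exact unit_mul (unit_mul hu1 hd) (unit_star hl)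
    rw [star_add, star_one] at hy2
    have hy3 : y + star y = 1 := by grind
    have hy4 : y ^ 3 = 1 := by grind
    have := UFld.no3 y hy1 hy4
    rw [this, star_one, add_selfF] at hy3
    exact zero_ne_one hy3
  have hon' := om_on h s'
  rcases h4 with h4 | h4 | h4
  · exact (bad _ hon'.aa s'.2.2 hon'.ac h4).elim
  · refine (bad _ hon'.bb ?_ hon'.bc h4).elim
    rw [hf_add_left, s'.2.2, h.pp, add_zero]
  · have h5 := h4
    rw [← hw', gw', ew', smul_add l (_ + _) w, smul_add l (u • s.1), smul_smul l u,
      smul_smul l u (s.1 + p)] at h5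
    obtain ⟨f1, f2, g3⟩ := hon.coord h5
    have g1 : c = l := mul_left_cancel₀ hu (by linear_combination f1)
    have g2 : d = l := mul_left_cancel₀ hu (by linear_combination f2)
    rw [g1] at h1
    rw [g2] at h2
    rw [g3] at h3
    exact diag_one h s h1 h2 h3

end above2

/-! ### Frames stabilised by a subgroup -/

section above3

variable {F : Type*} [Field F] [StarRing F] [CharP F 2] [UFld F] [Finite F] {p z r : V F}
variable (h : HB p z r)
include h

/-- A subgroup which permutes the lines of two frames transitively comes from a single frame. -/
theorem hTT {H : Subgroup (UG F)} (s s' : Om p) (hσ : tv p ∈ H) (hT : H ≤ tstab h s)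
    (hT' : H ≤ tstab h s') (hN : ∀ a, ¬ H ≤ lstab (wv p z a)) : s' = s ∨ s' = omι h s := by
  have hon := om_on h s
  -- an element moving the third line to the first
  obtain ⟨k, hk, c, hc, hkw⟩ : ∃ k ∈ H, ∃ c : F, c * star c = 1 ∧
      k • wv p z (hf z s.1) = c • s.1 := by
    obtain ⟨k, hk, hk'⟩ := SetLike.not_le_iff_exists.mp (hN (hf z s.1))
    obtain ⟨c, hc, h1 | h1 | h1⟩ := T_img h s (hT hk)
    · exact ⟨k, hk, c, hc, h1⟩
    · exact ⟨_, mul_mem hσ hk, c, hc, by rw [mul_smul, h1, ug_smul, tv_sp h]⟩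
    · exact absurd ((mem_N h).mpr ⟨c, h1⟩) hk'
  by_cases hne : hf z s.1 = hf z s'.1
  · obtain ⟨c', hc', h1⟩ := T_img h s' (hT' hk)
    rw [← hne, hkw] at h1
    rcases h1 with h1 | h1 | h1
    · left
      have h2 := congrArg (fun v => hf v p) h1
      simp only [hf_smul_left, s.2.2, s'.2.2, mul_one] at h2
      rw [← h2] at h1
      exact Subtype.ext (smul_right_injective _ (unit_ne hc) h1.symm)
    · right
      have h2 := congrArg (fun v => hf v p) h1
      simp only [hf_smul_left, hf_add_left, s.2.2, s'.2.2, h.pp, add_zero, mul_one] at h2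
      rw [← h2] at h1
      have h3 : s.1 = s'.1 + p := smul_right_injective _ (unit_ne hc) h1
      exact Subtype.ext (V.eq_add_of h3.symm)
    · exfalso
      have h2 := congrArg (fun v => hf v p) h1
      simp only [hf_smul_left, s.2.2, mul_one, wv_p h, mul_zero] at h2
      exact unit_ne hc h2
  · exfalso
    have hkp0 : hf (k • p) s.1 = 0 := by
      have h1 := ug_hf k p (wv p z (hf z s.1))
      rw [hkw, hf_smul_right, hf_symm_zero (wv_p h _)] at h1
      exact (mul_eq_zero.mp h1).resolve_left (star_ne_zero.mpr (unit_ne hc))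
    have hkpi : hf (k • p) (k • p) = 0 := iso_ug h.pp k
    obtain ⟨β, γ, hkp⟩ : ∃ β γ : F, k • p = β • (s.1 + p) + γ • wv p z (hf z s.1) := by
      have := hon.exp (k • p)
      rw [hkp0, zero_smul, zero_add] at this
      exact ⟨_, _, this⟩
    have hβγ : β * star β = γ * star γ := by
      rw [hkp] at hkpi
      simp only [hf_add_left _ (_ • _) (_ + _ • _), hf_add_right _ (_ • _) (_ • _), hf_smul_left,
        hf_smul_right, hon.bb, hon.cc, hon.bc, hon.cb] at hkpi
      grind
    have hβ1 : γ * star γ = 1 := by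
      obtain ⟨l, hl⟩ := mem_fstab.mp (hT hk) s.1 InFr.fst
      have h1 := ug_hf k p s.1
      rw [← hf_star s.1 p, s.2.2, star_one] at h1
      rcases hl with hl | hl | hl
      · rw [hl, hf_smul_right, hkp0, mul_zero] at h1
        exact absurd h1 zero_ne_one
      · have hl1 := unit_of hon.aa hon.bb hl
        rw [hl, hkp, hf_smul_right, hf_add_left _ (_ • _), hf_smul_left, hf_smul_left, hon.bb,
          hon.cb] at h1
        rw [← hβγ]
        have : β = l := by linear_combination l * h1 - β * hl1
        rw [this, hl1]
      · have hl1 := unit_of hon.aa hon.cc hl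
        rw [hl, hkp, hf_smul_right, hf_add_left _ (_ • _), hf_smul_left, hf_smul_left, hon.bc,
          hon.cc] at h1
        have : γ = l := by linear_combination l * h1 - γ * hl1
        rw [this, hl1]
    set v := β * star γ with hv
    have hv1 : v * star v = 1 := unit_mul (hβγ.trans hβ1) (unit_star hβ1)
    have hkp2 : k • p = γ • (wv p z (hf z s.1) + v • (s.1 + p)) := by
      rw [hkp, smul_add γ _ (v • _), smul_smul γ v, hv, add_comm]
      congr 2
      linear_combination -β * hβ1
    have ht : ON (wv p z (hf z s.1)) (s.1 + p) s.1 := ⟨hon.cc, hon.bb, hon.aa, hon.cb, hon.ca, hon.ba⟩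
    obtain ⟨t1, t2, t3⟩ := ht.tv hv1
    have hi := ht.iso hv1
    have hτ : tv (wv p z (hf z s.1) + v • (s.1 + p)) ∈ H := by
      rw [← tv_unit hi hβ1, ← hkp2, ← tv_conj h.pp]
      exact mul_mem (mul_mem hk hσ) (inv_mem hk)
    set τ := tv (wv p z (hf z s.1) + v • (s.1 + p)) with hτd
    -- the line fixed by the group generated by the two transvections
    set a := hf z s.1 + v with ha
    have hτa : τ ∈ lstab (wv p z a) := by
      refine (mem_N h).mpr ⟨1, ?_⟩
      rw [one_smul]
      refine tv_fix hi ?_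
      rw [hf_add_right, hf_smul_right, wv_wv h, hf_wv_sp h, ha]
      grind
    have hσa := tv_mem_N h a
    have key : ∀ g ∈ H, ∀ e : F, g • wv p z (hf z s.1) = e • wv p z (hf z s.1) →
        g ∈ lstab (wv p z a) := by
      intro g hg e he
      obtain ⟨c, d, h1 | h1⟩ := T_alt h s (hT hg) he
      · rw [diag_triv h hne (hT' hg) h1.1 h1.2 he]
        exact one_mem _
      · have := diag_triv h hne (hT' (mul_mem hσ hg)) h1.1 h1.2
          (by rw [mul_smul, he, ug_smul, tv_wv h])
        rw [← Subgroup.mul_mem_cancel_left _ hσa, this]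
        exact one_mem _
    apply hN a
    intro g hg
    obtain ⟨d, hd, h1 | h1 | h1⟩ := T_img h s (hT hg)
    · rw [← Subgroup.mul_mem_cancel_left _ hσa, ← Subgroup.mul_mem_cancel_left _ hτa]
      refine key _ (mul_mem hτ (mul_mem hσ hg)) (d * star v) ?_
      rw [mul_smul, mul_smul, h1, ug_smul, tv_s h, ug_smul, t2, smul_smul d]
    · rw [← Subgroup.mul_mem_cancel_left _ hτa]
      refine key _ (mul_mem hτ hg) (d * star v) ?_
      rw [mul_smul, h1, ug_smul, t2, smul_smul d]
    · exact key g hg d h1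

/-- A frame stabilised by the transvection is attached to some `s`: the transvection exchanges two of
its lines. -/
theorem frame_case {H : Subgroup (UG F)} (hσ : tv p ∈ H) {e₁ e₂ e₃ : V F} (hon : ON e₁ e₂ e₃)
    (hH : ∀ g ∈ H, ∀ v, InFr e₁ e₂ e₃ v → InFr e₁ e₂ e₃ (g • v)) : ∃ s : Om p, H ≤ tstab h s := by
  -- reduction to the case where the transvection moves the first line to the second
  have main : ∀ (e₁ e₂ e₃ : V F), ON e₁ e₂ e₃ →
      (∀ g ∈ H, ∀ v, InFr e₁ e₂ e₃ v → InFr e₁ e₂ e₃ (g • v)) → hf e₁ p ≠ 0 →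
      ∀ x : F, tv p • e₁ = x • e₂ → ∃ s : Om p, H ≤ tstab h s := by
    intro e₁ e₂ e₃ hon hH hc x hx
    have hx1 := unit_of hon.aa hon.bb hx
    set c := hf e₁ p with hcd
    have h1 := tv_smul h.pp e₁
    rw [hx] at h1
    have hc1 : c * star c = 1 := by
      have h2 := congrArg (fun v => hf v e₁) h1
      simp only [hf_smul_left, hf_add_left, hon.ba, hon.aa, ← hf_star e₁ p] at h2
      rw [← hcd] at h2
      grind
    have hs1 : hf (star c • e₁) (star c • e₁) = 1 := by
      rw [hf_smul_left, hf_smul_right, hon.aa, star_star]; linear_combination hc1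
    have hs2 : hf (star c • e₁) p = 1 := by
      rw [hf_smul_left, ← hcd]; linear_combination hc1
    have hsp : star c • e₁ + p = (star c * x) • e₂ := by
      rw [← smul_smul, h1]
      apply V.ext; intro i; simp only [V.add_apply, V.smul_apply]; grind
    set s : Om p := ⟨star c • e₁, hs1, hs2⟩ with hs
    refine ⟨s, ?_⟩
    have he3s : hf e₃ s.1 = 0 := by
      change hf e₃ (star c • e₁) = 0
      rw [hf_smul_right, hon.ca, mul_zero]
    have he3p : hf e₃ p = 0 := by
      have : hf e₃ (s.1 + p) = 0 := by
        change hf e₃ (star c • e₁ + p) = 0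
        rw [hsp, hf_smul_right, hon.cb, mul_zero]
      rw [hf_add_right, he3s, zero_add] at this
      exact this
    obtain ⟨u, a, hu, he3⟩ := perp_wv h hon.cc he3p
    have haα : a = hf z s.1 := by
      rw [he3, hf_smul_left, hf_wv_s h] at he3s
      have := (mul_eq_zero.mp he3s).resolve_left hu
      grind
    rw [haα] at he3
    have hw : wv p z (hf z s.1) = u⁻¹ • e₃ := by
      rw [he3, smul_smul, inv_mul_cancel₀ hu, one_smul]
    have e : tstab h s = fstab e₁ e₂ e₃ := by
      refine fstab_congr fun v => ⟨InFr.sub ?_ ?_ ?_, InFr.sub ?_ ?_ ?_⟩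
      · exact InFr.one _
      · change InFr _ _ _ (star c • e₁ + p)
        rw [hsp]; exact InFr.two _
      · rw [hw]; exact InFr.three _
      · have : e₁ = c • s.1 := by
          change _ = c • star c • e₁
          rw [smul_smul, hc1, one_smul]
        exact ⟨_, Or.inl this⟩
      · have : e₂ = (c * star x) • (s.1 + p) := by
          change _ = (c * star x) • (star c • e₁ + p)
          rw [hsp, smul_smul]
          have : c * star x * (star c * x) = 1 := by
            linear_combination (x * star x) * hc1 + hx1
          rw [this, one_smul]
        exact ⟨_, Or.inr (Or.inl this)⟩
      · exact ⟨u, Or.inr (Or.inr he3)⟩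
    rw [e]
    exact fun g hg => mem_fstab.mpr (hH g hg)
  have hswap : ∀ {a b c v : V F}, InFr a b c v → InFr a c b v := by
    rintro a b c v ⟨x, hx⟩
    exact ⟨x, by tauto⟩
  have main2 : ∀ (e₁ e₂ e₃ : V F), ON e₁ e₂ e₃ →
      (∀ g ∈ H, ∀ v, InFr e₁ e₂ e₃ v → InFr e₁ e₂ e₃ (g • v)) → hf e₁ p ≠ 0 →
      ∃ s : Om p, H ≤ tstab h s := by
    intro e₁ e₂ e₃ hon hH hc
    obtain ⟨x, hx | hx | hx⟩ := hH _ hσ e₁ InFr.fst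
    · exfalso
      -- then `p` would be a multiple of `e₁`
      have h1 := tv_smul h.pp e₁
      rw [hx] at h1
      have h2 : hf e₁ p • p = (x + 1) • e₁ := by
        apply V.ext; intro i
        have := congrFun h1 i
        change x * e₁ i = e₁ i + hf e₁ p * p i at this
        simp only [V.smul_apply]; grind
      have h3 := iso_smul h.pp (hf e₁ p)
      rw [h2, hf_smul_left, hf_smul_right, hon.aa, mul_one] at h3
      rw [norm_zero h3, zero_smul] at h2
      exact smul_ne_zero hc h.pne h2
    · exact main e₁ e₂ e₃ hon hH hc x hx
    · exact main e₁ e₃ e₂ ⟨hon.aa, hon.cc, hon.bb, hon.ac, hon.ab, hon.cb⟩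
        (fun g hg v hv => hswap (hH g hg v (hswap hv))) hc x hx
  have hperm : ∀ {a b c v : V F}, InFr a b c v → InFr b c a v := by
    rintro a b c v ⟨x, hx⟩
    exact ⟨x, by tauto⟩
  by_cases h1 : hf e₁ p = 0
  · by_cases h2 : hf e₂ p = 0
    · by_cases h3 : hf e₃ p = 0
      · exfalso
        have := hon.exp p
        rw [hf_symm_zero h1, hf_symm_zero h2, hf_symm_zero h3] at this
        simp only [zero_smul, add_zero] at this
        exact h.pne this
      · exact main2 e₃ e₁ e₂ hon.rot.rot
          (fun g hg v hv => hperm (hperm (hH g hg v (hperm hv)))) h3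
    · exact main2 e₂ e₃ e₁ hon.rot
        (fun g hg v hv => hperm (hH g hg v (hperm (hperm hv)))) h2
  · exact main2 e₁ e₂ e₃ hon hH h1

/-- The classification, restated for subgroups above `Z` in terms of the lines `⟨w_a⟩` and the frames
attached to `p`: a transvection can stabilise an anisotropic line or a frame only if these are among
the listed ones. -/
theorem hcl {H : Subgroup (UG F)} (hσ : tv p ∈ H) (hH : H ≠ ⊤) (hB : ¬ H ≤ lstab p)
    (hN : ∀ a, ¬ H ≤ lstab (wv p z a)) : ∃ s : Om p, H ≤ tstab h s := by
  -- a line fixed by the transvection is orthogonal to its centre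
  have perp : ∀ (v : V F) (b : F), v ≠ 0 → tv p • v = b • v → hf v p = 0 := by
    intro v b hv hb
    by_contra hc
    rw [tv_smul h.pp] at hb
    have h2 : hf v p • p = (b + 1) • v := by
      apply V.ext; intro i
      have := congrFun hb i
      change v i + hf v p * p i = b * v i at this
      simp only [V.smul_apply]; grind
    have h3 := congrArg (fun x => hf x p) h2
    simp only [hf_smul_left, h.pp, mul_zero] at h3
    rw [(mul_eq_zero.mp h3.symm).resolve_right hc, zero_smul] at h2
    exact smul_ne_zero hc h.pne h2
  rcases classify ⟨h.pne, h.pp, hσ⟩ with h1 | ⟨p', hp', hi, h1⟩ | ⟨w, hw, h1⟩ | ⟨e₁, e₂, e₃, hon, h1⟩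
  · exact absurd h1 hH
  · exfalso
    apply hB
    obtain ⟨b, hb⟩ := h1 _ hσ
    obtain ⟨a, ha, hpa⟩ := iso_par' h.pp hi h.pne hp' (perp p' b hp' hb)
    intro g hg
    rw [← lstab_smul ha, ← hpa]
    exact (mem_lstab hp').mpr (h1 g hg)
  · exfalso
    have hw0 : w ≠ 0 := by rintro rfl; rw [hf_zero_left] at hw; exact zero_ne_one hw
    obtain ⟨b, hb⟩ := h1 _ hσ
    obtain ⟨c, a, hc, hwa⟩ := perp_wv h hw (perp w b hw0 hb)
    apply hN a
    intro g hg
    rw [← lstab_smul hc, ← hwa]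
    exact (mem_lstab hw0).mpr (h1 g hg)
  · exact frame_case h hσ hon h1

end above3

/-! ### The Möbius function at a transvection -/

section above4

variable {F : Type*} [Field F] [StarRing F] [CharP F 2] [UFld F] [Finite F] {p z r : V F}
variable (h : HB p z r)
include h

theorem B_ne_top : lstab p ≠ ⊤ := by
  intro ht
  obtain ⟨a, ha⟩ := (mem_B h).mp (ht ▸ Subgroup.mem_top (tv r))
  rw [tv_smul h.rr, h.pr, one_smul] at ha
  have := congrArg (fun v => hf v p) ha
  simp only [hf_add_left, hf_smul_left, h.pp, h.rp] at this
  simp at this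

theorem N_ne_top (a : F) : lstab (wv p z a) ≠ ⊤ := by
  intro ht
  obtain ⟨t, hb⟩ := exists_HB_unit h.pp h.pne (wv_wv h a a) (hf_symm_zero (wv_p h a))
  obtain ⟨x, hx⟩ := UFld.trace (1 : F) (star_one F)
  set q := x • p + wv p z a + t with hq
  have hqi : hf q q = 0 := by
    simp only [hq, hf_add_left, hf_add_right, hf_smul_left, hf_smul_right, hb.pp, hb.pz, hb.pr, hb.zp,
      hb.zz, hb.zr, hb.rp, hb.rz, hb.rr]
    grind
  obtain ⟨b, hb'⟩ := (mem_N h).mp (ht ▸ Subgroup.mem_top (tv q))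
  have h1 : hf (wv p z a) q = 1 := by
    simp only [hq, hf_add_right, hf_smul_right, hb.zp, hb.zz, hb.zr]; ring
  rw [tv_smul hqi, h1, one_smul] at hb'
  have := congrArg (fun v => hf v p) hb'
  simp only [hq, hf_add_left, hf_smul_left, hb.pp, hb.zp, hb.rp] at this
  simp at this

/-- A transvection with centre `p` other than the given one. -/
theorem exists_tvc : ∃ c : F, star c = c ∧ c ≠ 0 ∧ c ≠ 1 ∧ tv (c • p) ∉ Subgroup.zpowers (tv p) := by
  obtain ⟨c, hc, h0, h1⟩ := UFld.big (F := F)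
  refine ⟨c, hc, h0, h1, ?_⟩
  rw [mem_zp h.pp]
  rintro (h2 | h2)
  · exact tv_ne_one (iso_smul h.pp c) (smul_ne_zero h0 h.pne) h2
  · obtain ⟨u, hu, h3⟩ := tv_eq (iso_smul h.pp c) h.pp (smul_ne_zero h0 h.pne) h2
    have := smul_left_injective F h.pne h3
    rw [← this] at hu
    exact h1 (fix_unit hc hu)

theorem T_ne_top (s : Om p) : tstab h s ≠ ⊤ := by
  intro ht
  have hon := om_on h s
  obtain ⟨c, hc, h0, h1, -⟩ := exists_tvc h
  obtain ⟨x, hx⟩ := mem_fstab.mp (show tv (c • p) ∈ tstab h s from ht ▸ Subgroup.mem_top _) s.1 InFr.fst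
  rw [tv_csmul h.pp, s.2.2, hc] at hx
  have e : s.1 + (c * c * 1) • p =
      (1 + c * c) • s.1 + (c * c) • (s.1 + p) + (0 : F) • wv p z (hf z s.1) := by
    apply V.ext; intro i; simp only [V.add_apply, V.smul_apply]; grind
  have n0 : c * c ≠ 0 := mul_ne_zero h0 h0
  have n1 : 1 + c * c ≠ 0 := by
    intro h2
    have : (c + 1) * (c + 1) = 0 := by grind
    apply h1
    have := mul_self_eq_zero.mp this
    grind
  rw [e] at hx
  rcases hx with hx | hx | hx
  · exact n0 (hon.coord (x' := x) (y' := 0) (t' := 0) (by rw [hx]; simp)).2.1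
  · exact n1 (hon.coord (x' := 0) (y' := x) (t' := 0) (by rw [hx]; simp)).1
  · exact n1 (hon.coord (x' := 0) (y' := 0) (t' := x) (by rw [hx]; simp)).1

theorem BN_ne (a : F) : lstab p ⊓ lstab (wv p z a) ≠ Subgroup.zpowers (tv p) := by
  obtain ⟨c, hc, h0, h1, h2⟩ := exists_tvc h
  intro he
  apply h2
  rw [← he]
  refine ⟨(mem_B h).mpr ⟨1, ?_⟩, (mem_N h).mpr ⟨1, ?_⟩⟩
  · rw [one_smul]; refine tv_fix (iso_smul h.pp c) ?_; rw [hf_smul_right, h.pp, mul_zero]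
  · rw [one_smul]; refine tv_fix (iso_smul h.pp c) ?_; rw [hf_smul_right, wv_p h, mul_zero]

/-- The stabiliser of the third line in a frame stabiliser contains the other transvections exchanging
the first two lines. -/
theorem TN_ne (s : Om p) :
    tstab h s ⊓ lstab (wv p z (hf z s.1)) ≠ Subgroup.zpowers (tv p) := by
  obtain ⟨b, hb, hb1⟩ := UFld.unitne (F := F)
  have hon := om_on h s
  obtain ⟨t1, t2, t3⟩ := hon.tv hb
  intro he
  have hm : tv (s.1 + b • (s.1 + p)) ∈ Subgroup.zpowers (tv p) := by
    rw [← he]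
    exact ⟨hon.tv_mem hb, (mem_N h).mpr ⟨1, by rw [one_smul, t3]⟩⟩
  have hne : s.1 + p ≠ 0 := by
    intro h0; have := hon.bb; rw [h0, hf_zero_left] at this; exact zero_ne_one this
  rcases (mem_zp h.pp).mp hm with h1 | h1
  · rw [h1, one_smul] at t1
    have := hon.aa
    nth_rewrite 1 [t1] at this
    rw [hf_smul_left, hon.ba, mul_zero] at this
    exact zero_ne_one this
  · rw [h1, tv_s h] at t1
    apply hb1
    have : (1 : F) • (s.1 + p) = b • (s.1 + p) := by rw [one_smul]; exact t1
    exact (smul_left_injective F hne this).symm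

/-- In a hyperbolic basis, the vectors of `Om p` are given by an arbitrary middle coordinate and a
coordinate of prescribed trace. -/
theorem card_om : Nat.card (Om p) = Nat.card F * Nat.card {x : F // star x = x} := by
  have ht : ∀ y : F, ∃ b : F, b + star b = 1 + y * star y := fun y =>
    UFld.trace _ (fix_add (star_one F) (fix_norm y))
  choose b hb using ht
  rw [← Nat.card_prod]
  have hcalc : ∀ x y : F, hf (x • p + y • z + r) (x • p + y • z + r) = x + star x + y * star y := by
    intro x y
    simp only [hf_add_left, hf_add_right, hf_smul_left, hf_smul_right, h.pp, h.pz, h.pr, h.zp,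
      h.zz, h.zr, h.rp, h.rz, h.rr]
    ring
  have hexp : ∀ s : Om p, s.1 = hf s.1 r • p + hf s.1 z • z + r := by
    intro s
    have := h.exp s.1
    rwa [s.2.2, one_smul] at this
  refine Nat.card_congr
    { toFun := fun s => (hf s.1 z, ⟨hf s.1 r + b (hf s.1 z), ?_⟩)
      invFun := fun q => ⟨(q.2.1 + b q.1) • p + q.1 • z + r, ?_, ?_⟩
      left_inv := ?_
      right_inv := ?_ }
  · have h1 := s.2.1
    rw [hexp s, hcalc] at h1
    have := hb (hf s.1 z)
    rw [star_add]; grind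
  · rw [hcalc]
    have := hb q.1
    have := q.2.2
    rw [star_add]; grind
  · simp only [hf_add_left, hf_smul_left, h.pp, h.zp, h.rp]; ring
  · intro s
    apply Subtype.ext
    simp only []
    rw [add_assoc (hf s.1 r), add_selfF, add_zero]
    exact (hexp s).symm
  · rintro ⟨y, x, hx⟩
    have h1 : hf ((x + b y) • p + y • z + r) z = y := by
      simp only [hf_add_left, hf_smul_left, h.pz, h.zz, h.rz]; ring
    have h2 : hf ((x + b y) • p + y • z + r) r = x + b y := by
      simp only [hf_add_left, hf_smul_left, h.pr, h.zr, h.rr]; ring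
    ext
    · exact h1
    · simp only [h1, h2]
      rw [add_assoc, add_selfF, add_zero]

end above4

/-- The value of the Möbius function at the group generated by a transvection. -/
theorem mu_tv {F : Type*} [Field F] [StarRing F] [CharP F 2] [UFld F] [Finite F] {p : V F}
    (hp0 : p ≠ 0) (hp : hf p p = 0) {mu : Subgroup (UG F) → ℤ} (hmu : IsSubgroupMobius mu) :
    2 * mu (Subgroup.zpowers (tv p)) = -((Nat.card F * Nat.card {x : F // star x = x} : ℕ) *
      (Nat.card {x : F // x * star x = 1} : ℕ)) := by
  obtain ⟨z, r, h⟩ := exists_HB_pair hp hp0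
  have := Fintype.ofFinite F
  have := Fintype.ofFinite (Om p)
  rw [← card_om h, Nat.card_eq_fintype_card]
  refine mobius_abstract (A := F) (Ω := Om p) (B := lstab p) (N := fun a => lstab (wv p z a))
    (T := fun s => tstab h s) (α := fun s => hf z s.1) (ι := omι h)
    (zp_le h ((mem_B h).mpr ⟨1, by rw [tv_self hp, one_smul]⟩)) (fun a => zp_le h (tv_mem_N h a))
    (fun s => zp_le h (tv_mem_T h s)) (B_ne_top h) (N_ne_top h) (T_ne_top h) (BN_ne h) (TN_ne h)
    ?_ ?_ ?_ ?_ ?_ ?_ ?_ ?_ hmu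
  · intro he
    apply BN_ne h 0
    refine le_antisymm (inf_le_left.trans he.le) (le_inf he.ge (zp_le h (tv_mem_N h _)))
  · exact fun H s h1 h2 g hg => hBT h s (h1 hg) (h2 hg)
  · exact fun H a a' hne h1 h2 g hg => hNN h hne (h1 hg) (h2 hg)
  · exact fun H s a hZ h1 h2 hne => hmin h s hZ h1 h2 hne
  · intro s
    rw [← Fintype.card_subtype, ← Nat.card_eq_fintype_card]
    refine Nat.card_congr
      { toFun := fun a => ⟨hf z s.1 + a.1, (mem_hk h s a.2.1).mp a.2.2⟩
        invFun := fun u => ⟨hf z s.1 + u.1, ?_⟩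
        left_inv := ?_
        right_inv := ?_ }
    · have hne : hf z s.1 + u.1 ≠ hf z s.1 := by
        intro h0
        exact unit_ne u.2 (by simpa using h0)
      refine ⟨hne, (mem_hk h s hne).mpr ?_⟩
      rw [← add_assoc, add_selfF, zero_add]; exact u.2
    · intro a; apply Subtype.ext; simp only []; rw [← add_assoc, add_selfF, zero_add]
    · intro a; apply Subtype.ext; simp only []; rw [← add_assoc, add_selfF, zero_add]
  · intro s
    constructor
    · intro he
      have := congrArg Subtype.val he
      exact hp0 (by simpa [omι] using this)
    · refine fstab_congr fun v => ?_
      have e1 : (omι h s).1 = s.1 + p := rfl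
      have e2 : hf z (s.1 + p) = hf z s.1 := by rw [hf_add_right, h.zp, add_zero]
      rw [e1, e2, add_assoc, add_selfV, add_zero]
      unfold InFr
      exact exists_congr fun c => by tauto
  · intro H s s' hZ h1 h2 h3
    exact hTT h s s' (hZ (Subgroup.mem_zpowers _)) h1 h2 h3
  · intro H hZ h1 h2 h3
    exact hcl h (hZ (Subgroup.mem_zpowers _)) h1 h2 h3

/-! ### The field of `q²` elements -/

section fq2

variable {n : ℕ}

theorem star_fq (x : Fq2 n) : star x = x ^ qval n := rfl

instance : CharP (Fq2 n) 2 := inferInstance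
instance : Finite (Fq2 n) := inferInstance

theorem qval_mul_self : qval n * qval n = 2 ^ 2 ^ (n + 1) := by
  rw [← pow_add, ← two_mul, pow_succ, mul_comm]

theorem card_fq : Nat.card (Fq2 n) = qval n * qval n := by
  rw [GaloisField.card 2 (2 ^ (n + 1)) (by positivity), qval_mul_self]

theorem one_lt_qval : 1 < qval n := Nat.one_lt_two_pow (by positivity)

/-- The number of solutions of `x ^ d = 1` in the multiplicative group of `F_{q²}`. -/
theorem card_pow_one {d e : ℕ} (hd : 0 < d) (h : d * e = qval n * qval n - 1) :
    Nat.card {x : Fq2 n // x ^ d = 1} = d := by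
  have hc : Nat.card (Fq2 n)ˣ = d * e := by rw [Nat.card_units, card_fq, h]
  have h1 := IsCyclic.card_powMonoidHom_ker (G := (Fq2 n)ˣ) d
  rw [hc, Nat.gcd_mul_right_left] at h1
  refine Eq.trans (Nat.card_congr ?_) h1
  exact
    { toFun := fun x => ⟨Units.ofPowEqOne x.1 d x.2 hd.ne', Units.ext x.2⟩
      invFun := fun u => ⟨u.1.1, congrArg Units.val (MonoidHom.mem_ker.mp u.2)⟩
      left_inv := fun x => rfl
      right_inv := fun u => Subtype.ext (Units.ext rfl) }

theorem card_norm_one : Nat.card {x : Fq2 n // x * star x = 1} = qval n + 1 := by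
  have := card_pow_one (n := n) (d := qval n + 1) (e := qval n - 1) (by omega)
    (by rw [← Nat.sq_sub_sq (qval n) 1]; simp [pow_two])
  rw [← this]
  exact Nat.card_congr (Equiv.subtypeEquivRight fun x => by rw [star_fq, pow_succ' x (qval n)])

theorem card_fixed : Nat.card {x : Fq2 n // star x = x} = qval n := by
  have h0 := one_lt_qval (n := n)
  have := card_pow_one (n := n) (d := qval n - 1) (e := qval n + 1) (by omega)
    (by rw [mul_comm, ← Nat.sq_sub_sq (qval n) 1]; simp [pow_two])
  have e : {x : Fq2 n // star x = x} ≃ Option {x : Fq2 n // x ^ (qval n - 1) = 1} :=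
    { toFun := fun x => if h : x.1 = 0 then none else some ⟨x.1, by
        have := x.2
        rw [star_fq, ← Nat.sub_add_cancel h0.le, pow_succ] at this
        exact mul_right_cancel₀ h (by rw [this, one_mul])⟩
      invFun := fun y => y.elim ⟨0, star_zero _⟩ fun x => ⟨x.1, by
        
          have h1 := pow_succ x.1 (qval n - 1)
          rw [Nat.sub_add_cancel h0.le, x.2, one_mul] at h1
          rw [star_fq, h1]⟩
      left_inv := fun x => by
        by_cases h : x.1 = 0
        · simp only [h, dite_true, Option.elim_none]; exact Subtype.ext h.symm
        · simp [h]
      right_inv := fun y => by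
        cases y with
        | none => simp
        | some x =>
          have : x.1 ≠ 0 := by
            intro h
            have := x.2
            rw [h, zero_pow (by omega)] at this
            exact zero_ne_one this
          simp [this] }
  rw [Nat.card_congr e, Finite.card_option, this]
  omega

/-- The fixed elements of `star` form the subfield `F_q`; a subfield with fewer elements has `2^(2^j)`
elements with `j < n`, so its quadratic extension inside `F_{q²}` still lies in `F_q`. -/
theorem fq_chain (C : Subfield (Fq2 n)) (hC : ∀ c ∈ C, star c = c) :
    (∀ c, star c = c → c ∈ C) ∨
      ∀ θ : Fq2 n, θ + star θ ∈ C → θ * star θ ∈ C → star θ = θ := by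
  have hcard : Nat.card (Fq2 n) = Nat.card C ^ Module.finrank C (Fq2 n) :=
    Module.natCard_eq_pow_finrank
  rw [card_fq, qval_mul_self] at hcard
  have hle : Nat.card C ≤ qval n := by
    rw [← card_fixed]
    exact Nat.card_le_card_of_injective (fun c : C => (⟨c.1, hC c.1 c.2⟩ : {x : Fq2 n // star x = x}))
      fun a b h => Subtype.ext (congrArg (fun z => z.1) h)
  have hr0 : Module.finrank C (Fq2 n) ≠ 0 := by
    intro h
    rw [h, pow_zero] at hcard
    have : 1 < 2 ^ 2 ^ (n + 1) := Nat.one_lt_two_pow (by positivity)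
    omega
  obtain ⟨m, -, hm⟩ := (Nat.dvd_prime_pow Nat.prime_two).mp
    (hcard ▸ dvd_pow_self (Nat.card C) hr0)
  rw [hm, ← pow_mul] at hcard
  have hmr := Nat.pow_right_injective le_rfl hcard
  obtain ⟨j, -, hj⟩ := (Nat.dvd_prime_pow Nat.prime_two).mp ⟨_, hmr⟩
  rw [hj] at hm
  rw [hm] at hle
  have hjn : j ≤ n := by
    have h1 := (Nat.pow_le_pow_iff_right (by norm_num)).mp hle
    exact (Nat.pow_le_pow_iff_right (by norm_num)).mp h1
  rcases hjn.eq_or_lt with rfl | hlt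
  · left
    have hbij := (Nat.bijective_iff_injective_and_card
      (fun c : C => (⟨c.1, hC c.1 c.2⟩ : {x : Fq2 j // star x = x}))).mpr
      ⟨fun a b h => Subtype.ext (congrArg (fun z => z.1) h), by rw [hm, card_fixed]⟩
    intro c hc
    obtain ⟨y, hy⟩ := hbij.2 ⟨c, hc⟩
    have := congrArg (fun z => z.1) hy
    simp only at this
    rw [← this]
    exact y.2
  · right
    intro θ ht hs
    set Q := 2 ^ 2 ^ j with hQ
    have hpow : ∀ c ∈ C, c ^ Q = c := by
      intro c hc
      have : (⟨c, hc⟩ : C) ^ Nat.card C = ⟨c, hc⟩ := by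
        have := Fintype.ofFinite C
        rw [Nat.card_eq_fintype_card]; exact FiniteField.pow_card _
      rw [hm] at this
      exact congrArg Subtype.val this
    have hadd : ∀ a b : Fq2 n, (a + b) ^ Q = a ^ Q + b ^ Q := fun a b =>
      add_pow_char_pow a b 2 (2 ^ j)
    set t := θ + star θ with htd
    set s := θ * star θ with hsd
    have hroot : θ * θ + t * θ + s = 0 := by rw [htd, hsd]; grind
    have h1 : θ ^ Q * θ ^ Q + t * θ ^ Q + s = 0 := by
      have := congrArg (· ^ Q) hroot
      simp only [hadd, mul_pow, hpow t ht, hpow s hs] at this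
      rw [this, zero_pow (by positivity)]
    have h2 : (θ ^ Q + θ) * (θ ^ Q + (θ + t)) = 0 := by grind
    have h3 : (θ ^ Q) ^ Q = θ := by
      rcases mul_eq_zero.mp h2 with h | h
      · have : θ ^ Q = θ := by grind
        rw [this, this]
      · have : θ ^ Q = θ + t := by grind
        rw [this, hadd, this, hpow t ht]; grind
    have h4 : ∀ k, θ ^ ((2 ^ 2 ^ (j + 1)) ^ k) = θ := by
      intro k
      induction k with
      | zero => simp
      | succ k ih =>
        rw [pow_succ (2 ^ 2 ^ (j + 1)) k, pow_mul, ih, ← qval_mul_self (n := j), pow_mul]; exact h3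
    obtain ⟨i, hi⟩ := Nat.exists_eq_add_of_lt hlt
    rw [star_fq, show qval n = (2 ^ 2 ^ (j + 1)) ^ 2 ^ i by
      rw [← pow_mul, ← pow_add, qval, hi]; congr 2; omega]
    exact h4 _

theorem ufld_fq (hn : 1 ≤ n) : UFld (Fq2 n) where
  sqrt := by
    intro c hc
    obtain ⟨k, hk⟩ : ∃ k, qval n = k * 2 := by
      obtain ⟨m, hm⟩ := Nat.exists_eq_succ_of_ne_zero (show 2 ^ n ≠ 0 by positivity)
      exact ⟨2 ^ m, by rw [qval, hm, pow_succ]⟩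
    refine ⟨c ^ k, by rw [star_pow, hc], ?_⟩
    rw [← pow_add, ← mul_two, ← hk, ← star_fq, hc]
  no3 := by
    intro a h1 h3
    have hq : qval n % 3 = 1 := by
      obtain ⟨m, rfl⟩ := Nat.exists_eq_add_of_le' hn
      rw [qval, pow_succ 2 m, mul_comm, pow_mul, Nat.pow_mod]
      norm_num
    have h2 : star a = a := by
      rw [star_fq, ← Nat.div_add_mod (qval n) 3, hq, pow_succ, pow_mul, h3, one_pow, one_mul]
    rw [h2] at h1
    rw [pow_succ, pow_two, h1, one_mul] at h3
    exact h3
  trace := by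
    obtain ⟨a, ha⟩ : ∃ a : Fq2 n, star a ≠ a := by
      by_contra h
      push Not at h
      have h1 := card_fixed (n := n)
      rw [Nat.card_congr (Equiv.subtypeUnivEquiv h), card_fq] at h1
      have := one_lt_qval (n := n)
      nlinarith
    have hne : a + star a ≠ 0 := fun h => ha (by grind)
    have hst : star (a + star a) = a + star a := by rw [star_add, star_star, add_comm]
    intro c hc
    refine ⟨c / (a + star a) * a, ?_⟩
    rw [star_mul', star_div₀, hc, hst, ← mul_add, div_mul_cancel₀ _ hne]
  big := by
    by_contra h
    push Not at h
    have h1 := card_fixed (n := n)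
    have h2 : 4 ≤ qval n := by
      have : 2 ^ 1 ≤ 2 ^ n := Nat.pow_le_pow_right (by norm_num) hn
      exact Nat.pow_le_pow_right (n := 2) (by norm_num) this
    have h3 : Nat.card {x : Fq2 n // star x = x} ≤ Nat.card Bool := by
      refine Nat.card_le_card_of_injective (fun x => decide (x.1 = 0)) fun x y hxy => ?_
      simp only [decide_eq_decide] at hxy
      by_cases hx : x.1 = 0
      · exact Subtype.ext (hx.trans (hxy.mp hx).symm)
      · exact Subtype.ext ((h _ x.2 hx).trans (h _ y.2 fun hy => hx (hxy.mpr hy)).symm)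
    rw [h1, Nat.card_eq_fintype_card, Fintype.card_bool] at h3
    omega
  unitne := by
    by_contra h
    push Not at h
    have h1 := card_norm_one (n := n)
    have : Subsingleton {x : Fq2 n // x * star x = 1} :=
      ⟨fun x y => Subtype.ext ((h _ x.2).trans (h _ y.2).symm)⟩
    have h2 := Finite.card_le_one_iff_subsingleton.mpr this
    have := one_lt_qval (n := n)
    omega
  chain := fq_chain

end fq2

/-! ### Identification of `PSU(3,q)` and conclusion -/

section center

variable {F : Type*} [Field F] [StarRing F] [CharP F 2] [UFld F]

/-- The centre of the special unitary group is trivial: a central element fixes every isotropic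
line, hence is a scalar `u` with `u * star u = 1` and `u ^ 3 = 1`. -/
theorem center_ug : Subgroup.center (UG F) = ⊥ := by
  rw [eq_bot_iff]
  intro g hg
  rw [Subgroup.mem_center_iff] at hg
  have key : ∀ p : V F, p ≠ 0 → hf p p = 0 → ∃ u : F, u * star u = 1 ∧ g • p = u • p := by
    intro p hp0 hp
    refine tv_eq (by rw [ug_hf, hp]) hp (ug_ne hp0) ?_
    rw [← tv_conj hp, ← hg, mul_inv_cancel_right]
  have agree : ∀ {p r : V F} {u w : F}, u * star u = 1 → w * star w = 1 → g • p = u • p →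
      g • r = w • r → hf p r ≠ 0 → u = w := by
    intro p r u w hu hw h1 h2 hpr
    have h3 := ug_hf g p r
    rw [h1, h2, hf_smul_left, hf_smul_right, ← mul_assoc] at h3
    have h4 : u * star w = 1 := mul_right_cancel₀ hpr (by rw [h3, one_mul])
    calc u = u * (w * star w) := by rw [hw, mul_one]
      _ = (u * star w) * w := by ring
      _ = w := by rw [h4, one_mul]
  obtain ⟨p, hp0, hp⟩ : ∃ p : V F, p ≠ 0 ∧ hf p p = 0 := by
    refine ⟨![1, 1, 0], fun h => ?_, ?_⟩
    · have := congrFun h 0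
      exact one_ne_zero this
    · simp only [hf, Matrix.cons_val_zero, Matrix.cons_val_one, Matrix.cons_val_two, star_one]
      simp
      grind
  obtain ⟨z, r, hb⟩ := exists_HB_pair hp hp0
  have hr0 : r ≠ 0 := by
    rintro rfl
    have := hb.pr
    rw [hf_zero_right] at this
    exact zero_ne_one this
  obtain ⟨a, ha⟩ := UFld.trace (1 : F) (star_one F)
  have hrp : hf r p = 1 := by rw [← hf_star, hb.pr, star_one]
  have hzp : hf z p = 0 := hf_symm_zero hb.pz
  have hzr : hf z r = 0 := hf_symm_zero hb.rz
  have hs : hf (z + a • p + r) (z + a • p + r) = 0 := by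
    simp only [hf_add_left, hf_add_right, hf_smul_left, hf_smul_right, hb.pp, hb.rr, hb.zz, hb.pr,
      hb.pz, hb.rz, hrp, hzp, hzr]
    grind
  have hsp : hf p (z + a • p + r) = 1 := by
    simp only [hf_add_right, hf_smul_right, hb.pp, hb.pr, hb.pz]; ring
  have hs0 : z + a • p + r ≠ 0 := by
    intro h
    rw [h, hf_zero_right] at hsp
    exact zero_ne_one hsp
  obtain ⟨u, hu, h1⟩ := key p hp0 hp
  obtain ⟨u2, hu2, h2⟩ := key r hr0 hb.rr
  obtain ⟨u3, hu3, h3⟩ := key _ hs0 hs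
  obtain rfl := agree hu hu2 h1 h2 (by rw [hb.pr]; exact one_ne_zero)
  obtain rfl := agree hu hu3 h1 h3 (by rw [hsp]; exact one_ne_zero)
  have h4 := hb.third h1 h2
  have h5 : g • z = u • z := by
    rw [ug_add, ug_add, ug_smul, h1, h2, smul_add, smul_add, smul_comm a u p] at h3
    exact add_right_cancel (add_right_cancel h3)
  have hz0 : z ≠ 0 := by
    rintro rfl
    have := hb.zz
    rw [hf_zero_right] at this
    exact zero_ne_one this
  have h6 : u = star (u * u) := by
    have := h5.symm.trans h4
    exact smul_left_injective F hz0 this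
  have h7 : u = 1 := by
    refine UFld.no3 u hu ?_
    have h8 : star u = u * u := by rw [h6, star_star, ← h6]
    rw [h8] at hu
    rw [← hu]; ring
  rw [Subgroup.mem_bot]
  exact hb.ug_eq (by rw [h1, h7, one_smul, one_smul]) (by rw [h2, h7, one_smul, one_smul])

end center

section iso

variable {n : ℕ}

theorem hf_dot (x y : V (Fq2 n)) : hf x y = dotProduct (α := Fq2 n) (m := Fin 3) x (star y) := by
  simp only [hf, dotProduct, Fin.sum_univ_three]; rfl

theorem vol_det (x y z : V (Fq2 n)) :
    vol x y z = (Matrix.of fun i j : Fin 3 => (![x, y, z] : Fin 3 → V (Fq2 n)) j i).det := by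
  rw [Matrix.det_fin_three]
  change vol x y z = x 0 * y 1 * z 2 - x 0 * z 1 * y 2 - y 0 * x 1 * z 2 + y 0 * z 1 * x 2 +
    z 0 * x 1 * y 2 - z 0 * y 1 * x 2
  unfold vol
  grind

theorem dot_unitary {A : Matrix (Fin 3) (Fin 3) (Fq2 n)} (h : star A * A = 1)
    (x y : Fin 3 → Fq2 n) : A.mulVec x ⬝ᵥ star (A.mulVec y) = x ⬝ᵥ star y := by
  rw [Matrix.star_mulVec, dotProduct_comm, ← Matrix.dotProduct_mulVec, Matrix.mulVec_mulVec,
    ← Matrix.star_eq_conjTranspose, h, Matrix.one_mulVec, dotProduct_comm]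

/-- The linear map given by a matrix of `SU(3,q)`. -/
noncomputable def toUG (M : SU3 n) : UG (Fq2 n) :=
  ⟨Matrix.UnitaryGroup.toLinearEquiv M.1, by
    refine ⟨fun x y => ?_, fun x y z => ?_⟩
    · have h : star (M.1 : Matrix (Fin 3) (Fin 3) (Fq2 n)) * M.1 = 1 :=
        Matrix.UnitaryGroup.star_mul_self M.1
      rw [hf_dot, hf_dot]
      exact dot_unitary h x y
    · rw [vol_det, vol_det]
      have h : (M.1 : Matrix (Fin 3) (Fin 3) (Fq2 n)).det = 1 := M.2
      rw [← one_mul (Matrix.det (Matrix.of fun i j : Fin 3 => (![x, y, z] : Fin 3 → V (Fq2 n)) j i)),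
        ← h, ← Matrix.det_mul]
      congr 1
      ext i j
      fin_cases j <;> rfl⟩

theorem toUG_smul (M : SU3 n) (v : V (Fq2 n)) :
    toUG M • v = ((M.1 : Matrix (Fin 3) (Fin 3) (Fq2 n)).mulVec v : Fin 3 → Fq2 n) := rfl

theorem toUG_mul (M N : SU3 n) : toUG (M * N) = toUG M * toUG N := by
  apply ug_ext
  intro v
  rw [mul_smul, toUG_smul, toUG_smul, toUG_smul]
  exact (Matrix.mulVec_mulVec _ _ _).symm

theorem toUG_injective : Function.Injective (toUG (n := n)) := by
  intro M N h
  apply Subtype.ext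
  apply Subtype.ext
  apply Matrix.ext_of_mulVec_single
  intro i
  have h1 : toUG M • (show V (Fq2 n) from Pi.single i (1 : Fq2 n)) =
      toUG N • (show V (Fq2 n) from Pi.single i (1 : Fq2 n)) := by rw [h]
  exact h1

theorem toUG_surjective : Function.Surjective (toUG (n := n)) := by
  intro g
  let e : Fin 3 → V (Fq2 n) := fun j => (Pi.single j (1 : Fq2 n) : Fin 3 → Fq2 n)
  set M : Matrix (Fin 3) (Fin 3) (Fq2 n) := Matrix.of fun i j => (g • e j) i with hM
  have hMe : ∀ i j, M i j = (g • e j) i := fun i j => rfl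
  have hMv : ∀ v : V (Fq2 n), (M.mulVec v : Fin 3 → Fq2 n) = g • v := fun v => by
    have hv : v = v 0 • e 0 + v 1 • e 1 + v 2 • e 2 := by
      apply V.ext
      intro i
      simp only [V.add_apply, V.smul_apply]
      fin_cases i <;> simp [e]
    have hv2 : g • v = v 0 • g • e 0 + v 1 • g • e 1 + v 2 • g • e 2 := by
      conv_lhs => rw [hv]
      simp only [ug_add, ug_smul]
    rw [hv2]
    apply V.ext
    intro i
    change ∑ j : Fin 3, M i j * v j = _
    rw [Fin.sum_univ_three]
    simp only [V.add_apply, V.smul_apply, hMe]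
    ring
  have hU : star M * M = 1 := by
    ext i j
    have h1 : (star M * M) i j = hf (g • e j) (g • e i) := by
      rw [Matrix.mul_apply, Fin.sum_univ_three]
      simp only [Matrix.star_apply, hMe, hf]
      ring
    rw [h1, ug_hf, Matrix.one_apply]
    fin_cases i <;> fin_cases j <;> simp [hf, e]
  have hD : M.det = 1 := by
    have h1 : M = Matrix.of fun i j : Fin 3 =>
        (![g • e 0, g • e 1, g • e 2] : Fin 3 → V (Fq2 n)) j i := by
      ext i j
      rw [hMe]
      fin_cases j <;> rfl
    rw [h1, ← vol_det, ug_vol]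
    simp [vol, e]
  refine ⟨⟨⟨M, Matrix.mem_unitaryGroup_iff'.mpr hU⟩, hD⟩, ?_⟩
  apply ug_ext
  intro v
  rw [toUG_smul]
  exact hMv v

/-- `SU(3,q)` as a group of linear maps. -/
noncomputable def suEquiv : SU3 n ≃* UG (Fq2 n) :=
  { Equiv.ofBijective toUG ⟨toUG_injective, toUG_surjective⟩ with map_mul' := toUG_mul }

theorem center_su (hn : 1 ≤ n) : Subgroup.center (SU3 n) = ⊥ := by
  have := ufld_fq hn
  rw [eq_bot_iff]
  intro M hM
  have h : suEquiv M ∈ Subgroup.center (UG (Fq2 n)) := by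
    rw [Subgroup.mem_center_iff] at hM ⊢
    intro g
    obtain ⟨N, rfl⟩ := suEquiv.surjective g
    rw [← map_mul, hM N, map_mul]
  rw [center_ug, Subgroup.mem_bot] at h
  rw [Subgroup.mem_bot]
  exact suEquiv.injective (by rw [h, map_one])

/-- Since the centre of `SU(3,q)` is trivial, `PSU(3,q)` is the special unitary group itself. -/
theorem exists_psuEquiv (hn : 1 ≤ n) : Nonempty (PSU3 n ≃* UG (Fq2 n)) :=
  ⟨((QuotientGroup.quotientMulEquivOfEq (center_su hn)).trans QuotientGroup.quotientBot).trans
    suEquiv⟩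

/-- The Möbius function is transported along isomorphisms. -/
theorem IsSubgroupMobius.transfer {G G' : Type*} [Group G] [Group G'] (e : G ≃* G')
    {mu : Subgroup G → ℤ} (hmu : IsSubgroupMobius mu) :
    IsSubgroupMobius fun K : Subgroup G' => mu (K.comap e.toMonoidHom) := by
  intro H
  have h := hmu (H.comap e.toMonoidHom)
  have hsurj : Function.Surjective e.toMonoidHom := e.surjective
  have htop : H.comap e.toMonoidHom = ⊤ ↔ H = ⊤ := by
    rw [← Subgroup.comap_top e.toMonoidHom, (Subgroup.comap_injective hsurj).eq_iff]
  simp only [htop] at h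
  rw [← h]
  refine finsum_mem_eq_of_bijOn (Subgroup.comap e.toMonoidHom) ⟨?_, ?_, ?_⟩ fun _ _ => rfl
  · intro K hK
    exact Subgroup.comap_mono hK
  · exact (Subgroup.comap_injective hsurj).injOn
  · intro L hL
    refine ⟨L.map e.toMonoidHom, ?_, Subgroup.comap_map_eq_self_of_injective e.injective L⟩
    rw [Set.mem_ofPred_eq, ← Subgroup.map_comap_eq_self_of_surjective hsurj H]
    exact Subgroup.map_mono hL

end iso

theorem stmt2 (n : ℕ) (hn : 1 ≤ n) (mu : Subgroup (PSU3 n) → ℤ)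
    (hmu : IsSubgroupMobius mu) (σ : PSU3 n) (hσ : orderOf σ = 2) :
    mu (Subgroup.zpowers σ) = -((qval n : ℤ) ^ 3 * ((qval n : ℤ) + 1)) / 2 := by
  have := ufld_fq hn
  obtain ⟨e⟩ := exists_psuEquiv hn
  have h1 : e σ ≠ 1 := by
    intro h
    rw [e.injective (h.trans (map_one e).symm), orderOf_one] at hσ
    omega
  have h2 : e σ * e σ = 1 := by
    have h3 := pow_orderOf_eq_one σ
    rw [hσ, pow_two] at h3
    rw [← map_mul, h3, map_one]
  obtain ⟨p, hp0, hp, hg⟩ := inv_is_tv h1 h2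
  have key := mu_tv hp0 hp (hmu.transfer e)
  have hz : (Subgroup.zpowers (tv p)).comap e.toMonoidHom = Subgroup.zpowers σ := by
    have : Subgroup.zpowers (tv p) = (Subgroup.zpowers σ).map e.toMonoidHom := by
      rw [← hg]; exact (MonoidHom.map_zpowers e.toMonoidHom σ).symm
    rw [this, Subgroup.comap_map_eq_self_of_injective e.injective]
  simp only [hz, card_fq, card_fixed, card_norm_one] at key
  refine (Int.ediv_eq_of_eq_mul_right two_ne_zero ?_).symm
  rw [key]
  push_cast
  ring

end PSUPaper
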